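/- Let d ≥ 2 be an integer, τ₀ > 0, α > 0, and a > 0, γ > 0. Let V₁, V₂ : ℝ^d → ℝ with V₁ continuously differentiable, satisfying |V₁(x)| ≤ a(1+|x|)^{−γ}, |V₂(x)| ≤ a(1+|x|)^{−γ−1} and ∂_rV₁(x) ≤ a(1+|x|)^{−γ−1} for all x. Then there exists a constant C(τ₀) (depending only on τ₀, α, a, γ, d, and independent of ε and τ) such that for every ε ≠ 0, every τ ≥ τ₀, every f ∈ L²((1+|x|)^{1+α}) and every classical solution u of −Δu + (V₁+V₂)u ± iεu − τu = f with u, ∇u ∈ L²((1+|x|)^{−1−α}), one has ‖∇u‖²_{L²((1+|x|)^{−1−α})} + τ·‖u‖²_{L²((1+|x|)^{−1−α})} ≤ C(τ₀)‖f‖²_{L²((1+|x|)^{1+α})}. -/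

import Mathlib

/-!
The estimate is proved by a Morawetz multiplier argument for the equation conjugated by a bounded
radial exponential weight, in terms of the real and imaginary parts `(u₁, u₂)` of `u`, which satisfy
the coupled system `Sys` with `s = ± ε`.

*Reductions.* `V₂` is not assumed measurable. Replacing it pointwise by the admissible value that
minimises `|f|` (`clamp_min`) makes it measurable and only decreases the right-hand side. Lowering
the exponent `α` to `min α (1/2) (γ/2)` strengthens the claim, once `u` is known to lie in `H¹`. This
last fact is where `ε ≠ 0` enters (`Sys.h1`): the imaginary part of the equation tested against `ψ ū`
with `ψ = smw α R`, whose logarithmic gradient is `O(1/R)`, bounds `∫ ψ |u|²` uniformly in `R`,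
and the real part does the same for `∫ ψ |∇u|²`; let `R → ∞`.

*Main estimate.* Put `v = e^φ u` with `φ` bounded and `φ' = b / ((1 + r) (1 + β r))`, and multiply the
conjugated equation by `(w / r) (x · ∇v + (d - 1) / 2 v)`, where
`w(r) = (r / (r + δ))² om(r + δ)`, `δ = K / √τ`, and `om` is bounded and increasing. By
`div_flux` and `morawetz_alg`, the divergence of an explicit flux is, up to nonnegative terms, a
quadratic form in `v` and its corrected radial derivative, and `Prm.total` shows that this form
dominates a multiple of `τ (1 + r)^(-1-α) v²` minus the contribution of `f`. Inside a large ball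
the gain `(φ')²` beats the potential, whatever the size of `a`; outside of it the decay of the
potential beats it against `τ ≥ τ₀`; near the origin the auxiliary weight `h` compensates the inverse
square term, which has the wrong sign for `d = 2`. The flux is integrable because `u ∈ H¹`, and its
singularity at the origin is harmless (`integral_nonpos_of_le_div`). This yields `Prm.carleman`.

*Removing `ε`.* In `Prm.carleman` the coupling of `u₁` and `u₂` leaves the term
`|ε| (√τ ‖u‖² + ‖∇u‖² / √τ)`. If `|ε| ≤ τ`, the unweighted energy identities
`|ε| ‖u‖² ≤ ∫ |u| |f|` and `‖∇u‖² ≤ (τ + 2 a) ‖u‖² + ∫ |u| |f|` bound it by `√τ ∫ |u| |f|`, which is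
absorbed; if `|ε| ≥ τ`, the first identity alone suffices. The gradient follows from
`Sys.caccioppoli`; `real_estimate` puts these together.
-/

noncomputable section
open MeasureTheory Metric Set ENNReal

abbrev Ed (d : ℕ) := EuclideanSpace ℝ (Fin d)

/-- partial derivative of a complex valued function -/
def pd {d : ℕ} (u : Ed d → ℂ) (i : Fin d) (x : Ed d) : ℂ :=
  fderiv ℝ u x (EuclideanSpace.single i 1)

/-- Laplacian of a complex valued function -/
def lap {d : ℕ} (u : Ed d → ℂ) (x : Ed d) : ℂ :=
  ∑ i, fderiv ℝ (pd u i) x (EuclideanSpace.single i 1)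

/-- squared norm of the gradient, as an extended nonnegative real -/
def gradSq {d : ℕ} (u : Ed d → ℂ) (x : Ed d) : ℝ≥0∞ :=
  ∑ i, (‖pd u i x‖₊ : ℝ≥0∞) ^ 2

/-- |u(x)|² as an extended nonnegative real -/
def usq {d : ℕ} (u : Ed d → ℂ) (x : Ed d) : ℝ≥0∞ := (‖u x‖₊ : ℝ≥0∞) ^ 2

/-- radial derivative ∂_r V (x) = (x/|x|)·∇V(x) -/
def radialDeriv {d : ℕ} (V : Ed d → ℝ) (x : Ed d) : ℝ :=
  fderiv ℝ V x x / ‖x‖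

/-- Morrey–Campanato type quantity sup_{R>0} (1/R) ∫_{B(0,R)} g -/
def nX2 {d : ℕ} (g : Ed d → ℝ≥0∞) : ℝ≥0∞ :=
  ⨆ (R : ℝ) (_ : 0 < R), (ENNReal.ofReal R)⁻¹ * ∫⁻ x in ball (0 : Ed d) R, g x

/-- dyadic shell C_j -/
def shell (d : ℕ) (j : ℤ) : Set (Ed d) := {x | (2:ℝ)^j < ‖x‖ ∧ ‖x‖ ≤ (2:ℝ)^(j+1)}

/-- the dual norm ‖f‖_{X*} applied to g = |f|² -/
def nXstar {d : ℕ} (g : Ed d → ℝ≥0∞) : ℝ≥0∞ :=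
  ∑' j : ℤ, (ENNReal.ofReal ((2:ℝ)^(j+1)) * ∫⁻ x in shell d j, g x) ^ (1/2 : ℝ)

/-- the index j₀ with 2^{j₀} < ρ ≤ 2^{j₀+1} -/
def jIdx (ρ : ℝ) : ℤ := ⌈Real.logb 2 ρ⌉ - 1

/-- sup_{R ≥ ρ} (1/R)∫_{B(0,R)} g -/
def nX2r {d : ℕ} (ρ : ℝ) (g : Ed d → ℝ≥0∞) : ℝ≥0∞ :=
  ⨆ (R : ℝ) (_ : ρ ≤ R), (ENNReal.ofReal R)⁻¹ * ∫⁻ x in ball (0 : Ed d) R, g x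

/-- the dual norm ‖f‖_{X*_ρ} applied to g = |f|² -/
def nXstarr {d : ℕ} (ρ : ℝ) (g : Ed d → ℝ≥0∞) : ℝ≥0∞ :=
  (∑' j : {j : ℤ // jIdx ρ ≤ j},
    (ENNReal.ofReal ((2:ℝ)^((j:ℤ)+1)) * ∫⁻ x in shell d (j:ℤ), g x) ^ (1/2 : ℝ))
  + (ENNReal.ofReal ρ * ∫⁻ x in ball (0 : Ed d) ρ, g x) ^ (1/2 : ℝ)

/-- integral of g over the sphere of radius R w.r.t. (d-1)-dimensional Hausdorff measure -/
def sphInt {d : ℕ} (R : ℝ) (g : Ed d → ℝ≥0∞) : ℝ≥0∞ :=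
  ∫⁻ x in Metric.sphere (0 : Ed d) R, g x ∂(μH[(d:ℝ) - 1])

/-! ### The divergence theorem on the punctured space -/

/-- the `i`-th vector of the standard basis of `ℝ^d` -/
abbrev bv {d : ℕ} (i : Fin d) : Ed d := EuclideanSpace.single i (1 : ℝ)

/-- An annular cutoff: it vanishes near the origin and near infinity, and is one for
`2 / n ≤ |x| ≤ n`. -/
def annCut {d : ℕ} (χ : ContDiffBump (0 : Ed d)) (n : ℝ) (x : Ed d) : ℝ :=
  χ (n⁻¹ • x) - χ (n • x)

/-- A vector field `Y` that is `C¹` away from the origin and dominated by a continuous integrable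
function cannot have a divergence of positive integral. The point singularity is harmless because
`d ≥ 2`: the inner part of the gradient of the annular cutoff has size `n` on a ball of volume
`n^(-d)`. -/
theorem integral_nonpos_of_le_div {d : ℕ} (hd : 2 ≤ d) (Y : Fin d → Ed d → ℝ)
    (hY : ∀ i, ∀ x, x ≠ 0 → ContDiffAt ℝ 1 (Y i) x)
    (N : Ed d → ℝ) (hNc : Continuous N) (hNi : Integrable N)
    (hYN : ∀ i, ∀ x, x ≠ 0 → |Y i x| ≤ N x)
    (G : Ed d → ℝ) (hGi : Integrable G)
    (hG : ∀ x, x ≠ 0 → G x ≤ ∑ i, fderiv ℝ (Y i) x (bv i)) :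
    ∫ x, G x ≤ 0 := by
  have : Nonempty (Fin d) := ⟨⟨0, by omega⟩⟩
  have : Nontrivial (Ed d) := inferInstance
  let χ : ContDiffBump (0 : Ed d) := ⟨1, 2, by norm_num, by norm_num⟩
  have hχ1 : ∀ x : Ed d, ‖x‖ ≤ 1 → χ x = 1 := fun x hx =>
    χ.one_of_mem_closedBall (by simpa [χ] using hx)
  have hχ0 : ∀ x : Ed d, 2 ≤ ‖x‖ → χ x = 0 := fun x hx =>
    χ.zero_of_le_dist (by simpa [χ] using hx)
  have hχcd : ContDiff ℝ 1 χ := χ.contDiff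
  have hχd : Differentiable ℝ χ := hχcd.differentiable (by norm_num)
  obtain ⟨C, hC⟩ : ∃ C, ∀ x, ‖fderiv ℝ χ x‖ ≤ C := by
    have h1 : HasCompactSupport (fderiv ℝ χ) := χ.hasCompactSupport.fderiv ℝ
    exact h1.exists_bound_of_continuous (hχcd.continuous_fderiv (by norm_num))
  have hC0 : 0 ≤ C := (norm_nonneg _).trans (hC 0)
  have hfd0 : ∀ x : Ed d, 2 < ‖x‖ → fderiv ℝ χ x = 0 := by
    intro x hx
    have : (χ : Ed d → ℝ) =ᶠ[nhds x] fun _ => 0 := by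
      filter_upwards [(isOpen_lt continuous_const continuous_norm).mem_nhds hx] with y hy
      exact hχ0 y (le_of_lt hy)
    rw [this.fderiv_eq]; simp
  -- the derivative of the cutoff
  have hκd : ∀ (n : ℝ) (x : Ed d) (i : Fin d), fderiv ℝ (annCut χ n) x (bv i)
      = n⁻¹ * fderiv ℝ χ (n⁻¹ • x) (bv i) - n * fderiv ℝ χ (n • x) (bv i) := by
    intro n x i
    have h : ∀ c : ℝ, HasFDerivAt (fun y : Ed d => χ (c • y))
        ((fderiv ℝ χ (c • x)).comp (c • ContinuousLinearMap.id ℝ (Ed d))) x := by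
      intro c
      exact (hχd (c • x)).hasFDerivAt.comp x ((hasFDerivAt_id x).const_smul c)
    have := ((h n⁻¹).sub (h n)).fderiv
    unfold annCut
    erw [this]
    simp
  have hκcd : ∀ n : ℝ, ContDiff ℝ 1 (annCut χ n) := by
    intro n
    unfold annCut
    exact (hχcd.comp (contDiff_const_smul _)).sub (hχcd.comp (contDiff_const_smul _))
  have hκ01 : ∀ n : ℝ, 2 ≤ n → ∀ x, 0 ≤ annCut χ n x ∧ annCut χ n x ≤ 1 := by
    intro n hn x
    unfold annCut
    refine ⟨?_, by linarith [χ.le_one (x := n⁻¹ • x), χ.nonneg' (n • x)]⟩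
    by_cases h : ‖n⁻¹ • x‖ ≤ 1
    · rw [hχ1 _ h]; linarith [χ.le_one (x := n • x)]
    · rw [hχ0 (n • x)]
      · linarith [χ.nonneg' (n⁻¹ • x)]
      · rw [norm_smul, Real.norm_eq_abs, abs_of_pos (by positivity)] at h ⊢
        push Not at h
        have : n < ‖x‖ := by
          rw [inv_mul_eq_div, lt_div_iff₀ (by linarith)] at h; linarith
        nlinarith
  have hκnear : ∀ n : ℝ, 2 ≤ n → ∀ x : Ed d, ‖x‖ < n⁻¹ → annCut χ n x = 0 := by
    intro n hn x hx
    have hn0 : 0 < n := by linarith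
    unfold annCut
    rw [hχ1, hχ1, sub_self]
    · rw [norm_smul, Real.norm_eq_abs, abs_of_pos hn0]
      have := mul_lt_mul_of_pos_left hx hn0
      rw [mul_inv_cancel₀ hn0.ne'] at this; exact this.le
    · rw [norm_smul, Real.norm_eq_abs, abs_of_pos (by positivity)]
      have : n⁻¹ ≤ 1 := inv_le_one_of_one_le₀ (by linarith)
      have h2 : 0 < n⁻¹ := by positivity
      nlinarith [norm_nonneg x]
  have hκfar : ∀ n : ℝ, 2 ≤ n → ∀ x : Ed d, 2 * n ≤ ‖x‖ → annCut χ n x = 0 := by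
    intro n hn x hx
    have hn0 : 0 < n := by linarith
    unfold annCut
    rw [hχ0, hχ0, sub_self]
    · rw [norm_smul, Real.norm_eq_abs, abs_of_pos hn0]; nlinarith
    · rw [norm_smul, Real.norm_eq_abs, abs_of_pos (by positivity), inv_mul_eq_div,
        le_div_iff₀ hn0]; exact hx
  have hκcs : ∀ n : ℝ, 2 ≤ n → HasCompactSupport (annCut χ n) := by
    intro n hn
    refine HasCompactSupport.intro (isCompact_closedBall (0 : Ed d) (2 * n)) ?_
    intro x hx
    apply hκfar n hn
    simp at hx; exact hx.le
  have hκ0 : ∀ n : ℝ, 2 ≤ n → ∀ x ∈ tsupport (annCut χ n), x ≠ 0 := by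
    intro n hn x hx h0
    subst h0
    refine absurd hx (notMem_tsupport_iff_eventuallyEq.mpr ?_)
    have : ball (0 : Ed d) n⁻¹ ∈ nhds 0 := ball_mem_nhds _ (by positivity)
    filter_upwards [this] with y hy
    exact hκnear n hn y (by simpa using hy)
  -- integration by parts against the cutoff
  have hcont1 : ∀ n : ℝ, 2 ≤ n → ∀ i, Continuous (fun x => annCut χ n x * fderiv ℝ (Y i) x (bv i)) := by
    intro n hn i
    have : ∀ x ∈ tsupport (annCut χ n), ContinuousAt (fun x => fderiv ℝ (Y i) x (bv i)) x := by
      intro x hx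
      exact ((hY i x (hκ0 n hn x hx)).continuousAt_fderiv (by norm_num)).clm_apply continuousAt_const
    rw [continuous_iff_continuousAt]
    intro x
    by_cases hx : x ∈ tsupport (annCut χ n)
    · exact ((hκcd n).continuous.continuousAt).mul (this x hx)
    · have h0 : annCut χ n =ᶠ[nhds x] 0 := notMem_tsupport_iff_eventuallyEq.mp hx
      have : (fun x => annCut χ n x * fderiv ℝ (Y i) x (bv i)) =ᶠ[nhds x] fun _ => 0 := by
        filter_upwards [h0] with y hy; rw [hy]; simp
      exact continuousAt_const.congr this.symm
  have hcont2 : ∀ n : ℝ, 2 ≤ n → ∀ g : Ed d → ℝ, Continuous g → tsupport g ⊆ tsupport (annCut χ n) →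
      ∀ i, Continuous (fun x => g x * Y i x) := by
    intro n hn g hg hgs i
    rw [continuous_iff_continuousAt]
    intro x
    by_cases hx : x ∈ tsupport g
    · exact hg.continuousAt.mul (hY i x (hκ0 n hn x (hgs hx))).continuousAt
    · have h0 : g =ᶠ[nhds x] 0 := notMem_tsupport_iff_eventuallyEq.mp hx
      have : (fun x => g x * Y i x) =ᶠ[nhds x] fun _ => 0 := by
        filter_upwards [h0] with y hy; rw [hy]; simp
      exact continuousAt_const.congr this.symm
  have hfdc : ∀ n i, Continuous fun x => fderiv ℝ (annCut χ n) x (bv i) := fun n i =>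
    ((hκcd n).continuous_fderiv (by norm_num)).clm_apply continuous_const
  have hfdsup : ∀ n i, tsupport (fun x => fderiv ℝ (annCut χ n) x (bv i)) ⊆ tsupport (annCut χ n) :=
    fun n i => tsupport_fderiv_apply_subset ℝ (bv i)
  have hint1 : ∀ n : ℝ, 2 ≤ n → ∀ i, Integrable (fun x => annCut χ n x * fderiv ℝ (Y i) x (bv i)) :=
    fun n hn i => (hcont1 n hn i).integrable_of_hasCompactSupport ((hκcs n hn).mul_right)
  have hint2 : ∀ n : ℝ, 2 ≤ n → ∀ i, Integrable (fun x => fderiv ℝ (annCut χ n) x (bv i) * Y i x) :=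
    fun n hn i => (hcont2 n hn _ (hfdc n i) (hfdsup n i) i).integrable_of_hasCompactSupport
      (((hκcs n hn).mono' ((subset_tsupport _).trans (hfdsup n i))).mul_right)
  have hint3 : ∀ n : ℝ, 2 ≤ n → ∀ i, Integrable (fun x => annCut χ n x * Y i x) :=
    fun n hn i => (hcont2 n hn _ (hκcd n).continuous subset_rfl i).integrable_of_hasCompactSupport
      ((hκcs n hn).mul_right)
  have hibp : ∀ n : ℝ, 2 ≤ n → ∀ i, ∫ x, annCut χ n x * fderiv ℝ (Y i) x (bv i)
      = - ∫ x, fderiv ℝ (annCut χ n) x (bv i) * Y i x := by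
    intro n hn i
    exact integral_mul_fderiv_eq_neg_fderiv_mul_of_integrable (hint2 n hn i) (hint1 n hn i)
      (hint3 n hn i) (fun x _ => ((hκcd n).differentiable (by norm_num)) x)
      (fun x hx => (hY i x (hκ0 n hn x hx)).differentiableAt (by norm_num))
  -- bounds for the error term
  obtain ⟨M, hM⟩ : ∃ M, ∀ x ∈ closedBall (0 : Ed d) 1, ‖N x‖ ≤ M :=
    (isCompact_closedBall (0 : Ed d) 1).exists_bound_of_continuousOn hNc.continuousOn
  have hM0 : 0 ≤ M := (norm_nonneg _).trans (hM 0 (by simp))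
  have hN0 : ∀ x, 0 ≤ N x := by
    have h1 : ∀ x, x ≠ 0 → 0 ≤ N x := fun x hx => (abs_nonneg _).trans (hYN (Classical.arbitrary _) x hx)
    have hcl : IsClosed {x | 0 ≤ N x} := isClosed_le continuous_const hNc
    have hden : Dense ({(0 : Ed d)}ᶜ) := dense_compl_singleton 0
    intro x
    have : closure ({(0 : Ed d)}ᶜ) ⊆ {x | 0 ≤ N x} := hcl.closure_subset_iff.mpr (fun y hy => h1 y hy)
    exact this (hden x)
  set v1 : ℝ := (volume (ball (0 : Ed d) 1)).toReal with hv1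
  have herr : ∀ n : ℝ, 2 ≤ n → ∀ i, - ∫ x, fderiv ℝ (annCut χ n) x (bv i) * Y i x
      ≤ (C * (∫ x, N x) + 4 * C * M * v1) * n⁻¹ := by
    intro n hn i
    have hn0 : 0 < n := by linarith
    set b : Set (Ed d) := closedBall 0 (2 / n) with hb
    have hbm : MeasurableSet b := measurableSet_closedBall
    have hbfin : volume b ≠ ⊤ := measure_closedBall_lt_top.ne
    have hind : Integrable (b.indicator (fun _ => n * C * M) : Ed d → ℝ) :=
      (integrable_indicator_iff hbm).mpr (integrableOn_const hbfin)
    have hbd : ‖bv (d := d) i‖ = 1 := by simp [bv]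
    have hle : ∀ x, x ≠ 0 → |fderiv ℝ (annCut χ n) x (bv i) * Y i x|
        ≤ C * n⁻¹ * N x + b.indicator (fun _ => n * C * M) x := by
      intro x hx
      have hop : ∀ y, |fderiv ℝ χ y (bv i)| ≤ C := by
        intro y
        have := (fderiv ℝ χ y).le_opNorm (bv i)
        rw [hbd, mul_one] at this
        exact this.trans (hC y)
      rw [hκd, abs_mul]
      have hYx := hYN i x hx
      have hN := hN0 x
      by_cases hxb : x ∈ b
      · rw [indicator_of_mem hxb]
        have hx1 : N x ≤ M := by
          refine (le_abs_self _).trans (hM x ?_)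
          rw [hb] at hxb
          simp only [mem_closedBall, dist_zero_right] at hxb ⊢
          refine hxb.trans ?_
          rw [div_le_one hn0]; exact hn
        have h1 : |n⁻¹ * fderiv ℝ χ (n⁻¹ • x) (bv i) - n * fderiv ℝ χ (n • x) (bv i)|
            ≤ n⁻¹ * C + n * C := by
          refine (abs_sub _ _).trans ?_
          rw [abs_mul, abs_mul, abs_of_pos hn0, abs_of_pos (inv_pos.mpr hn0)]
          gcongr <;> exact hop _
        calc _ ≤ (n⁻¹ * C + n * C) * N x := by gcongr
          _ = C * n⁻¹ * N x + n * C * N x := by ring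
          _ ≤ _ := by gcongr
      · rw [indicator_of_notMem hxb, add_zero]
        have h0 : fderiv ℝ χ (n • x) = 0 := by
          apply hfd0
          rw [norm_smul, Real.norm_eq_abs, abs_of_pos hn0]
          rw [hb] at hxb
          simp only [mem_closedBall, dist_zero_right, not_le] at hxb
          rw [div_lt_iff₀ hn0] at hxb; linarith
        rw [h0]
        simp only [zero_apply, mul_zero, sub_zero]
        rw [abs_mul, abs_of_pos (inv_pos.mpr hn0)]
        calc n⁻¹ * |fderiv ℝ χ (n⁻¹ • x) (bv i)| * |Y i x| ≤ n⁻¹ * C * N x := by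
              gcongr; exact hop _
          _ = _ := by ring
    have hae : ∀ᵐ x ∂(volume : Measure (Ed d)), x ≠ 0 := by
      simp [ae_iff]
    have hI : Integrable (fun x => C * n⁻¹ * N x + b.indicator (fun _ => n * C * M) x) :=
      (hNi.const_mul _).add hind
    calc - ∫ x, fderiv ℝ (annCut χ n) x (bv i) * Y i x
        = ∫ x, -(fderiv ℝ (annCut χ n) x (bv i) * Y i x) := (integral_neg _).symm
      _ ≤ ∫ x, (C * n⁻¹ * N x + b.indicator (fun _ => n * C * M) x) := by
          apply integral_mono_ae (hint2 n hn i).neg hI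
          filter_upwards [hae] with x hx
          exact (neg_le_abs _).trans (hle x hx)
      _ = C * n⁻¹ * (∫ x, N x) + (volume b).toReal * (n * C * M) := by
          rw [integral_add (hNi.const_mul _) hind, integral_const_mul,
            integral_indicator hbm, setIntegral_const]
          simp [Measure.real]
      _ ≤ C * n⁻¹ * (∫ x, N x) + (4 * (n⁻¹) ^ 2 * v1) * (n * C * M) := by
          gcongr
          rw [hb, Measure.addHaar_closedBall _ _ (by positivity), ENNReal.toReal_mul,
            ENNReal.toReal_ofReal (by positivity), finrank_euclideanSpace, Fintype.card_fin]
          gcongr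
          calc (2 / n) ^ d ≤ (2 / n) ^ 2 :=
                pow_le_pow_of_le_one (by positivity) ((div_le_one hn0).mpr hn) hd
            _ = 4 * n⁻¹ ^ 2 := by field_simp; norm_num
      _ = _ := by field_simp
  have hmain : ∀ n : ℝ, 2 ≤ n → ∫ x, annCut χ n x * G x
      ≤ d * ((C * (∫ x, N x) + 4 * C * M * v1) * n⁻¹) := by
    intro n hn
    have hae : ∀ᵐ x ∂(volume : Measure (Ed d)), x ≠ 0 := by simp [ae_iff]
    calc ∫ x, annCut χ n x * G x ≤ ∫ x, ∑ i, annCut χ n x * fderiv ℝ (Y i) x (bv i) := by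
          apply integral_mono_ae
          · refine hGi.bdd_mul (c := 1) (hκcd n).continuous.aestronglyMeasurable ?_
            filter_upwards with x
            rw [Real.norm_eq_abs, abs_of_nonneg (hκ01 n hn x).1]; exact (hκ01 n hn x).2
          · exact integrable_finsetSum _ (fun i _ => hint1 n hn i)
          · filter_upwards [hae] with x hx
            rw [← Finset.mul_sum]
            exact mul_le_mul_of_nonneg_left (hG x hx) (hκ01 n hn x).1
      _ = ∑ i, - ∫ x, fderiv ℝ (annCut χ n) x (bv i) * Y i x := by
          rw [integral_finsetSum _ (fun i _ => hint1 n hn i)]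
          exact Finset.sum_congr rfl (fun i _ => hibp n hn i)
      _ ≤ ∑ i : Fin d, (C * (∫ x, N x) + 4 * C * M * v1) * n⁻¹ :=
          Finset.sum_le_sum (fun i _ => herr n hn i)
      _ = _ := by simp
  -- removal of the cutoff
  have hlim1 : Filter.Tendsto (fun n : ℕ => ∫ x, annCut χ ((n : ℝ) + 2) x * G x) Filter.atTop
      (nhds (∫ x, G x)) := by
    apply tendsto_integral_of_dominated_convergence (fun x => |G x|)
    · intro n
      exact (hκcd _).continuous.aestronglyMeasurable.mul hGi.aestronglyMeasurable
    · exact hGi.abs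
    · intro n
      filter_upwards with x
      have := hκ01 ((n : ℝ) + 2) (by linarith [n.cast_nonneg (α := ℝ)]) x
      rw [norm_mul, Real.norm_eq_abs, Real.norm_eq_abs, abs_of_nonneg this.1]
      exact mul_le_of_le_one_left (abs_nonneg _) this.2
    · have hae : ∀ᵐ x ∂(volume : Measure (Ed d)), x ≠ 0 := by simp [ae_iff]
      filter_upwards [hae] with x hx
      have hx0 : 0 < ‖x‖ := norm_pos_iff.mpr hx
      apply tendsto_const_nhds.congr'
      obtain ⟨m, hm⟩ := exists_nat_ge (‖x‖ + 2 / ‖x‖)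
      filter_upwards [Filter.eventually_ge_atTop m] with n hn
      have hnm : ‖x‖ + 2 / ‖x‖ ≤ (n : ℝ) := hm.trans (by exact_mod_cast hn)
      have h2 : 0 < 2 / ‖x‖ := by positivity
      have hn0 : (0 : ℝ) < n + 2 := by positivity
      unfold annCut
      rw [hχ1, hχ0]
      · simp
      · rw [norm_smul, Real.norm_eq_abs, abs_of_pos hn0]
        have : 2 / ‖x‖ ≤ (n : ℝ) + 2 := by linarith
        rw [div_le_iff₀ hx0] at this; exact this
      · rw [norm_smul, Real.norm_eq_abs, abs_of_pos (by positivity), inv_mul_eq_div,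
          div_le_one hn0]; linarith
  have hlim2 : Filter.Tendsto (fun n : ℕ => (d : ℝ) * ((C * (∫ x, N x) + 4 * C * M * v1)
      * ((n : ℝ) + 2)⁻¹)) Filter.atTop (nhds 0) := by
    have : Filter.Tendsto (fun n : ℕ => ((n : ℝ) + 2)⁻¹) Filter.atTop (nhds 0) :=
      tendsto_inv_atTop_zero.comp
        (Filter.tendsto_atTop_add_const_right _ _ tendsto_natCast_atTop_atTop)
    simpa using (this.const_mul (C * (∫ x, N x) + 4 * C * M * v1)).const_mul (d : ℝ)
  exact le_of_tendsto_of_tendsto' hlim1 hlim2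
    (fun n => hmain _ (by linarith [n.cast_nonneg (α := ℝ)]))

/-! ### Partial derivatives and the multiplier identity -/

/-- the `i`-th partial derivative of a real function -/
def dp {d : ℕ} (i : Fin d) (g : Ed d → ℝ) (x : Ed d) : ℝ := fderiv ℝ g x (bv i)

/-- `g` has the `i`-th partial derivative `g'` at `x`. -/
def HasDp {d : ℕ} (i : Fin d) (g : Ed d → ℝ) (g' : ℝ) (x : Ed d) : Prop :=
  HasLineDerivAt ℝ g g' x (bv i)

namespace HasDp
variable {d : ℕ} {i : Fin d} {g h : Ed d → ℝ} {g' h' : ℝ} {x : Ed d}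

theorem of_diff (hg : DifferentiableAt ℝ g x) : HasDp i g (dp i g x) x :=
  hg.hasFDerivAt.hasLineDerivAt _

theorem eq (H : HasDp i g g' x) (hg : DifferentiableAt ℝ g x) : dp i g x = g' := by
  have h1 : HasDp i g (dp i g x) x := of_diff hg
  exact HasDerivAt.unique (f := fun t : ℝ => g (x + t • bv i)) h1 H

theorem mul (H : HasDp i g g' x) (K : HasDp i h h' x) :
    HasDp i (fun y => g y * h y) (g' * h x + g x * h') x := by
  have := HasDerivAt.fun_mul (c := fun t : ℝ => g (x + t • bv i))
    (d := fun t : ℝ => h (x + t • bv i)) H K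
  simp only [zero_smul, add_zero] at this
  exact this

theorem add (H : HasDp i g g' x) (K : HasDp i h h' x) :
    HasDp i (fun y => g y + h y) (g' + h') x :=
  HasDerivAt.add (f := fun t : ℝ => g (x + t • bv i)) (g := fun t : ℝ => h (x + t • bv i)) H K

theorem const_mul (c : ℝ) (H : HasDp i g g' x) :
    HasDp i (fun y => c * g y) (c * g') x :=
  HasDerivAt.const_mul c (d := fun t : ℝ => g (x + t • bv i)) H

theorem sum {ι : Type*} {s : Finset ι} {G : ι → Ed d → ℝ} {G' : ι → ℝ}
    (H : ∀ j ∈ s, HasDp i (G j) (G' j) x) :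
    HasDp i (fun y => ∑ j ∈ s, G j y) (∑ j ∈ s, G' j) x :=
  HasDerivAt.fun_sum (A := fun j (t : ℝ) => G j (x + t • bv i)) H

theorem coord (j : Fin d) : HasDp i (fun y : Ed d => y j) (if j = i then 1 else 0) x := by
  have h1 : HasDerivAt (fun t : ℝ => x j + t * (if j = i then 1 else 0)) (if j = i then 1 else 0) 0 := by
    simpa using ((hasDerivAt_id (0 : ℝ)).mul_const (if j = i then (1 : ℝ) else 0)).const_add (x j)
  have e : (fun t : ℝ => (x + t • bv i) j) = fun t : ℝ => x j + t * (if j = i then 1 else 0) := by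
    funext t; simp [bv]
  change HasDerivAt (fun t : ℝ => (x + t • bv i) j) _ 0
  rw [e]; exact h1

theorem radial {φ : ℝ → ℝ} {φ' : ℝ} (hx : x ≠ 0) (H : HasDerivAt φ φ' ‖x‖) :
    HasDp i (fun y => φ ‖y‖) (φ' / ‖x‖ * x i) x := by
  have h1 : HasFDerivAt (fun y : Ed d => ‖y‖) _ x :=
    (((contDiffAt_norm ℝ hx).differentiableAt (n := 1) (by norm_num)).hasFDerivAt)
  have h2 := (H.comp_hasFDerivAt x h1).hasLineDerivAt (bv i)
  have h3 := (hasStrictFDerivAt_norm_sq x).hasFDerivAt.unique (h1.pow 2)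
  have h4 := congrArg (fun L => L (bv i)) h3
  have hn : ‖x‖ ≠ 0 := norm_ne_zero_iff.mpr hx
  simp [bv, EuclideanSpace.inner_single_right] at h4
  have : fderiv ℝ (fun y : Ed d => ‖y‖) x (bv i) = x i / ‖x‖ := by
    field_simp
    linarith
  have e : (φ' • fderiv ℝ (fun y : Ed d => ‖y‖) x) (bv i) = φ' / ‖x‖ * x i := by
    change φ' * fderiv ℝ (fun y : Ed d => ‖y‖) x (bv i) = _
    rw [this]; ring
  rw [← e]; exact h2

end HasDp

theorem contDiffAt_dp {d : ℕ} {v : Ed d → ℝ} {x : Ed d} (hv : ContDiffAt ℝ 2 v x) (i : Fin d) :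
    ContDiffAt ℝ 1 (dp i v) x :=
  (hv.fderiv_right (m := 1) (by norm_num)).clm_apply contDiffAt_const

theorem dp_comm {d : ℕ} {v : Ed d → ℝ} {x : Ed d} (hv : ContDiffAt ℝ 2 v x) (i j : Fin d) :
    dp i (dp j v) x = dp j (dp i v) x := by
  have h1 : IsSymmSndFDerivAt ℝ v x := hv.isSymmSndFDerivAt (by simp)
  have h2 : DifferentiableAt ℝ (fderiv ℝ v) x :=
    (hv.fderiv_right (m := 1) (by norm_num)).differentiableAt (by norm_num)
  have h3 : ∀ a b : Fin d, dp a (dp b v) x = fderiv ℝ (fderiv ℝ v) x (bv a) (bv b) := by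
    intro a b
    unfold dp
    rw [fderiv_clm_apply h2 (differentiableAt_const _)]
    simp
  rw [h3, h3]; exact h1 _ _

/-- Radial part `x · ∇v`. -/
def eul {d : ℕ} (v : Ed d → ℝ) (x : Ed d) : ℝ := ∑ j, x j * dp j v x

/-- `|∇v|²` -/
def gsq {d : ℕ} (v : Ed d → ℝ) (x : Ed d) : ℝ := ∑ j, (dp j v x) ^ 2

/-- `Δv` -/
def lapr {d : ℕ} (v : Ed d → ℝ) (x : Ed d) : ℝ := ∑ j, dp j (dp j v) x

/-- The flux attached to the multiplier `ψ (x · ∇v + (d - 1) / 2 v)` and to the density `k |v|² x`. -/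
def flux {d : ℕ} (ψ k v : Ed d → ℝ) (i : Fin d) (y : Ed d) : ℝ :=
  ψ y * (eul v y + ((d : ℝ) - 1) / 2 * v y) * dp i v y
    + y i * (-(1 / 2) * (ψ y * gsq v y) + k y * (v y * v y))

theorem contDiffAt_coord {d : ℕ} (j : Fin d) (x : Ed d) : ContDiffAt ℝ 1 (fun y : Ed d => y j) x :=
  (EuclideanSpace.proj (𝕜 := ℝ) j : Ed d →L[ℝ] ℝ).contDiff.contDiffAt

theorem contDiffAt_eul {d : ℕ} {v : Ed d → ℝ} {x : Ed d} (hv : ContDiffAt ℝ 2 v x) :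
    ContDiffAt ℝ 1 (eul v) x := by
  unfold eul
  exact ContDiffAt.sum fun j _ => (contDiffAt_coord j x).mul (contDiffAt_dp hv j)

theorem contDiffAt_gsq {d : ℕ} {v : Ed d → ℝ} {x : Ed d} (hv : ContDiffAt ℝ 2 v x) :
    ContDiffAt ℝ 1 (gsq v) x := by
  unfold gsq
  exact ContDiffAt.sum fun j _ => (contDiffAt_dp hv j).pow 2

theorem contDiffAt_flux {d : ℕ} {ψ k v : Ed d → ℝ} {x : Ed d} (hv : ContDiffAt ℝ 2 v x)
    (hψ : ContDiffAt ℝ 1 ψ x) (hk : ContDiffAt ℝ 1 k x) (i : Fin d) :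
    ContDiffAt ℝ 1 (flux ψ k v i) x := by
  have hv1 : ContDiffAt ℝ 1 v x := hv.of_le (by norm_num)
  unfold flux
  exact ((hψ.mul ((contDiffAt_eul hv).add (contDiffAt_const.mul hv1))).mul (contDiffAt_dp hv i)).add
    ((contDiffAt_coord i x).mul ((contDiffAt_const.mul (hψ.mul (contDiffAt_gsq hv))).add
      (hk.mul (hv1.mul hv1))))

/-- The multiplier identity: the second derivatives of `v` enter only through `Δv`. -/
theorem div_flux {d : ℕ} {ψ k v : Ed d → ℝ} {x : Ed d} (hv : ContDiffAt ℝ 2 v x)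
    (hψ : ContDiffAt ℝ 1 ψ x) (hk : ContDiffAt ℝ 1 k x) (ψ₁ k₁ : ℝ)
    (hψ₁ : ∀ i, dp i ψ x = ψ₁ * x i) (hk₁ : ∑ i, x i * dp i k x = k₁) :
    ∑ i, fderiv ℝ (flux ψ k v i) x (bv i) =
      1 / 2 * (ψ x - ‖x‖ ^ 2 * ψ₁) * gsq v x
      + ψ₁ * eul v x * (eul v x + ((d : ℝ) - 1) / 2 * v x)
      + ψ x * (eul v x + ((d : ℝ) - 1) / 2 * v x) * lapr v x
      + (d * k x + k₁) * v x ^ 2 + 2 * k x * v x * eul v x := by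
  have one_ne : (1 : WithTop ℕ∞) ≠ 0 := by norm_num
  have hv1 : DifferentiableAt ℝ v x := hv.differentiableAt (by norm_num)
  have hdp : ∀ j, DifferentiableAt ℝ (dp j v) x := fun j =>
    (contDiffAt_dp hv j).differentiableAt one_ne
  have key : ∀ i, fderiv ℝ (flux ψ k v i) x (bv i) =
      (ψ₁ * x i * (eul v x + ((d : ℝ) - 1) / 2 * v x)
        + ψ x * ((dp i v x + ∑ j, x j * dp i (dp j v) x) + ((d : ℝ) - 1) / 2 * dp i v x)) * dp i v x
      + ψ x * (eul v x + ((d : ℝ) - 1) / 2 * v x) * dp i (dp i v) x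
      + (1 * (-(1 / 2) * (ψ x * gsq v x) + k x * (v x * v x))
        + x i * (-(1 / 2) * (ψ₁ * x i * gsq v x + ψ x * ∑ j, 2 * dp j v x * dp i (dp j v) x)
          + (dp i k x * (v x * v x) + k x * (dp i v x * v x + v x * dp i v x)))) := by
    intro i
    have heul : HasDp i (eul v) (dp i v x + ∑ j, x j * dp i (dp j v) x) x := by
      have := HasDp.sum (i := i) (x := x) (s := Finset.univ)
        (G := fun j y => y j * dp j v y)
        (G' := fun j => (if j = i then 1 else 0) * dp j v x + x j * dp i (dp j v) x)
        (fun j _ => (HasDp.coord j).mul (HasDp.of_diff (hdp j)))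
      simp only [Finset.sum_add_distrib, ite_mul, one_mul, zero_mul, Finset.sum_ite_eq',
        Finset.mem_univ, if_true] at this
      exact this
    have hgsq : HasDp i (gsq v) (∑ j, 2 * dp j v x * dp i (dp j v) x) x := by
      have := HasDp.sum (i := i) (x := x) (s := Finset.univ)
        (G := fun j y => dp j v y * dp j v y)
        (G' := fun j => dp i (dp j v) x * dp j v x + dp j v x * dp i (dp j v) x)
        (fun j _ => (HasDp.of_diff (hdp j)).mul (HasDp.of_diff (hdp j)))
      have e1 : gsq v = fun y => ∑ j, dp j v y * dp j v y := by
        funext y; simp [gsq, sq]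
      rw [e1]
      convert this using 1
      exact Finset.sum_congr rfl fun j _ => by ring
    have hψd : HasDp i ψ (ψ₁ * x i) x := by
      rw [← hψ₁ i]; exact HasDp.of_diff (hψ.differentiableAt one_ne)
    have hkd : HasDp i k (dp i k x) x := HasDp.of_diff (hk.differentiableAt one_ne)
    have hvd : HasDp i v (dp i v x) x := HasDp.of_diff hv1
    have hc : HasDp i (fun y : Ed d => y i) 1 x := by
      simpa using HasDp.coord (x := x) (i := i) i
    have H := ((hψd.mul (heul.add (hvd.const_mul (((d : ℝ) - 1) / 2)))).mul
      (HasDp.of_diff (i := i) (hdp i))).add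
      (hc.mul (((hψd.mul hgsq).const_mul (-(1 / 2))).add (hkd.mul (hvd.mul hvd))))
    exact HasDp.eq (g := flux ψ k v i) H ((contDiffAt_flux hv hψ hk i).differentiableAt one_ne)
  have hsymm : ∑ i, x i * ∑ j, 2 * dp j v x * dp i (dp j v) x
      = 2 * ∑ i, (∑ j, x j * dp i (dp j v) x) * dp i v x := by
    simp only [Finset.mul_sum, Finset.sum_mul]
    rw [Finset.sum_comm]
    refine Finset.sum_congr rfl fun a _ => Finset.sum_congr rfl fun b _ => ?_
    rw [dp_comm hv b a]; ring
  have hnorm : ‖x‖ ^ 2 = ∑ i, x i ^ 2 := by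
    rw [EuclideanSpace.norm_sq_eq]; simp
  rw [Finset.sum_congr rfl fun i _ => key i]
  set Z := -(1 / 2) * (ψ x * gsq v x) + k x * (v x * v x) with hZ
  set m := eul v x + ((d : ℝ) - 1) / 2 * v x with hm
  set W : Fin d → ℝ := fun i => ∑ j, x j * dp i (dp j v) x with hW
  set U : Fin d → ℝ := fun i => ∑ j, 2 * dp j v x * dp i (dp j v) x with hU
  have step : ∀ i, (ψ₁ * x i * m + ψ x * ((dp i v x + W i) + ((d : ℝ) - 1) / 2 * dp i v x)) * dp i v x
      + ψ x * m * dp i (dp i v) x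
      + (1 * Z + x i * (-(1 / 2) * (ψ₁ * x i * gsq v x + ψ x * U i)
          + (dp i k x * (v x * v x) + k x * (dp i v x * v x + v x * dp i v x))))
      = ψ₁ * m * (x i * dp i v x) + ψ x * (((d : ℝ) + 1) / 2) * (dp i v x) ^ 2
        + ψ x * (W i * dp i v x) + ψ x * m * dp i (dp i v) x + Z
        + (-(1 / 2) * ψ₁ * gsq v x) * x i ^ 2 + (-(1 / 2) * ψ x) * (x i * U i)
        + (v x * v x) * (x i * dp i k x) + (2 * k x * v x) * (x i * dp i v x) := by
    intro i; ring
  have hU' : ∑ i, x i * U i = 2 * ∑ i, W i * dp i v x := hsymm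
  rw [Finset.sum_congr rfl fun i _ => step i]
  simp only [Finset.sum_add_distrib, ← Finset.mul_sum]
  rw [hU', hk₁, ← hnorm]
  have e1 : ∑ i, x i * dp i v x = eul v x := rfl
  have e2 : ∑ i, dp i v x ^ 2 = gsq v x := rfl
  have e3 : ∑ i, dp i (dp i v) x = lapr v x := rfl
  rw [e1, e2, e3]
  simp only [Finset.sum_const, Finset.card_univ, Fintype.card_fin, nsmul_eq_mul]
  rw [hZ]; ring

/-- Conjugation by a radial weight `E` with `∇E = E q x`, `∇q = q₁ x`. -/
theorem conj_weight {d : ℕ} {E q u : Ed d → ℝ} {x : Ed d} (hu : ContDiffAt ℝ 2 u x)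
    (hE : ∀ᶠ y in nhds x, DifferentiableAt ℝ E y) (hEq : ∀ᶠ y in nhds x, ∀ i, dp i E y = E y * q y * y i)
    (hq : DifferentiableAt ℝ q x) (q₁ : ℝ) (hq₁ : ∀ i, dp i q x = q₁ * x i) :
    (∀ i, dp i (fun y => E y * u y) x = E x * (dp i u x + q x * x i * u x)) ∧
    lapr (fun y => E y * u y) x = E x * (lapr u x + 2 * q x * eul u x
      + (q x ^ 2 * ‖x‖ ^ 2 + d * q x + q₁ * ‖x‖ ^ 2) * u x) := by
  have hud : ∀ᶠ y in nhds x, DifferentiableAt ℝ u y := by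
    filter_upwards [hu.eventually (by simp)] with y hy
    exact hy.differentiableAt (by norm_num)
  have h1 : ∀ᶠ y in nhds x, ∀ i, dp i (fun y => E y * u y) y
      = E y * (dp i u y + q y * (y i * u y)) := by
    filter_upwards [hE, hEq, hud] with y a b c i
    have := ((HasDp.of_diff (i := i) a).mul (HasDp.of_diff c)).eq (a.mul c)
    rw [this, b i]; ring
  refine ⟨fun i => by rw [h1.self_of_nhds i]; ring, ?_⟩
  have h2 : ∀ i, dp i (dp i (fun y => E y * u y)) x
      = E x * (dp i (dp i u) x + 2 * q x * (x i * dp i u x) + (q x ^ 2 * u x) * x i ^ 2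
        + q x * u x + (q₁ * u x) * x i ^ 2) := by
    intro i
    have e : dp i (fun y => E y * u y) =ᶠ[nhds x] fun y => E y * (dp i u y + q y * (y i * u y)) := by
      filter_upwards [h1] with y hy; exact hy i
    have : dp i (dp i (fun y => E y * u y)) x
        = dp i (fun y => E y * (dp i u y + q y * (y i * u y))) x := by
      unfold dp at e ⊢; rw [e.fderiv_eq]
    rw [this]
    have hE0 := hE.self_of_nhds
    have hu0 := hud.self_of_nhds
    have hdu : DifferentiableAt ℝ (dp i u) x := (contDiffAt_dp hu i).differentiableAt (by norm_num)
    have hc0 : DifferentiableAt ℝ (fun y : Ed d => y i) x :=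
      (contDiffAt_coord i x).differentiableAt (by norm_num)
    have hc : HasDp i (fun y : Ed d => y i) 1 x := by
      simpa using HasDp.coord (x := x) (i := i) i
    have H := (HasDp.of_diff (i := i) hE0).mul ((HasDp.of_diff (i := i) hdu).add
      ((HasDp.of_diff (i := i) hq).mul (hc.mul (HasDp.of_diff hu0))))
    rw [H.eq (hE0.mul (hdu.add (hq.mul (hc0.mul hu0)))), hEq.self_of_nhds i, hq₁ i]
    ring
  unfold lapr
  rw [Finset.sum_congr rfl fun i _ => h2 i]
  have hnorm : ‖x‖ ^ 2 = ∑ i, x i ^ 2 := by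
    rw [EuclideanSpace.norm_sq_eq]; simp
  rw [← Finset.mul_sum]
  simp only [Finset.sum_add_distrib, ← Finset.mul_sum]
  rw [← hnorm]
  have e1 : ∑ i, x i * dp i u x = eul u x := rfl
  rw [e1]
  simp only [Finset.sum_const, Finset.card_univ, Fintype.card_fin, nsmul_eq_mul]
  ring

theorem eul_sq_le {d : ℕ} (v : Ed d → ℝ) (x : Ed d) : eul v x ^ 2 ≤ ‖x‖ ^ 2 * gsq v x := by
  have hnorm : ‖x‖ ^ 2 = ∑ i, x i ^ 2 := by
    rw [EuclideanSpace.norm_sq_eq]; simp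
  rw [hnorm]
  exact Finset.sum_mul_sq_le_sq_mul_sq _ _ _

/-! ### Scalar inequalities

Here `r = |x|`, `w` and `w1` are the multiplier and its derivative, `p` and `p1` are `φ'` and `φ''`,
`s = r + δ`, `o` and `o1` are the profile `om` and its derivative at `s`, `y = (1 + r)^α`,
`z = (1 + r)^(1/2)`, `g = (1 + r)^(-γ)` and `C₁ = 6 / α`. The numbers `V`, `Vr`, `V2` are the values
of `V₁`, `∂_r V₁`, `V₂`, while `v` and `D` are the value and the corrected radial derivative of the
conjugated solution. Each inequality spends at most a sixth of the available coefficient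
`2 p w + w1 / 2` of `D²`. -/

/-- Absorption of a cross term, by the discriminant. -/
theorem absorb {c A g v D : ℝ} (hA : 0 ≤ A) (hg : 0 ≤ g) (h : c ^ 2 ≤ 2 / 3 * A * g) :
    0 ≤ c * (v * D) + A / 6 * D ^ 2 + g * v ^ 2 := by
  rcases hA.eq_or_lt with h0 | h0
  · subst h0
    have : c = 0 := by nlinarith
    subst this; nlinarith [mul_nonneg hg (sq_nonneg v)]
  · have : 0 ≤ (A / 6) * (c * (v * D) + A / 6 * D ^ 2 + g * v ^ 2) := by
      nlinarith [sq_nonneg (A / 6 * D + c / 2 * v), mul_nonneg (sub_nonneg.mpr h) (sq_nonneg v)]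
    exact nonneg_of_mul_nonneg_right this (by positivity)

section Scalar

variable {α a τ₀ τ C₁ R₁ b β K δ R r s y z g η X o o1 w w1 p p1 : ℝ}

/-- The cross term coming from the auxiliary weight `h`. -/
theorem sc_hterm {h : ℝ} (hτ : 0 < τ) (hp : 0 ≤ p) (hw : 0 ≤ w) (hw1 : 0 < w1) {l : ℝ} (hl : 0 ≤ l)
    (hlw : l ≤ w1) (hh : h = √τ / 16 * l) (v D : ℝ) :
    0 ≤ 2 * h * (v * D) + (2 * p * w + w1 / 2) / 6 * D ^ 2 + 3 / 64 * τ * w1 * v ^ 2 := by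
  apply absorb (by positivity) (by positivity)
  have h1 : (2 * h) ^ 2 = τ * l ^ 2 / 64 := by
    rw [hh, mul_pow, mul_pow, div_pow, Real.sq_sqrt hτ.le]; ring
  rw [h1]
  have h2 : l ^ 2 ≤ w1 ^ 2 := by gcongr
  have h3 : 0 ≤ p * w := by positivity
  have h4 : 0 ≤ p * w * (τ * w1) := by positivity
  nlinarith [mul_le_mul_of_nonneg_left h2 hτ.le]

/-- The cross term coming from `V₂`, absorbed either by `2 p w` or by `w1 / 2`. -/
theorem sc_cross {V2 : ℝ} (hp : 0 ≤ p) (hw : 0 ≤ w) (hw1 : 0 < w1) {g2 : ℝ} (hg : 0 ≤ g2)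
    (h : w * V2 ^ 2 ≤ 4 / 3 * p * g2 ∨ w ^ 2 * V2 ^ 2 ≤ w1 / 3 * g2) (v D : ℝ) :
    0 ≤ w * V2 * (v * D) + (2 * p * w + w1 / 2) / 6 * D ^ 2 + g2 * v ^ 2 := by
  apply absorb (by positivity) hg
  have h3 : 0 ≤ p * w * g2 := by positivity
  have h4 : 0 ≤ w1 * g2 := by positivity
  rcases h with h | h
  · nlinarith [mul_le_mul_of_nonneg_left h hw]
  · nlinarith

/-- The cross term coming from `φ''`. -/
theorem sc_pterm (hr : 0 < r) (hτ₀ : 0 < τ₀) (hτ : τ₀ ≤ τ) (hC : 0 < C₁) (hw : 0 ≤ w) (hw1 : 0 < w1)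
    (hb : 0 < b) (hβ : 0 < β) (hβ1 : β ≤ 1) (hβb : β * b ≤ 1)
    (hp : p = b / ((1 + r) * (1 + β * r))) (hp1 : p1 = -p * (1 / (1 + r) + β / (1 + β * r)))
    (hz : z ^ 2 = 1 + r) (hz0 : 0 < z) (hyz : y ≤ z)
    (hF : w ≤ C₁ * r * y * w1) (hbZ : 24 * (4608 * C₁ / τ₀) ^ 2 ≤ b) (v D : ℝ) :
    0 ≤ w * p1 * (v * D) + (2 * p * w + w1 / 2) / 6 * D ^ 2
      + (p ^ 2 * w / (4 * (r * (1 + r))) + τ * w1 / 64) * v ^ 2 := by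
  have hp0 : 0 < p := by rw [hp]; positivity
  have hτ' : 0 < τ := by linarith
  have hβr : β / (1 + β * r) ≤ 1 / (1 + r) := by
    rw [div_le_div_iff₀ (by positivity) (by positivity)]; nlinarith
  have hsq : p1 ^ 2 ≤ 4 * p ^ 2 / (1 + r) ^ 2 := by
    have h0 : 0 ≤ β / (1 + β * r) := by positivity
    have h1 : (1 / (1 + r) + β / (1 + β * r)) ^ 2 ≤ (2 * (1 / (1 + r))) ^ 2 := by
      gcongr; linarith
    rw [hp1]
    calc (-p * (1 / (1 + r) + β / (1 + β * r))) ^ 2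
        = p ^ 2 * (1 / (1 + r) + β / (1 + β * r)) ^ 2 := by ring
      _ ≤ p ^ 2 * (2 * (1 / (1 + r))) ^ 2 := by gcongr
      _ = _ := by field_simp; norm_num
  have key : 3 * w * p / (1 + r) ^ 2 ≤ p ^ 2 * w / (4 * (r * (1 + r))) + τ * w1 / 64 := by
    by_cases hc : 24 * (1 + r) ≤ b
    · have h1 : 12 ≤ p := by
        rw [hp, le_div_iff₀ (by positivity)]
        have : β * r ≤ 1 := by nlinarith
        nlinarith
      have h2 : 3 * w * p / (1 + r) ^ 2 ≤ p ^ 2 * w / (4 * (r * (1 + r))) := by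
        rw [div_le_div_iff₀ (by positivity) (by positivity)]
        have e1 : 0 ≤ w * p * (1 + r) := by positivity
        nlinarith [mul_nonneg e1 (by linarith : 0 ≤ (p - 12) * 1), mul_nonneg e1 hr.le,
          mul_nonneg (mul_nonneg e1 hr.le) (by linarith : 0 ≤ p - 12)]
      have : 0 ≤ τ * w1 / 64 := by positivity
      linarith
    · push Not at hc
      have hZ : 4608 * C₁ / τ₀ ≤ z := by
        by_contra hcon
        push Not at hcon
        have : z ^ 2 < (4608 * C₁ / τ₀) ^ 2 := by gcongr
        nlinarith
      rw [div_le_iff₀ hτ₀] at hZ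
      have hpb : p ≤ b / (1 + r) := by
        rw [hp]; gcongr
        nlinarith [mul_pos hβ hr]
      have h3 : 3 * w * p / (1 + r) ^ 2 ≤ τ * w1 / 64 := by
        rw [div_le_iff₀ (by positivity)]
        have hpb2 : p ≤ 24 := by
          refine hpb.trans ?_
          rw [div_le_iff₀ (by positivity)]; linarith
        have hy2 : C₁ * r * y * w1 ≤ C₁ * r * z * w1 := by gcongr
        calc 3 * w * p ≤ 3 * (C₁ * r * z * w1) * 24 := by
              have : 0 ≤ C₁ * r * z * w1 := by positivity
              have h5 : w ≤ C₁ * r * z * w1 := hF.trans hy2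
              gcongr
          _ = 72 * C₁ * z * r * w1 := by ring
          _ ≤ (z * τ / 64) * z * (1 + r) * w1 := by
              have h6 : 72 * C₁ ≤ z * τ / 64 := by nlinarith
              have : r ≤ 1 + r := by linarith
              gcongr
          _ = τ * w1 / 64 * z ^ 2 * (1 + r) := by ring
          _ = τ * w1 / 64 * (1 + r) ^ 2 := by rw [hz]; ring
      have : 0 ≤ p ^ 2 * w / (4 * (r * (1 + r))) := by positivity
      linarith
  apply sc_cross hp0.le hw hw1 (by positivity)
  left
  calc w * p1 ^ 2 ≤ w * (4 * p ^ 2 / (1 + r) ^ 2) := by gcongr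
    _ = 4 / 3 * p * (3 * w * p / (1 + r) ^ 2) := by field_simp
    _ ≤ _ := by gcongr

set_option maxHeartbeats 1000000 in
/-- The gain of the exponential weight: the `p²` terms are positive up to a small part of `τ w1`. -/
theorem sc_gain (hr : 0 < r) (hτ₀ : 0 < τ₀) (hτ : τ₀ ≤ τ) (hC : 0 < C₁) (hw1 : 0 < w1)
    (hb : 0 < b) (hβ : 0 < β) (hK : 0 < K) (hδ : δ = K / √τ) (hs : s = r + δ) (ho : 0 ≤ o) (ho1 : 0 ≤ o1)
    (hw : w = (r / s) ^ 2 * o) (hw1e : w1 = (r / s) ^ 2 * o1 + 2 * r * δ * o / s ^ 3)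
    (hp : p = b / ((1 + r) * (1 + β * r))) (hp1 : p1 = -p * (1 / (1 + r) + β / (1 + β * r)))
    (hz : z ^ 2 = 1 + r) (hz0 : 0 < z) (hyz : y ≤ z)
    (hF : w ≤ C₁ * r * y * w1) (hβs : 128 * C₁ * b ^ 2 * β ≤ τ₀) (hKs : 128 * C₁ * b ^ 2 ≤ K * √τ₀) :
    p ^ 2 * w / (r * (1 + r)) - τ * w1 / 64 ≤ p ^ 2 * w1 / 2 + w * p * p1 := by
  have hτ' : 0 < τ := by linarith
  have hsq : 0 < √τ := Real.sqrt_pos.mpr hτ'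
  have hδ0 : 0 < δ := by rw [hδ]; positivity
  have hs0 : 0 < s := by linarith
  have hp0 : 0 < p := by rw [hp]; positivity
  have hw0 : 0 ≤ w := by rw [hw]; positivity
  have e1 : w * (1 / r - 1 / s) ≤ w1 / 2 := by
    have : w * (1 / r - 1 / s) = r * δ * o / s ^ 3 := by
      rw [hw, show δ = s - r by linarith]; field_simp
    rw [this, hw1e]
    have : 0 ≤ (r / s) ^ 2 * o1 := by positivity
    have e : r * δ * o / s ^ 3 = (2 * r * δ * o / s ^ 3) / 2 := by ring
    linarith
  have e2 : 1 / s ≤ 1 / δ := by gcongr; linarith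
  have e3 : β / (1 + β * r) ≤ β := div_le_self hβ.le (by nlinarith [mul_pos hβ hr])
  have e4 : 1 / r - 1 / (1 + r) = 1 / (r * (1 + r)) := by field_simp; ring
  have e5 : p ^ 2 * w1 / 2 + w * p * p1 ≥ p ^ 2 * w * (1 / (r * (1 + r))) - p ^ 2 * w * (1 / δ + β) := by
    rw [hp1, ← e4]
    have h1 := mul_le_mul_of_nonneg_left e1 (sq_nonneg p)
    have h2 : 0 ≤ p ^ 2 * w := by positivity
    nlinarith [mul_le_mul_of_nonneg_left e2 h2, mul_le_mul_of_nonneg_left e3 h2]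
  have hpb : p ≤ b / (1 + r) := by
    rw [hp]; gcongr
    nlinarith [mul_pos hβ hr]
  have hz1 : z ≤ z ^ 2 := by
    have h1 : 1 ≤ z := by
      rw [← one_le_sq_iff₀ hz0.le, hz]; linarith
    exact le_self_pow₀ h1 (by norm_num)
  have e6 : p ^ 2 * w ≤ C₁ * b ^ 2 * w1 := by
    have hy2 : C₁ * r * y * w1 ≤ C₁ * (1 + r) * (1 + r) * w1 := by
      have : y ≤ 1 + r := by rw [← hz]; linarith
      have : C₁ * r * y * w1 ≤ C₁ * r * (1 + r) * w1 := by gcongr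
      have : C₁ * r * (1 + r) * w1 ≤ C₁ * (1 + r) * (1 + r) * w1 := by gcongr; linarith
      linarith
    calc p ^ 2 * w ≤ (b / (1 + r)) ^ 2 * (C₁ * (1 + r) * (1 + r) * w1) := by
          gcongr; exact hF.trans hy2
      _ = _ := by field_simp
  have e7 : C₁ * b ^ 2 * (1 / δ + β) ≤ τ / 64 := by
    have h1 : C₁ * b ^ 2 * (1 / δ) ≤ τ / 128 := by
      rw [hδ]
      have hm : √τ₀ ≤ √τ := Real.sqrt_le_sqrt hτ
      have : C₁ * b ^ 2 * (1 / (K / √τ)) = C₁ * b ^ 2 * √τ / K := by field_simp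
      rw [this, div_le_iff₀ hK]
      have h2 : √τ * √τ = τ := Real.mul_self_sqrt hτ'.le
      have h3 : 128 * C₁ * b ^ 2 ≤ K * √τ := hKs.trans (by gcongr)
      have h4 := mul_le_mul_of_nonneg_right h3 hsq.le
      rw [mul_assoc K, h2] at h4
      linarith
    have h2 : C₁ * b ^ 2 * β ≤ τ / 128 := by linarith
    linarith
  have e8 : p ^ 2 * w * (1 / δ + β) ≤ τ * w1 / 64 := by
    calc p ^ 2 * w * (1 / δ + β) ≤ C₁ * b ^ 2 * w1 * (1 / δ + β) := by gcongr
      _ = C₁ * b ^ 2 * (1 / δ + β) * w1 := by ring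
      _ ≤ τ / 64 * w1 := by gcongr
      _ = _ := by ring
  have e9 : p ^ 2 * w / (r * (1 + r)) = p ^ 2 * w * (1 / (r * (1 + r))) := by ring
  linarith

set_option maxHeartbeats 1000000 in
/-- The terms containing the potentials: for `r ≤ R₁` they are beaten by the gain `p²` of the
exponential weight, for `r ≥ R₁` they are small compared with `τ`. -/
theorem sc_pot {V Vr V2 : ℝ} (hr : 0 < r) (hτ₀ : 0 < τ₀) (hτ : τ₀ ≤ τ) (ha : 0 < a) (hC : 1 ≤ C₁)
    (hw : 0 ≤ w) (hw1 : 0 < w1) (hw2 : w1 ≤ 2 * w / r) (hR₁ : 0 < R₁)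
    (hb : 0 < b) (hβ : 0 < β) (hβR : β * R₁ ≤ 1) (hp : p = b / ((1 + r) * (1 + β * r)))
    (hg0 : 0 < g) (hg1 : g ≤ 1) (hgX : R₁ ≤ r → g ≤ η) (hyX : R₁ ≤ r → y * g ≤ η) (hy : 0 < y)
    (hη1 : 32 * (a * C₁ * η) ≤ τ₀) (hη2 : 192 * (a * C₁ * η) ^ 2 ≤ τ₀)
    (hF : w ≤ C₁ * r * y * w1)
    (hb1 : 2 * (1 + R₁) ≤ b) (hb2 : 16 * (1 + R₁) ^ 4 * (a + a ^ 2) ≤ b ^ 2)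
    (hV : |V| ≤ a * g) (hVr : Vr ≤ a * (g / (1 + r))) (hV2 : |V2| ≤ a * (g / (1 + r))) (v D : ℝ) :
    0 ≤ w * V2 * (v * D) + (2 * p * w + w1 / 2) / 6 * D ^ 2
      + (p ^ 2 * w / (2 * (r * (1 + r))) + 3 * τ * w1 / 64 - w1 * V / 2 - w * Vr / 2) * v ^ 2 := by
  have hp0 : 0 < p := by rw [hp]; positivity
  have hτ' : 0 < τ := by linarith
  have hVle : V ≤ a * g := (le_abs_self V).trans hV
  have hV2sq : V2 ^ 2 ≤ (a * (g / (1 + r))) ^ 2 := sq_le_sq' (by linarith [neg_abs_le V2]) ((le_abs_self _).trans hV2)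
  by_cases hc : R₁ ≤ r
  · have hX := hgX hc
    have hY := hyX hc
    have t1 : w1 * V / 2 ≤ τ * w1 / 64 := by
      have h1 : a * g ≤ a * C₁ * η := by
        calc a * g ≤ a * η := by gcongr
          _ ≤ a * C₁ * η := by
            have : 0 < η := hg0.trans_le hX
            nlinarith [mul_pos ha this]
      have h2 : V ≤ τ / 32 := by linarith
      nlinarith [mul_le_mul_of_nonneg_left h2 hw1.le]
    have hwg : w * (a * (g / (1 + r))) ≤ a * C₁ * η * w1 := by
      calc w * (a * (g / (1 + r))) ≤ (C₁ * r * y * w1) * (a * (g / (1 + r))) := by gcongr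
        _ = C₁ * a * w1 * (y * g) * (r / (1 + r)) := by ring
        _ ≤ C₁ * a * w1 * η * 1 := by
            have h2 : r / (1 + r) ≤ 1 := by rw [div_le_one (by positivity)]; linarith
            have : 0 < η := hg0.trans_le hX
            gcongr
        _ = _ := by ring
    have t2 : w * Vr / 2 ≤ τ * w1 / 64 := by
      have := mul_le_mul_of_nonneg_left hVr hw
      nlinarith
    have t3 : 0 ≤ w * V2 * (v * D) + (2 * p * w + w1 / 2) / 6 * D ^ 2 + (τ * w1 / 64) * v ^ 2 := by
      apply sc_cross hp0.le hw hw1 (by positivity)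
      right
      have h1 : w ^ 2 * V2 ^ 2 ≤ (a * C₁ * η * w1) ^ 2 := by
        calc w ^ 2 * V2 ^ 2 ≤ w ^ 2 * (a * (g / (1 + r))) ^ 2 := by gcongr
          _ = (w * (a * (g / (1 + r)))) ^ 2 := by ring
          _ ≤ _ := by gcongr
      have h2 : 0 < w1 ^ 2 := by positivity
      nlinarith
    have t4 : 0 ≤ p ^ 2 * w / (2 * (r * (1 + r))) := by positivity
    have t5 : 0 ≤ (p ^ 2 * w / (2 * (r * (1 + r))) + 2 * (τ * w1 / 64) - w1 * V / 2 - w * Vr / 2) * v ^ 2 := by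
      apply mul_nonneg _ (sq_nonneg v); linarith
    have t6 := add_nonneg t3 t5
    refine t6.trans_eq ?_
    ring
  · push Not at hc
    have hbr : β * r ≤ 1 := (mul_le_mul_of_nonneg_left hc.le hβ.le).trans hβR
    have hpl : b / (2 * (1 + R₁)) ≤ p := by
      rw [hp]
      apply div_le_div_of_nonneg_left hb.le (by positivity)
      have : (1 + r) * (1 + β * r) ≤ (1 + R₁) * 2 := by gcongr; linarith
      linarith
    have hp1 : 1 ≤ p := le_trans (by rw [le_div_iff₀ (by positivity)]; linarith) hpl
    have hag : a * g ≤ a := by nlinarith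
    have hagr : a * (g / (1 + r)) ≤ a := by
      have : g / (1 + r) ≤ 1 := by rw [div_le_one (by positivity)]; linarith
      nlinarith
    have t1 : w1 * V / 2 ≤ a * w / r := by
      have h1 : w1 * V ≤ w1 * a := by gcongr; linarith
      have h2 : w1 * a ≤ 2 * w / r * a := by gcongr
      have : 2 * w / r * a = 2 * (a * w / r) := by ring
      linarith
    have t2 : w * Vr / 2 ≤ a * w / 2 := by
      have := mul_le_mul_of_nonneg_left (hVr.trans hagr) hw
      linarith
    have t3 : 0 ≤ w * V2 * (v * D) + (2 * p * w + w1 / 2) / 6 * D ^ 2 + (a ^ 2 * w) * v ^ 2 := by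
      apply sc_cross hp0.le hw hw1 (by positivity)
      left
      have h1 : V2 ^ 2 ≤ a ^ 2 := hV2sq.trans (by gcongr)
      have h2 := mul_le_mul_of_nonneg_left h1 hw
      have h3 : 0 ≤ a ^ 2 * w := by positivity
      nlinarith [mul_le_mul_of_nonneg_right hp1 h3]
    have t4 : a * w / r + a * w / 2 + a ^ 2 * w ≤ p ^ 2 * w / (2 * (r * (1 + r))) := by
      have q1 : (b / (2 * (1 + R₁))) ^ 2 ≤ p ^ 2 := by gcongr
      have q2 : 4 * (1 + R₁) ^ 2 * (a + a ^ 2) ≤ p ^ 2 := by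
        refine le_trans ?_ q1
        rw [div_pow, le_div_iff₀ (by positivity)]
        nlinarith
      have q3 : a * w / r + a * w / 2 + a ^ 2 * w ≤ 2 * (1 + R₁) * (a + a ^ 2) * w / r := by
        have : a * w / r + a * w / 2 + a ^ 2 * w = (a * w + r * a * w / 2 + r * a ^ 2 * w) / r := by
          field_simp
        rw [this]
        gcongr
        have u1 : 0 ≤ a * w := by positivity
        have u2 : 0 ≤ a ^ 2 * w := by positivity
        nlinarith [mul_le_mul_of_nonneg_right hc.le u1, mul_le_mul_of_nonneg_right hc.le u2,
          mul_nonneg hR₁.le u1, mul_nonneg hR₁.le u2]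
      refine q3.trans ?_
      have : 2 * (1 + R₁) * (a + a ^ 2) * w / r
          = (4 * (1 + R₁) * (1 + r) * (a + a ^ 2)) * w / (2 * (r * (1 + r))) := by field_simp; ring
      rw [this]
      have : 4 * (1 + R₁) * (1 + r) * (a + a ^ 2) ≤ 4 * (1 + R₁) ^ 2 * (a + a ^ 2) := by
        rw [show 4 * (1 + R₁) ^ 2 = 4 * (1 + R₁) * (1 + R₁) by ring]; gcongr
      have := this.trans q2
      gcongr
    have t5 : 0 ≤ (p ^ 2 * w / (2 * (r * (1 + r))) + 3 * τ * w1 / 64 - w1 * V / 2 - w * Vr / 2 - a ^ 2 * w) * v ^ 2 := by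
      apply mul_nonneg _ (sq_nonneg v)
      have : 0 ≤ 3 * τ * w1 / 64 := by positivity
      linarith
    have t6 := add_nonneg t3 t5
    refine t6.trans_eq ?_
    ring

end Scalar

section Scalar2
variable {α τ₀ τ K δ R r s o o1 w w1 : ℝ}

theorem sc_w1_lower (hr : 0 < r) (hδ0 : 0 < δ) (hs : s = r + δ) (ho1 : 0 < o1)
    (hso : s * o1 ≤ o) (hw1e : w1 = (r / s) ^ 2 * o1 + 2 * r * δ * o / s ^ 3) :
    (r / s) * o1 ≤ w1 := by
  have hs0 : 0 < s := by linarith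
  have h1 : 2 * r * δ * (s * o1) / s ^ 3 ≤ 2 * r * δ * o / s ^ 3 := by gcongr
  have h2 : (r / s) * o1 ≤ (r / s) ^ 2 * o1 + 2 * r * δ * (s * o1) / s ^ 3 := by
    have e : (r / s) ^ 2 * o1 + 2 * r * δ * (s * o1) / s ^ 3 = (r / s) * o1 * ((r + 2 * δ) / s) := by
      field_simp
    rw [e]
    have : 1 ≤ (r + 2 * δ) / s := by rw [le_div_iff₀ hs0]; linarith
    have : 0 ≤ (r / s) * o1 := by positivity
    nlinarith
  linarith

theorem sc_Bdef (hr : 0 < r) (hδ0 : 0 < δ) (hs : s = r + δ)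
    (hw : w = (r / s) ^ 2 * o) (hw1e : w1 = (r / s) ^ 2 * o1 + 2 * r * δ * o / s ^ 3) :
    w / r - w1 / 2 = r ^ 2 * o / s ^ 3 - (r / s) ^ 2 * o1 / 2 := by
  have hs0 : 0 < s := by linarith
  rw [hw, hw1e, show δ = s - r by linarith]; field_simp; ring

/-- Gain from `h'`, absorbing the inverse square loss and the decay of the profile. -/
theorem sc_h1 (hr : 0 < r) (hτ₀ : 0 < τ₀) (hτ : τ₀ ≤ τ) (hα : 0 < α) (hα1 : α ≤ 1)
    (hK : 8 ≤ K) (hKα : 32 / α ≤ K)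
    (hδ : δ = K / √τ) (hR : R = K / √τ₀) (hs : s = r + δ) (ho1 : 0 < o1)
    (hso : s * o1 ≤ o) (hoo : o ≤ 2 / α * s * (1 + s / R) * o1)
    (hw : w = (r / s) ^ 2 * o) (hw1e : w1 = (r / s) ^ 2 * o1 + 2 * r * δ * o / s ^ 3) :
    K / 32 * (o1 / s ^ 2) - 2 * (τ * w1 / 64) ≤
      √τ / 16 * (δ / s ^ 2 * o1 - r / s * ((1 + α) / (R + s) * o1)) - (w / r - w1 / 2) / (4 * r ^ 2) := by
  have hτ' : 0 < τ := by linarith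
  have hsq0 : 0 < √τ₀ := Real.sqrt_pos.mpr hτ₀
  have hsq : 0 < √τ := Real.sqrt_pos.mpr hτ'
  have hm : √τ₀ ≤ √τ := Real.sqrt_le_sqrt hτ
  have hK0 : 0 < K := by linarith
  have hδ0 : 0 < δ := by rw [hδ]; positivity
  have hR0 : 0 < R := by rw [hR]; positivity
  have hδR : δ ≤ R := by rw [hδ, hR]; gcongr
  have hs0 : 0 < s := by linarith
  have hl := sc_w1_lower hr hδ0 hs ho1 hso hw1e
  have hl0 : 0 < (r / s) * o1 := by positivity
  have hτsq : √τ * √τ = τ := Real.mul_self_sqrt hτ'.le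
  have hRi : 1 / R ≤ √τ / K := by
    rw [hR, one_div_div]; gcongr
  have hsi : 1 / s ≤ √τ / K := by
    have : 1 / s ≤ 1 / δ := by gcongr; linarith
    rwa [hδ, one_div_div] at this
  have hsRi : 1 / (R + s) ≤ √τ / K := by
    refine le_trans ?_ hRi
    gcongr; linarith
  have e1 : √τ / 16 * (δ / s ^ 2 * o1) = K / 16 * (o1 / s ^ 2) := by
    rw [hδ]; field_simp
  have e2 : √τ / 16 * (r / s * ((1 + α) / (R + s) * o1)) ≤ τ * w1 / 64 := by
    have : √τ / 16 * (r / s * ((1 + α) / (R + s) * o1))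
        = √τ / 16 * (1 + α) * (1 / (R + s)) * (r / s * o1) := by ring
    rw [this]
    calc √τ / 16 * (1 + α) * (1 / (R + s)) * (r / s * o1)
        ≤ √τ / 16 * (1 + 1) * (√τ / K) * w1 := by gcongr
      _ = (√τ * √τ) * w1 * (1 / (8 * K)) := by ring
      _ ≤ (√τ * √τ) * w1 * (1 / 64) := by
          have : 0 < w1 := hl0.trans_le hl
          gcongr; linarith
      _ = _ := by rw [hτsq]; ring
  have e3 : (w / r - w1 / 2) / (4 * r ^ 2) ≤ K / 32 * (o1 / s ^ 2) + τ * w1 / 64 := by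
    rw [sc_Bdef hr hδ0 hs hw hw1e]
    have h0 : (r ^ 2 * o / s ^ 3 - (r / s) ^ 2 * o1 / 2) / (4 * r ^ 2) ≤ o / (4 * s ^ 3) := by
      have : (r ^ 2 * o / s ^ 3 - (r / s) ^ 2 * o1 / 2) / (4 * r ^ 2) = o / (4 * s ^ 3) - o1 / (8 * s ^ 2) := by
        field_simp; ring
      rw [this]
      have : 0 ≤ o1 / (8 * s ^ 2) := by positivity
      linarith
    have h1 : o / (4 * s ^ 3) ≤ (2 / α * s * (1 + s / R) * o1) / (4 * s ^ 3) := by gcongr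
    have h2 : (2 / α * s * (1 + s / R) * o1) / (4 * s ^ 3)
        = (1 / (2 * α)) * (1 + δ / R) * (o1 / s ^ 2) + 1 / (2 * α) * (1 / R) * (1 / s) * (r / s * o1) := by
      rw [show δ = s - r by linarith]; field_simp; ring
    have h3 : δ / R ≤ 1 := by rw [div_le_one hR0]; exact hδR
    have h4 : (1 / (2 * α)) * (1 + δ / R) * (o1 / s ^ 2) ≤ K / 32 * (o1 / s ^ 2) := by
      have : (1 / (2 * α)) * (1 + δ / R) ≤ K / 32 := by
        calc (1 / (2 * α)) * (1 + δ / R) ≤ (1 / (2 * α)) * (1 + 1) := by gcongr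
          _ = (32 / α) / 32 := by field_simp; norm_num
          _ ≤ K / 32 := by gcongr
      gcongr
    have h5 : 1 / (2 * α) * (1 / R) * (1 / s) * (r / s * o1) ≤ τ * w1 / 64 := by
      calc 1 / (2 * α) * (1 / R) * (1 / s) * (r / s * o1)
          ≤ 1 / (2 * α) * (√τ / K) * (√τ / K) * w1 := by gcongr
        _ = (32 / α) * (√τ * √τ) * w1 / (64 * K ^ 2) := by field_simp; ring
        _ ≤ K * (√τ * √τ) * w1 / (64 * K ^ 2) := by
            have : 0 < w1 := hl0.trans_le hl
            gcongr
        _ = (τ * w1 / 64) * (1 / K) := by rw [hτsq]; field_simp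
        _ ≤ (τ * w1 / 64) * 1 := by
            have : 0 < w1 := hl0.trans_le hl
            gcongr
            rw [div_le_one hK0]; linarith
        _ = _ := by ring
    linarith
  rw [mul_sub, e1]
  linarith

/-- The remaining positive terms control `τ om1(s)`: the first for `r ≥ δ`, the second for `r ≤ δ`. -/
theorem sc_final (hr : 0 < r) (hτ' : 0 < τ) (hK0 : 1 ≤ K)
    (hδ : δ = K / √τ) (hs : s = r + δ) (ho1 : 0 < o1)
    (hl : (r / s) * o1 ≤ w1) :
    1 / (128 * K) * τ * o1 ≤ 1 / 4 * τ * w1 + K / 32 * (o1 / s ^ 2) := by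
  have hsq : 0 < √τ := Real.sqrt_pos.mpr hτ'
  have hK : 0 < K := by linarith
  have hδ0 : 0 < δ := by rw [hδ]; positivity
  have hs0 : 0 < s := by linarith
  have hl0 : 0 < (r / s) * o1 := by positivity
  rcases le_total δ r with h | h
  · have h1 : 1 / 2 ≤ r / s := by rw [div_le_div_iff₀ (by norm_num) hs0]; linarith
    have h2 : 1 / 2 * o1 ≤ w1 := le_trans (by gcongr) hl
    have h3 : 1 / (128 * K) ≤ 1 / 8 := by gcongr; linarith
    have h4 : 1 / (128 * K) * τ * o1 ≤ 1 / 8 * τ * o1 := by gcongr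
    have h5 : 1 / 4 * τ * (1 / 2 * o1) ≤ 1 / 4 * τ * w1 := by gcongr
    have : 0 ≤ K / 32 * (o1 / s ^ 2) := by positivity
    linarith
  · have h1 : s ^ 2 ≤ (2 * δ) ^ 2 := by gcongr; linarith
    have h2 : (2 * δ) ^ 2 = 4 * K ^ 2 / τ := by
      rw [hδ, mul_pow, div_pow, Real.sq_sqrt hτ'.le]; ring
    rw [h2] at h1
    have h3 : K / 32 * (o1 / (4 * K ^ 2 / τ)) ≤ K / 32 * (o1 / s ^ 2) := by gcongr
    have h4 : K / 32 * (o1 / (4 * K ^ 2 / τ)) = 1 / (128 * K) * τ * o1 := by field_simp; norm_num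
    have : 0 ≤ 1 / 4 * τ * w1 := by
      have : 0 < w1 := hl0.trans_le hl
      positivity
    linarith

/-- The ratio `w / w1` grows at most like `r (1 + r)^α`; this fixes the weight in front of `f`. -/
theorem sc_wF {y Y : ℝ} (hr : 0 < r) (hα : 0 < α) (hα1 : α ≤ 1) (hδ0 : 0 < δ) (hs : s = r + δ) (ho1 : 0 < o1)
    (ho : 0 ≤ o) (hY : 1 ≤ Y) (hYy : Y ≤ 2 * y) (hoY : o ≤ 2 / α * s * Y * o1)
    (hw : w = (r / s) ^ 2 * o) (hw1e : w1 = (r / s) ^ 2 * o1 + 2 * r * δ * o / s ^ 3) :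
    w ≤ 6 / α * r * y * w1 := by
  have hs0 : 0 < s := by linarith
  have e1 : w = (r / s) ^ 3 * o + (r / 2) * (2 * r * δ * o / s ^ 3) := by
    rw [hw, show δ = s - r by linarith]; field_simp; ring
  have e2 : (r / s) ^ 3 * o ≤ (r / s) ^ 3 * (2 / α * s * Y * o1) := by gcongr
  have e3 : (r / s) ^ 3 * (2 / α * s * Y * o1) = 2 / α * r * Y * ((r / s) ^ 2 * o1) := by field_simp
  have h1 : 1 / 2 ≤ 2 / α * Y := by
    have : 2 ≤ 2 / α := by rw [le_div_iff₀ hα]; linarith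
    nlinarith
  have e4 : (r / 2) * (2 * r * δ * o / s ^ 3) ≤ 2 / α * r * Y * (2 * r * δ * o / s ^ 3) := by
    have e5 : r / 2 ≤ 2 / α * r * Y := by nlinarith
    gcongr
  have e6 : w ≤ 2 / α * r * Y * w1 := by
    rw [hw1e, mul_add, e1, ← e3]; linarith
  have hw10 : 0 ≤ w1 := by rw [hw1e]; positivity
  have hy : 0 < y := by linarith
  calc w ≤ 2 / α * r * Y * w1 := e6
    _ ≤ 2 / α * r * (3 * y) * w1 := by gcongr; linarith
    _ = _ := by ring
end Scalar2

/-! ### The multiplier and the positivity of the quadratic form -/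

/-- Admissible constants for the multiplier construction. They depend on `τ₀, α, a, γ` only:
`R₁` is the radius beyond which the potential is small, `b` and `β` govern the exponential weight
`φ' = b / ((1 + r) (1 + β r))`, and `K` the length scales `K / √τ₀`
and `K / √τ` of the multiplier. -/
structure Prm (τ₀ α a γ : ℝ) where
  (η R₁ b β K : ℝ)
  hτ₀ : 0 < τ₀
  hα : 0 < α
  hα1 : α ≤ 1 / 2
  hαγ : α ≤ γ / 2
  ha : 0 < a
  hη : 0 < η
  hη1 : 32 * (a * (6 / α) * η) ≤ τ₀
  hη2 : 192 * (a * (6 / α) * η) ^ 2 ≤ τ₀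
  hR₁ : 0 < R₁
  hfar : ∀ r, R₁ ≤ r → (1 + r) ^ (-(γ / 2)) ≤ η
  hb1 : 2 * (1 + R₁) ≤ b
  hb2 : 16 * (1 + R₁) ^ 4 * (a + a ^ 2) ≤ b ^ 2
  hb3 : 24 * (4608 * (6 / α) / τ₀) ^ 2 ≤ b
  hβ : 0 < β
  hβ2 : β ≤ 1 / 2
  hβR : β * R₁ ≤ 1
  hβb : β * b ≤ 1
  hβs : 128 * (6 / α) * b ^ 2 * β ≤ τ₀
  hK8 : 8 ≤ K
  hKα : 32 / α ≤ K
  hKτ : √τ₀ ≤ K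
  hKs : 128 * (6 / α) * b ^ 2 ≤ K * √τ₀

theorem Prm.exists {τ₀ α a γ : ℝ} (hτ₀ : 0 < τ₀) (hα : 0 < α) (hα1 : α ≤ 1 / 2) (hαγ : α ≤ γ / 2)
    (ha : 0 < a) : Nonempty (Prm τ₀ α a γ) := by
  have hsq0 : 0 < √τ₀ := Real.sqrt_pos.mpr hτ₀
  have hγ : 0 < γ := by linarith
  set A := a * (6 / α) with hA
  have hA0 : 0 < A := by positivity
  obtain ⟨η, hη, h1, h2⟩ : ∃ η, 0 < η ∧ 32 * (A * η) ≤ τ₀ ∧ 14 * (A * η) ≤ √τ₀ := by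
    refine ⟨min (τ₀ / (32 * A)) (√τ₀ / (14 * A)), by positivity, ?_, ?_⟩
    · have := min_le_left (τ₀ / (32 * A)) (√τ₀ / (14 * A))
      rw [le_div_iff₀ (by positivity)] at this; linarith
    · have := min_le_right (τ₀ / (32 * A)) (√τ₀ / (14 * A))
      rw [le_div_iff₀ (by positivity)] at this; linarith
  have h3 : 192 * (A * η) ^ 2 ≤ τ₀ := by
    have : (14 * (A * η)) ^ 2 ≤ (√τ₀) ^ 2 := by gcongr
    rw [Real.sq_sqrt hτ₀.le] at this
    nlinarith [sq_nonneg (A * η)]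
  obtain ⟨R₁, hR₁, hfar⟩ : ∃ R₁ : ℝ, 0 < R₁ ∧ ∀ r, R₁ ≤ r → (1 + r) ^ (-(γ / 2)) ≤ η := by
    have ht := (tendsto_rpow_neg_atTop (half_pos hγ)).comp
      (Filter.tendsto_atTop_add_const_left Filter.atTop (1 : ℝ) Filter.tendsto_id)
    have := (ht.eventually (gt_mem_nhds hη)).exists_forall_of_atTop
    obtain ⟨R, hR⟩ := this
    exact ⟨max R 1, by positivity, fun r hr => (hR r ((le_max_left _ _).trans hr)).le⟩
  obtain ⟨b, hb1, hb2, hb3⟩ : ∃ b : ℝ, 2 * (1 + R₁) ≤ b ∧ 16 * (1 + R₁) ^ 4 * (a + a ^ 2) ≤ b ∧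
      24 * (4608 * (6 / α) / τ₀) ^ 2 ≤ b :=
    ⟨max (2 * (1 + R₁)) (max (16 * (1 + R₁) ^ 4 * (a + a ^ 2)) (24 * (4608 * (6 / α) / τ₀) ^ 2)),
      by simp, by simp, by simp⟩
  have hb0 : 1 ≤ b := by linarith
  obtain ⟨β, hβ, q1, q2, q3, q4⟩ : ∃ β : ℝ, 0 < β ∧ β ≤ 1 / 2 ∧ β ≤ 1 / R₁ ∧ β ≤ 1 / b ∧
      β ≤ τ₀ / (128 * (6 / α) * b ^ 2) :=
    ⟨min (1 / 2) (min (1 / R₁) (min (1 / b) (τ₀ / (128 * (6 / α) * b ^ 2)))), by positivity,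
      by simp, by simp, by simp, by simp⟩
  obtain ⟨K, k1, k2, k3, k4⟩ : ∃ K : ℝ, 8 ≤ K ∧ 32 / α ≤ K ∧ √τ₀ ≤ K ∧
      128 * (6 / α) * b ^ 2 / √τ₀ ≤ K :=
    ⟨max 8 (max (32 / α) (max (√τ₀) (128 * (6 / α) * b ^ 2 / √τ₀))), by simp, by simp, by simp, by simp⟩
  rw [le_div_iff₀ (by positivity)] at q2 q3 q4
  rw [div_le_iff₀ hsq0] at k4
  exact ⟨{ η, R₁, b, β, K, hτ₀, hα, hα1, hαγ, ha, hη, hR₁, hfar, hb1, hb3, hβ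
           hη1 := h1, hη2 := h3, hb2 := by nlinarith, hβ2 := q1, hβR := q2, hβb := q3
           hβs := by linarith, hK8 := k1, hKα := k2, hKτ := k3, hKs := k4 }⟩

namespace Prm
variable {τ₀ α a γ : ℝ} (P : Prm τ₀ α a γ) (τ : ℝ)

/-- The length scale `K / √τ₀` of the profile `Prm.om`. -/
def R : ℝ := P.K / √τ₀
/-- The length scale `δ = K / √τ` at which the multiplier is regularised at the origin. -/
def del : ℝ := P.K / √τ

/-- The profile of the multiplier; it is bounded and increasing. -/
def om (s : ℝ) : ℝ := P.R / α * (1 - (1 + s / P.R) ^ (-α))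
/-- The derivative of `Prm.om`. -/
def om1 (s : ℝ) : ℝ := (1 + s / P.R) ^ (-1 - α)

/-- The radial multiplier. -/
def w (r : ℝ) : ℝ := (r / (r + P.del τ)) ^ 2 * P.om (r + P.del τ)
/-- The derivative of `Prm.w`. -/
def w1 (r : ℝ) : ℝ := (r / (r + P.del τ)) ^ 2 * P.om1 (r + P.del τ)
  + 2 * r * P.del τ * P.om (r + P.del τ) / (r + P.del τ) ^ 3

/-- The auxiliary radial weight producing the inverse square gain near the origin. -/
def h (r : ℝ) : ℝ := √τ / 16 * (r / (r + P.del τ) * P.om1 (r + P.del τ))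
/-- The derivative of `Prm.h`. -/
def h1 (r : ℝ) : ℝ := √τ / 16 * (P.del τ / (r + P.del τ) ^ 2 * P.om1 (r + P.del τ)
  - r / (r + P.del τ) * ((1 + α) / (P.R + (r + P.del τ)) * P.om1 (r + P.del τ)))

/-- The derivative of the exponent `Prm.ph` of the Carleman weight. -/
def p (r : ℝ) : ℝ := P.b / ((1 + r) * (1 + P.β * r))
/-- The derivative of `Prm.p`. -/
def p1 (r : ℝ) : ℝ := -P.p r * (1 / (1 + r) + P.β / (1 + P.β * r))
/-- The exponent of the Carleman weight; it is nonnegative and bounded. -/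
def ph (r : ℝ) : ℝ := P.b / (1 - P.β) * (Real.log (1 + r) - Real.log (1 + P.β * r))

theorem hb : 0 < P.b := by have := P.hb1; have := P.hR₁; linarith
theorem hK : 0 < P.K := by have := P.hK8; linarith
theorem hR : 0 < P.R := div_pos P.hK (Real.sqrt_pos.mpr P.hτ₀)
theorem one_le_R : 1 ≤ P.R := by
  rw [R, le_div_iff₀ (Real.sqrt_pos.mpr P.hτ₀), one_mul]; exact P.hKτ

variable {τ}
theorem hτ {τ₀ α a γ τ : ℝ} (P : Prm τ₀ α a γ) (hτ : τ₀ ≤ τ) : 0 < τ := P.hτ₀.trans_le hτ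
theorem hdel (hτ : τ₀ ≤ τ) : 0 < P.del τ := div_pos P.hK (Real.sqrt_pos.mpr (P.hτ hτ))
theorem del_le_R (hτ : τ₀ ≤ τ) : P.del τ ≤ P.R := by
  unfold del R
  have := P.hK
  have := Real.sqrt_pos.mpr P.hτ₀
  gcongr

variable {r s : ℝ}

theorem om1_pos (hs : 0 < s) : 0 < P.om1 s := by
  have := P.hR
  unfold om1; positivity

theorem om_nonneg (hs : 0 < s) : 0 ≤ P.om s := by
  have := P.hR
  have := P.hα
  unfold om
  have : (1 + s / P.R) ^ (-α) ≤ 1 :=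
    Real.rpow_le_one_of_one_le_of_nonpos (by have : 0 ≤ s / P.R := by positivity
                                             linarith) (by linarith)
  have : 0 ≤ 1 - (1 + s / P.R) ^ (-α) := by linarith
  positivity

theorem om_le (hs : 0 < s) : P.om s ≤ P.R / α := by
  have := P.hR
  have := P.hα
  unfold om
  have h1 : 0 ≤ (1 + s / P.R) ^ (-α) := by positivity
  have h2 : 0 ≤ P.R / α := by positivity
  nlinarith

theorem om1_mul_le_om (hs : 0 < s) : s * P.om1 s ≤ P.om s := by
  have hR := P.hR
  have hα := P.hα
  set t := s / P.R with ht
  have ht0 : 0 < t := by positivity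
  have hs' : s = P.R * t := by rw [ht]; field_simp
  have hX : 0 < 1 + t := by linarith
  have hB := one_add_mul_self_le_rpow_one_add (s := t) (by linarith) (p := 1 + α) (by linarith)
  have e1 : (1 + t) ^ (-α) = (1 + t) * (1 + t) ^ (-1 - α) := by
    rw [show -α = 1 + (-1 - α) by ring, Real.rpow_add hX, Real.rpow_one]
  have e2 : (1 + t) ^ (1 + α) * (1 + t) ^ (-1 - α) = 1 := by
    rw [← Real.rpow_add hX]; simp
  have hq : 0 < (1 + t) ^ (-1 - α) := by positivity
  unfold om om1
  rw [← ht, hs']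
  have : t * (1 + t) ^ (-1 - α) ≤ 1 / α * (1 - (1 + t) ^ (-α)) := by
    rw [div_mul_eq_mul_div (1 : ℝ) α, one_mul, le_div_iff₀ hα, e1]
    have := mul_le_mul_of_nonneg_right hB hq.le
    rw [e2] at this
    linarith
  calc P.R * t * (1 + t) ^ (-1 - α) = P.R * (t * (1 + t) ^ (-1 - α)) := by ring
    _ ≤ P.R * (1 / α * (1 - (1 + t) ^ (-α))) := by gcongr
    _ = _ := by ring

theorem om_le_mul (hs : 0 < s) : P.om s ≤ 2 / α * s * (1 + s / P.R) ^ α * P.om1 s := by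
  have hR := P.hR
  have hα := P.hα
  have hα1 := P.hα1
  set t := s / P.R with ht
  have ht0 : 0 < t := by positivity
  have hs' : s = P.R * t := by rw [ht]; field_simp
  have hX : 0 < 1 + t := by linarith
  have e1 : (1 + t) ^ α * (1 + t) ^ (-1 - α) = 1 / (1 + t) := by
    rw [← Real.rpow_add hX, show α + (-1 - α) = -1 by ring, Real.rpow_neg_one, one_div]
  have e2 : 1 / (1 + t) ≤ (1 + t) ^ (-α) := by
    rw [one_div, ← Real.rpow_neg_one]
    exact Real.rpow_le_rpow_of_exponent_le (by linarith) (by linarith)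
  unfold om om1
  rw [← ht, mul_assoc _ ((1 + t) ^ α), e1, hs']
  calc P.R / α * (1 - (1 + t) ^ (-α)) ≤ P.R / α * (1 - 1 / (1 + t)) := by gcongr
    _ = P.R / α * t * (1 / (1 + t)) := by field_simp; ring
    _ ≤ (P.R / α * t * (1 / (1 + t))) * 2 := by
        have : 0 ≤ P.R / α * t * (1 / (1 + t)) := by positivity
        linarith
    _ = _ := by ring

theorem om1_lower (hτ : τ₀ ≤ τ) (hr : 0 < r) :
    (2 * (1 + r)) ^ (-1 - α) ≤ P.om1 (r + P.del τ) := by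
  have hα := P.hα
  have hR := P.hR
  have hd := P.hdel hτ
  have h1 := P.one_le_R
  unfold om1
  apply Real.rpow_le_rpow_of_nonpos (by positivity) _ (by linarith)
  have : (r + P.del τ) / P.R ≤ r + 1 := by
    rw [div_le_iff₀ hR]
    have := P.del_le_R hτ
    nlinarith
  linarith

theorem hwF (hτ : τ₀ ≤ τ) (hr : 0 < r) : P.w τ r ≤ 6 / α * r * (1 + r) ^ α * P.w1 τ r := by
  have hα := P.hα
  have hR := P.hR
  have hd := P.hdel hτ
  have h1 := P.one_le_R
  have hs : 0 < r + P.del τ := by linarith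
  have hs2 : 0 < (r + P.del τ) / P.R := by positivity
  have : (r + P.del τ) / P.R ≤ r + 1 := by
    rw [div_le_iff₀ hR]
    have := P.del_le_R hτ
    nlinarith
  have hα1 := P.hα1
  refine sc_wF (Y := (1 + (r + P.del τ) / P.R) ^ α) hr hα (by linarith) hd rfl
    (P.om1_pos hs) (P.om_nonneg hs) (Real.one_le_rpow (by linarith) hα.le) ?_ (P.om_le_mul hs) rfl rfl
  calc (1 + (r + P.del τ) / P.R) ^ α ≤ (2 * (1 + r)) ^ α := by gcongr; linarith
    _ = 2 ^ α * (1 + r) ^ α := by rw [Real.mul_rpow (by norm_num) (by linarith)]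
    _ ≤ 2 ^ (1 : ℝ) * (1 + r) ^ α := by
        gcongr
        · norm_num
        · linarith
    _ = _ := by simp

theorem w_nonneg (hτ : τ₀ ≤ τ) (hr : 0 < r) : 0 ≤ P.w τ r := by
  have hd := P.hdel hτ
  have := P.om_nonneg (s := r + P.del τ) (by linarith)
  unfold w; positivity

theorem w1_lower (hτ : τ₀ ≤ τ) (hr : 0 < r) :
    r / (r + P.del τ) * P.om1 (r + P.del τ) ≤ P.w1 τ r := by
  have hd := P.hdel hτ
  have hs : 0 < r + P.del τ := by linarith
  exact sc_w1_lower hr hd rfl (P.om1_pos hs) (P.om1_mul_le_om hs) rfl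

theorem w1_pos (hτ : τ₀ ≤ τ) (hr : 0 < r) : 0 < P.w1 τ r := by
  have hd := P.hdel hτ
  have := P.om1_pos (s := r + P.del τ) (by linarith)
  exact lt_of_lt_of_le (by positivity) (P.w1_lower hτ hr)

theorem B_nonneg (hτ : τ₀ ≤ τ) (hr : 0 < r) : 0 ≤ P.w τ r / r - P.w1 τ r / 2 := by
  have hd := P.hdel hτ
  have hs : 0 < r + P.del τ := by linarith
  rw [sc_Bdef hr hd rfl (w := P.w τ r) rfl (w1 := P.w1 τ r) rfl]
  have h1 := P.om1_mul_le_om hs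
  have h0 := P.om_nonneg hs
  set s := r + P.del τ
  have e : r ^ 2 * P.om s / s ^ 3 - (r / s) ^ 2 * P.om1 s / 2
      = r ^ 2 / s ^ 3 * (P.om s - s * P.om1 s / 2) := by field_simp
  rw [e]
  have : 0 ≤ P.om s - s * P.om1 s / 2 := by linarith
  positivity

theorem p_pos (hr : 0 < r) : 0 < P.p r := by
  have := P.hb
  have := P.hβ
  unfold p; positivity

/-- Positivity of the quadratic form left over by the multiplier identity; `F` stands for the
right-hand side of the conjugated equation. -/
theorem total (hτ : τ₀ ≤ τ) (hr : 0 < r) {V Vr V2 : ℝ}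
    (hV : |V| ≤ a * (1 + r) ^ (-γ)) (hVr : Vr ≤ a * (1 + r) ^ (-γ - 1))
    (hV2 : |V2| ≤ a * (1 + r) ^ (-γ - 1)) (v D F : ℝ) :
    1 / (128 * P.K) * τ * P.om1 (r + P.del τ) * v ^ 2 - P.w τ r ^ 2 / P.w1 τ r * F ^ 2 ≤
      (2 * P.p r * P.w τ r + P.w1 τ r / 2) * D ^ 2
      + (P.w τ r * (V2 + P.p1 r) + 2 * P.h τ r) * (v * D)
      + ((τ + P.p r ^ 2) * P.w1 τ r / 2 + P.w τ r * P.p r * P.p1 r - P.w1 τ r * V / 2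
          - P.w τ r * Vr / 2 + P.h1 τ r - (P.w τ r / r - P.w1 τ r / 2) / (4 * r ^ 2)) * v ^ 2
      + P.w τ r * D * F := by
  have hd := P.hdel hτ
  have hs : 0 < r + P.del τ := by linarith
  have hα := P.hα
  have hα1 := P.hα1
  have hαγ := P.hαγ
  have hr1 : (0 : ℝ) < 1 + r := by linarith
  have hw := P.w_nonneg hτ hr
  have hw1 := P.w1_pos hτ hr
  have hp := P.p_pos hr
  have hF := P.hwF hτ hr
  have hl := P.w1_lower hτ hr
  have ho1 := P.om1_pos hs
  have hgm : (1 + r) ^ (-γ - 1) = (1 + r) ^ (-γ) / (1 + r) := by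
    rw [Real.rpow_sub hr1, Real.rpow_one]
  rw [hgm] at hVr hV2
  have hz : ((1 + r) ^ (1 / 2 : ℝ)) ^ 2 = 1 + r := by
    rw [← Real.rpow_natCast, ← Real.rpow_mul hr1.le]; norm_num
  have hyz : (1 + r) ^ α ≤ (1 + r) ^ (1 / 2 : ℝ) :=
    Real.rpow_le_rpow_of_exponent_le (by linarith) hα1
  have hz0 : 0 < (1 + r) ^ (1 / 2 : ℝ) := by positivity
  have hC : 0 < 6 / α := by positivity
  have hC1 : 1 ≤ 6 / α := by rw [le_div_iff₀ hα]; linarith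
  have T1 := sc_hterm (P.hτ hτ) hp.le hw hw1 (by positivity) hl (h := P.h τ r) rfl v D
  have T2 := sc_pterm hr P.hτ₀ hτ hC hw hw1 P.hb P.hβ (by linarith [P.hβ2]) P.hβb
    (p := P.p r) rfl (p1 := P.p1 r) rfl hz hz0 hyz hF P.hb3 v D
  have T3 := sc_gain hr P.hτ₀ hτ hC hw1 P.hb P.hβ P.hK (δ := P.del τ) rfl rfl (P.om_nonneg hs) ho1.le
    (w := P.w τ r) rfl (w1 := P.w1 τ r) rfl (p := P.p r) rfl (p1 := P.p1 r) rfl hz hz0 hyz hF P.hβs P.hKs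
  have hw2 : P.w1 τ r ≤ 2 * P.w τ r / r := by
    have := P.B_nonneg hτ hr
    have e : 2 * P.w τ r / r = 2 * (P.w τ r / r) := by ring
    linarith
  have hfar : P.R₁ ≤ r → (1 + r) ^ α * (1 + r) ^ (-γ) ≤ P.η := by
    intro h
    refine le_trans ?_ (P.hfar r h)
    rw [← Real.rpow_add hr1]
    exact Real.rpow_le_rpow_of_exponent_le (by linarith) (by linarith)
  have hfar2 : P.R₁ ≤ r → (1 + r) ^ (-γ) ≤ P.η := by
    intro h
    refine le_trans ?_ (P.hfar r h)
    exact Real.rpow_le_rpow_of_exponent_le (by linarith) (by linarith)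
  have T4 := sc_pot hr P.hτ₀ hτ P.ha hC1 hw hw1 hw2 P.hR₁ P.hb P.hβ P.hβR (p := P.p r) rfl
    (g := (1 + r) ^ (-γ)) (by positivity)
    (Real.rpow_le_one_of_one_le_of_nonpos (by linarith) (by linarith)) hfar2 hfar (by positivity)
    P.hη1 P.hη2 hF P.hb1 P.hb2 hV hVr hV2 v D
  have hoo : P.om (r + P.del τ) ≤ 2 / α * (r + P.del τ) * (1 + (r + P.del τ) / P.R) * P.om1 (r + P.del τ) := by
    refine (P.om_le_mul hs).trans ?_
    have hRp := P.hR
    have : (1 + (r + P.del τ) / P.R) ^ α ≤ (1 + (r + P.del τ) / P.R) := by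
      have h0 : 0 < (r + P.del τ) / P.R := by positivity
      calc (1 + (r + P.del τ) / P.R) ^ α ≤ (1 + (r + P.del τ) / P.R) ^ (1 : ℝ) :=
            Real.rpow_le_rpow_of_exponent_le (by linarith) (by linarith)
        _ = _ := Real.rpow_one _
    gcongr
  have T5 := sc_h1 hr P.hτ₀ hτ hα (by linarith) P.hK8 P.hKα (δ := P.del τ) (R := P.R) rfl rfl rfl ho1
    (P.om1_mul_le_om hs) hoo (w := P.w τ r) rfl (w1 := P.w1 τ r) rfl
  have T6 := sc_final hr (P.hτ hτ) (by linarith [P.hK8]) (δ := P.del τ) rfl rfl ho1 hl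
  have T7 : -(P.w τ r ^ 2 / P.w1 τ r * F ^ 2) ≤ P.w1 τ r / 4 * D ^ 2 + P.w τ r * D * F := by
    have : 0 ≤ P.w1 τ r * (D / 2 + P.w τ r / P.w1 τ r * F) ^ 2 := by positivity
    have e : P.w1 τ r * (D / 2 + P.w τ r / P.w1 τ r * F) ^ 2
      = P.w1 τ r / 4 * D ^ 2 + P.w τ r * D * F + P.w τ r ^ 2 / P.w1 τ r * F ^ 2 := by
      field_simp
      ring
    linarith
  change _ ≤ P.h1 τ r - _ at T5
  set w := P.w τ r
  set w1 := P.w1 τ r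
  set p := P.p r
  set p1 := P.p1 r
  set o1 := P.om1 (r + P.del τ)
  set h := P.h τ r
  set h1 := P.h1 τ r
  set B := (w / r - w1 / 2) / (4 * r ^ 2)
  set k := P.K / 32 * (o1 / (r + P.del τ) ^ 2)
  have e1 : p ^ 2 * w / (4 * (r * (1 + r))) = p ^ 2 * w / (r * (1 + r)) / 4 := by
    field_simp
  have e2 : p ^ 2 * w / (2 * (r * (1 + r))) = p ^ 2 * w / (r * (1 + r)) / 2 := by
    field_simp
  rw [e1] at T2
  rw [e2] at T4
  set G := p ^ 2 * w / (r * (1 + r)) with hG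
  have hG0 : 0 ≤ G := by positivity
  have hτw : 0 ≤ τ * w1 := mul_nonneg (P.hτ hτ).le hw1.le
  have hv := sq_nonneg v
  have hpw : 0 ≤ p * w * D ^ 2 := by positivity
  have Q : 1 / (128 * P.K) * τ * o1 ≤ ((τ + p ^ 2) * w1 / 2 + w * p * p1 - w1 * V / 2 - w * Vr / 2 + h1 - B)
      - (3 / 64 * τ * w1 + (G / 4 + τ * w1 / 64)
        + (G / 2 + 3 * τ * w1 / 64 - w1 * V / 2 - w * Vr / 2)) := by linarith
  have Q2 := mul_le_mul_of_nonneg_right Q hv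
  linarith [T1, T2, T4, T7, Q2]
end Prm

/-! ### Derivatives and bounds of the radial profiles -/

namespace Prm
variable {τ₀ α a γ : ℝ} (P : Prm τ₀ α a γ) {τ r s : ℝ}

theorem hasDeriv_om (hs : 0 < s) : HasDerivAt P.om (P.om1 s) s := by
  have hR := P.hR
  have hα := P.hα
  have hX : 0 < 1 + s / P.R := by positivity
  have h1 : HasDerivAt (fun s => 1 + s / P.R) (1 / P.R) s :=
    ((hasDerivAt_id s).div_const P.R).const_add 1
  have h2 := ((h1.rpow_const (p := -α) (Or.inl hX.ne')).const_sub 1).const_mul (P.R / α)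
  refine HasDerivAt.congr_deriv (f := P.om) h2 ?_
  symm
  unfold om1
  rw [show -1 - α = -α - 1 by ring]; field_simp

theorem hasDeriv_om1 (hs : 0 < s) : HasDerivAt P.om1 (-((1 + α) / (P.R + s) * P.om1 s)) s := by
  have hR := P.hR
  have hα := P.hα
  have hX : 0 < 1 + s / P.R := by positivity
  have h1 : HasDerivAt (fun s => 1 + s / P.R) (1 / P.R) s :=
    ((hasDerivAt_id s).div_const P.R).const_add 1
  have h2 := h1.rpow_const (p := -1 - α) (Or.inl hX.ne')
  refine HasDerivAt.congr_deriv (f := P.om1) h2 ?_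
  symm
  unfold om1
  rw [Real.rpow_sub_one hX.ne']
  have : P.R + s = P.R * (1 + s / P.R) := by field_simp
  rw [this]; field_simp; ring

theorem hasDeriv_quot (hτ : τ₀ ≤ τ) (hr : 0 < r) :
    HasDerivAt (fun r => r / (r + P.del τ)) (P.del τ / (r + P.del τ) ^ 2) r := by
  have hd := P.hdel hτ
  have h1 := (hasDerivAt_id r).div ((hasDerivAt_id r).add_const (P.del τ)) (by simp; linarith)
  refine HasDerivAt.congr_deriv (f := (fun r => r / (r + P.del τ))) h1 ?_
  symm
  simp

theorem hasDeriv_w (hτ : τ₀ ≤ τ) (hr : 0 < r) : HasDerivAt (P.w τ) (P.w1 τ r) r := by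
  have hd := P.hdel hτ
  have hs : 0 < r + P.del τ := by linarith
  have h1 := (P.hasDeriv_om hs).comp_add_const r (P.del τ)
  have h2 := ((P.hasDeriv_quot hτ hr).pow 2).mul h1
  refine HasDerivAt.congr_deriv (f := (P.w τ)) h2 ?_
  symm
  unfold w1
  simp
  field_simp
  ring

theorem hasDeriv_h (hτ : τ₀ ≤ τ) (hr : 0 < r) : HasDerivAt (P.h τ) (P.h1 τ r) r := by
  have hd := P.hdel hτ
  have hs : 0 < r + P.del τ := by linarith
  have h1 := (P.hasDeriv_om1 hs).comp_add_const r (P.del τ)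
  have h2 := ((P.hasDeriv_quot hτ hr).mul h1).const_mul (√τ / 16)
  refine HasDerivAt.congr_deriv (f := (P.h τ)) h2 ?_
  symm
  unfold Prm.h1
  ring

theorem hasDeriv_p (hr : 0 < r) : HasDerivAt P.p (P.p1 r) r := by
  have hβ := P.hβ
  have h1 : HasDerivAt (fun r : ℝ => (1 + r) * (1 + P.β * r)) (1 * (1 + P.β * r) + (1 + r) * (P.β * 1)) r :=
    ((hasDerivAt_id r).const_add 1).mul (((hasDerivAt_id r).const_mul P.β).const_add 1)
  have h0 : 0 < (1 + r) * (1 + P.β * r) := by positivity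
  have h2 := (hasDerivAt_const r P.b).div h1 h0.ne'
  refine HasDerivAt.congr_deriv (f := P.p) h2 ?_
  symm
  unfold p1 p
  field_simp
  ring

theorem hasDeriv_ph (hr : 0 < r) : HasDerivAt P.ph (P.p r) r := by
  have hβ := P.hβ
  have hβ2 := P.hβ2
  have h1 : HasDerivAt (fun r : ℝ => Real.log (1 + r)) (1 / (1 + r)) r :=
    ((hasDerivAt_id r).const_add 1).log (by positivity)
  have h2 : HasDerivAt (fun r : ℝ => Real.log (1 + P.β * r)) ((P.β * 1) / (1 + P.β * r)) r :=
    (((hasDerivAt_id r).const_mul P.β).const_add 1).log (by positivity)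
  have h3 := (h1.sub h2).const_mul (P.b / (1 - P.β))
  refine HasDerivAt.congr_deriv (f := P.ph) h3 ?_
  symm
  unfold p
  have : 1 - P.β ≠ 0 := by linarith
  field_simp
  ring

theorem contDiffAt_w (hτ : τ₀ ≤ τ) (hr : 0 < r) : ContDiffAt ℝ 2 (P.w τ) r := by
  have hd := P.hdel hτ
  have hR := P.hR
  have hs : 0 < r + P.del τ := by linarith
  unfold w om
  have h1 : ContDiffAt ℝ 2 (fun r => r / (r + P.del τ)) r :=
    contDiffAt_id.div (contDiffAt_id.add contDiffAt_const) hs.ne'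
  have h2 : ContDiffAt ℝ 2 (fun r => 1 + (r + P.del τ) / P.R) r :=
    contDiffAt_const.add ((contDiffAt_id.add contDiffAt_const).div_const _)
  exact (h1.pow 2).mul (contDiffAt_const.mul (contDiffAt_const.sub
    (h2.rpow_const_of_ne (by positivity))))

theorem contDiffAt_h (hτ : τ₀ ≤ τ) (hr : 0 < r) : ContDiffAt ℝ 2 (P.h τ) r := by
  have hd := P.hdel hτ
  have hR := P.hR
  have hs : 0 < r + P.del τ := by linarith
  unfold h om1
  have h1 : ContDiffAt ℝ 2 (fun r => r / (r + P.del τ)) r :=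
    contDiffAt_id.div (contDiffAt_id.add contDiffAt_const) hs.ne'
  have h2 : ContDiffAt ℝ 2 (fun r => 1 + (r + P.del τ) / P.R) r :=
    contDiffAt_const.add ((contDiffAt_id.add contDiffAt_const).div_const _)
  exact contDiffAt_const.mul (h1.mul (h2.rpow_const_of_ne (by positivity)))

theorem contDiffAt_p (hr : 0 < r) : ContDiffAt ℝ 2 P.p r := by
  have hβ := P.hβ
  unfold p
  exact contDiffAt_const.div ((contDiffAt_const.add contDiffAt_id).mul
    (contDiffAt_const.add (contDiffAt_const.mul contDiffAt_id))) (by positivity)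

theorem contDiffAt_ph (hr : 0 < r) : ContDiffAt ℝ 2 P.ph r := by
  have hβ := P.hβ
  unfold ph
  exact contDiffAt_const.mul (((contDiffAt_const.add contDiffAt_id).log (by simp only [id]; positivity)).sub
    ((contDiffAt_const.add (contDiffAt_const.mul contDiffAt_id)).log (by simp only [id]; positivity)))

/-- Upper bound for `Prm.ph`. -/
def phMax : ℝ := P.b / (1 - P.β) * Real.log (1 / P.β)

theorem ph_bounds (hr : 0 ≤ r) : 0 ≤ P.ph r ∧ P.ph r ≤ P.phMax := by
  have hβ := P.hβ
  have hβ2 := P.hβ2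
  have hb := P.hb
  have hc : 0 ≤ P.b / (1 - P.β) := div_nonneg hb.le (by linarith)
  unfold ph phMax
  constructor
  · apply mul_nonneg hc
    rw [sub_nonneg]
    apply Real.log_le_log (by positivity)
    nlinarith
  · apply mul_le_mul_of_nonneg_left _ hc
    rw [← Real.log_div (by positivity) (by positivity)]
    apply Real.log_le_log (by positivity)
    rw [div_le_div_iff₀ (by positivity) hβ]
    nlinarith

theorem p_le (hr : 0 < r) : P.p r ≤ P.b := by
  have hβ := P.hβ
  have hb := P.hb
  unfold p
  apply div_le_self hb.le
  nlinarith [mul_pos hβ hr, mul_pos hr (mul_pos hβ hr)]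

theorem om1_le_one (hs : 0 < s) : P.om1 s ≤ 1 := by
  have hR := P.hR
  have hα := P.hα
  unfold om1
  apply Real.rpow_le_one_of_one_le_of_nonpos
  · have : 0 < s / P.R := by positivity
    linarith
  · linarith

theorem w_le (hτ : τ₀ ≤ τ) (hr : 0 < r) : P.w τ r ≤ P.R / α := by
  have hd := P.hdel hτ
  have h0 := P.om_nonneg (s := r + P.del τ) (by linarith)
  have h1 := P.om_le (s := r + P.del τ) (by linarith)
  have : (r / (r + P.del τ)) ^ 2 ≤ 1 := by
    apply pow_le_one₀ (by positivity)
    rw [div_le_one (by positivity)]; linarith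
  unfold w; nlinarith

theorem w_div_sq_le (hτ : τ₀ ≤ τ) (hr : 0 < r) : P.w τ r / r ^ 2 ≤ P.R / α / P.del τ ^ 2 := by
  have hd := P.hdel hτ
  have h0 := P.om_nonneg (s := r + P.del τ) (by linarith)
  have h1 := P.om_le (s := r + P.del τ) (by linarith)
  have e : P.w τ r / r ^ 2 = P.om (r + P.del τ) / (r + P.del τ) ^ 2 := by
    unfold w; field_simp
  rw [e]
  have : P.del τ ≤ r + P.del τ := by linarith
  have := P.hR
  have := P.hα
  gcongr

theorem h_nonneg (hτ : τ₀ ≤ τ) (hr : 0 < r) : 0 ≤ P.h τ r := by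
  have hd := P.hdel hτ
  have h0 := P.om1_pos (s := r + P.del τ) (by linarith)
  unfold h; positivity

theorem h_le (hτ : τ₀ ≤ τ) (hr : 0 < r) : P.h τ r ≤ √τ := by
  have hd := P.hdel hτ
  have h0 := P.om1_pos (s := r + P.del τ) (by linarith)
  have h1 := P.om1_le_one (s := r + P.del τ) (by linarith)
  have h2 : r / (r + P.del τ) ≤ 1 := by rw [div_le_one (by positivity)]; linarith
  unfold h
  have h3 : r / (r + P.del τ) * P.om1 (r + P.del τ) ≤ 1 * 1 := by gcongr
  nlinarith [Real.sqrt_nonneg τ]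

theorem wsq_div_le (hτ : τ₀ ≤ τ) (hr : 0 < r) :
    P.w τ r ^ 2 / P.w1 τ r ≤ P.R / α * (6 / α) * (1 + r) ^ (1 + α) := by
  have h1 := P.w1_pos hτ hr
  have h0 := P.w_nonneg hτ hr
  have h2 := P.w_le hτ hr
  have h3 := P.hwF hτ hr
  have hR := P.hR
  have hα := P.hα
  rw [div_le_iff₀ h1]
  have : (1 + r) ^ (1 + α) = (1 + r) * (1 + r) ^ α := by
    rw [Real.rpow_add (by linarith), Real.rpow_one]
  rw [this]
  calc P.w τ r ^ 2 = P.w τ r * P.w τ r := by ring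
    _ ≤ P.R / α * (6 / α * r * (1 + r) ^ α * P.w1 τ r) := by gcongr
    _ ≤ P.R / α * (6 / α * (1 + r) * (1 + r) ^ α * P.w1 τ r) := by gcongr; linarith
    _ = _ := by ring

end Prm

/-! ### The divergence inequality -/

/-- The algebra of the multiplier identity: up to two nonnegative terms, the divergence of the flux
is a quadratic form in `v` and `D = (x · ∇v + (d - 1) / 2 v) / |x|`. -/
theorem morawetz_alg {r gs e v n w w1 p p1 h h1 τ V Vr V2 L c D dd k k₁ ψ₁ : ℝ} (hr : 0 < r)
    (hB : 0 ≤ w / r - w1 / 2) (he : e ^ 2 ≤ r ^ 2 * gs) (hD : D = (e + n * v) / r)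
    (hdd : dd = 2 * n + 1)
    (hL : L = c + 2 * p * D - p ^ 2 * v + p1 * v + (V + V2 - τ) * v)
    (hψ₁ : ψ₁ = (w1 * r - w) / r ^ 2 / r)
    (hk : k = -(1 / 2) * (w / r * V) + (1 / 2 * (w / r * (τ + p ^ 2)) + n / 2 * (w / r / r ^ 2) + h / r))
    (hk₁ : k₁ = -(1 / 2) * (ψ₁ * r ^ 2 * V + w / r * (r * Vr))
      + r * (1 / 2 * ((w1 * r - w) / r ^ 2 * (τ + p ^ 2) + w / r * (2 * p * p1))
        + n / 2 * (((w1 * r - w) / r ^ 2 * r ^ 2 - w / r * (2 * r)) / (r ^ 2) ^ 2)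
        + (h1 * r - h) / r ^ 2)) :
    (2 * p * w + w1 / 2) * D ^ 2 + (w * (V2 + p1) + 2 * h) * (v * D)
      + ((τ + p ^ 2) * w1 / 2 + w * p * p1 - w1 * V / 2
          - w * Vr / 2 + h1 - (w / r - w1 / 2) / (4 * r ^ 2)) * v ^ 2 + w * D * c
    ≤ 1 / 2 * (w / r - r ^ 2 * ψ₁) * gs + ψ₁ * e * (e + n * v)
      + w / r * (e + n * v) * L + (dd * k + k₁) * v ^ 2 + 2 * k * v * e := by
  have key : (1 / 2 * (w / r - r ^ 2 * ψ₁) * gs + ψ₁ * e * (e + n * v)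
      + w / r * (e + n * v) * L + (dd * k + k₁) * v ^ 2 + 2 * k * v * e)
      - ((2 * p * w + w1 / 2) * D ^ 2 + (w * (V2 + p1) + 2 * h) * (v * D)
      + ((τ + p ^ 2) * w1 / 2 + w * p * p1 - w1 * V / 2
          - w * Vr / 2 + h1 - (w / r - w1 / 2) / (4 * r ^ 2)) * v ^ 2 + w * D * c)
      = (w / r - w1 / 2) * ((r ^ 2 * gs - e ^ 2) / r ^ 2)
        + (w / r - w1 / 2) * ((n - 1 / 2) ^ 2 / r ^ 2 * v ^ 2) := by
    rw [hL, hk₁, hk, hψ₁, hD, hdd]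
    field_simp
    ring
  have h1 : 0 ≤ (r ^ 2 * gs - e ^ 2) / r ^ 2 := div_nonneg (by linarith) (by positivity)
  have h2 : 0 ≤ (n - 1 / 2) ^ 2 / r ^ 2 * v ^ 2 := by positivity
  have := mul_nonneg hB h1
  have := mul_nonneg hB h2
  linarith

namespace Prm
variable {τ₀ α a γ : ℝ} (P : Prm τ₀ α a γ) {τ : ℝ} {d : ℕ}

/-- The Carleman weight. -/
def Ex (x : Ed d) : ℝ := Real.exp (P.ph ‖x‖)

/-- The weight `ψ` of the multiplier `ψ (x · ∇v + (d - 1) / 2 v)`. -/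
def psi (τ : ℝ) (x : Ed d) : ℝ := P.w τ ‖x‖ / ‖x‖

/-- The coefficient of `|v|² x` in the flux. -/
def kk (τ : ℝ) (V₁ : Ed d → ℝ) (x : Ed d) : ℝ :=
  -(1 / 2) * (P.psi τ x * V₁ x) + (1 / 2 * (P.w τ ‖x‖ / ‖x‖ * (τ + P.p ‖x‖ ^ 2))
    + ((d : ℝ) - 1) / 2 / 2 * (P.w τ ‖x‖ / ‖x‖ / ‖x‖ ^ 2) + P.h τ ‖x‖ / ‖x‖)

variable {x : Ed d}

theorem contDiffAt_Ex (hx : x ≠ 0) : ContDiffAt ℝ 2 (P.Ex : Ed d → ℝ) x := by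
  have h := (P.contDiffAt_ph (norm_pos_iff.mpr hx)).comp x (contDiffAt_norm ℝ hx)
  exact h.exp

theorem contDiffAt_psi (hτ : τ₀ ≤ τ) (hx : x ≠ 0) : ContDiffAt ℝ 2 (P.psi τ : Ed d → ℝ) x := by
  have hn := norm_pos_iff.mpr hx
  have h := (P.contDiffAt_w hτ hn).comp x (contDiffAt_norm ℝ hx)
  exact h.div (contDiffAt_norm ℝ hx) hn.ne'

theorem contDiffAt_kk (hτ : τ₀ ≤ τ) {V₁ : Ed d → ℝ} (hV : ContDiff ℝ 1 V₁) (hx : x ≠ 0) :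
    ContDiffAt ℝ 1 (P.kk τ V₁) x := by
  have hn := norm_pos_iff.mpr hx
  have hnorm : ContDiffAt ℝ 1 (fun y : Ed d => ‖y‖) x := contDiffAt_norm ℝ hx
  have hψ : ContDiffAt ℝ 1 (P.psi τ : Ed d → ℝ) x := (P.contDiffAt_psi hτ hx).of_le (by norm_num)
  have hp : ContDiffAt ℝ 1 (fun y : Ed d => P.p ‖y‖) x :=
    ((P.contDiffAt_p hn).of_le (by norm_num)).comp x hnorm
  have hh : ContDiffAt ℝ 1 (fun y : Ed d => P.h τ ‖y‖) x :=
    ((P.contDiffAt_h hτ hn).of_le (by norm_num)).comp x hnorm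
  unfold kk
  refine (contDiffAt_const.mul (hψ.mul hV.contDiffAt)).add
    (((contDiffAt_const.mul (hψ.mul (contDiffAt_const.add (hp.pow 2)))).add
      (contDiffAt_const.mul (hψ.div (hnorm.pow 2) (by positivity)))).add (hh.div hnorm hn.ne'))

theorem dp_Ex (hx : x ≠ 0) (i : Fin d) :
    dp i (P.Ex : Ed d → ℝ) x = P.Ex x * (P.p ‖x‖ / ‖x‖) * x i := by
  have h := HasDp.radial (i := i) hx (P.hasDeriv_ph (norm_pos_iff.mpr hx)).exp
  rw [HasDp.eq (g := P.Ex) h ((P.contDiffAt_Ex hx).differentiableAt (by norm_num))]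
  unfold Ex; ring

/-- The divergence inequality for one real component of the solution. -/
theorem comp_ineq (hτ : τ₀ ≤ τ) {V₁ u : Ed d → ℝ} (hV : ContDiff ℝ 1 V₁) (hu : ContDiff ℝ 2 u)
    (hx : x ≠ 0) {V2 ce f : ℝ}
    (hV1b : |V₁ x| ≤ a * (1 + ‖x‖) ^ (-γ)) (hVr : eul V₁ x / ‖x‖ ≤ a * (1 + ‖x‖) ^ (-γ - 1))
    (hV2b : |V2| ≤ a * (1 + ‖x‖) ^ (-γ - 1))
    (hlap : lapr u x = (V₁ x + V2 - τ) * u x + ce - f) :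
    1 / (128 * P.K) * τ * P.om1 (‖x‖ + P.del τ) * (P.Ex x * u x) ^ 2
      - P.w τ ‖x‖ ^ 2 / P.w1 τ ‖x‖ * (P.Ex x * f) ^ 2
      + P.w τ ‖x‖ * P.Ex x ^ 2 * ce
        * ((eul u x + (P.p ‖x‖ * ‖x‖ + ((d : ℝ) - 1) / 2) * u x) / ‖x‖)
    ≤ ∑ i, fderiv ℝ (flux (P.psi τ) (P.kk τ V₁) (fun y => P.Ex y * u y) i) x (bv i) := by
  have hn := norm_pos_iff.mpr hx
  have hne : ∀ᶠ y in nhds x, y ≠ 0 := isOpen_ne.mem_nhds hx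
  have hqd : DifferentiableAt ℝ (fun y : Ed d => P.p ‖y‖ / ‖y‖) x := by
    have h : ContDiffAt ℝ 2 (fun y : Ed d => P.p ‖y‖) x := (P.contDiffAt_p hn).comp x (contDiffAt_norm ℝ hx)
    exact (h.div (contDiffAt_norm ℝ hx) hn.ne').differentiableAt (by norm_num)
  obtain ⟨c1, c2⟩ := conj_weight (E := P.Ex) (q := fun y => P.p ‖y‖ / ‖y‖) (u := u) (x := x)
    hu.contDiffAt
    (by filter_upwards [hne] with y hy; exact (P.contDiffAt_Ex hy).differentiableAt (by norm_num))
    (by filter_upwards [hne] with y hy i; exact P.dp_Ex hy i)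
    hqd ((P.p1 ‖x‖ * ‖x‖ - P.p ‖x‖) / ‖x‖ ^ 2 / ‖x‖)
    (fun i => by
      have h := HasDp.radial (i := i) hx ((P.hasDeriv_p hn).div (hasDerivAt_id ‖x‖) hn.ne')
      rw [HasDp.eq (g := fun y => P.p ‖y‖ / ‖y‖) h hqd]
      simp)
  have hψ : ContDiffAt ℝ 1 (P.psi τ : Ed d → ℝ) x := (P.contDiffAt_psi hτ hx).of_le (by norm_num)
  have hvC : ContDiffAt ℝ 2 (fun y => P.Ex y * u y) x := (P.contDiffAt_Ex hx).mul hu.contDiffAt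
  have hkC := P.contDiffAt_kk hτ hV hx
  have hψ₁ : ∀ i, dp i (P.psi τ : Ed d → ℝ) x
      = (P.w1 τ ‖x‖ * ‖x‖ - P.w τ ‖x‖) / ‖x‖ ^ 2 / ‖x‖ * x i := fun i => by
    have h := HasDp.radial (i := i) hx ((P.hasDeriv_w hτ hn).div (hasDerivAt_id ‖x‖) hn.ne')
    rw [HasDp.eq (g := P.psi τ) h (hψ.differentiableAt (by norm_num))]
    simp
  have hsum : ∑ i, x i * x i = ‖x‖ ^ 2 := by
    rw [EuclideanSpace.norm_sq_eq]; simp [sq]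
  have hk₁ : ∑ i, x i * dp i (P.kk τ V₁) x =
      -(1 / 2) * ((P.w1 τ ‖x‖ * ‖x‖ - P.w τ ‖x‖) / ‖x‖ ^ 2 / ‖x‖ * ‖x‖ ^ 2 * V₁ x
        + P.w τ ‖x‖ / ‖x‖ * (‖x‖ * (eul V₁ x / ‖x‖)))
      + ‖x‖ * (1 / 2 * ((P.w1 τ ‖x‖ * ‖x‖ - P.w τ ‖x‖) / ‖x‖ ^ 2 * (τ + P.p ‖x‖ ^ 2)
          + P.w τ ‖x‖ / ‖x‖ * (2 * P.p ‖x‖ * P.p1 ‖x‖))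
        + ((d : ℝ) - 1) / 2 / 2 * (((P.w1 τ ‖x‖ * ‖x‖ - P.w τ ‖x‖) / ‖x‖ ^ 2 * ‖x‖ ^ 2
          - P.w τ ‖x‖ / ‖x‖ * (2 * ‖x‖)) / (‖x‖ ^ 2) ^ 2)
        + (P.h1 τ ‖x‖ * ‖x‖ - P.h τ ‖x‖) / ‖x‖ ^ 2) := by
    have hid := hasDerivAt_id ‖x‖
    have D0 : HasDerivAt (fun r => P.w τ r / r) ((P.w1 τ ‖x‖ * ‖x‖ - P.w τ ‖x‖) / ‖x‖ ^ 2) ‖x‖ := by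
      have := (P.hasDeriv_w hτ hn).div hid hn.ne'
      exact HasDerivAt.congr_deriv (f := fun r => P.w τ r / r) this (by simp)
    have D1 : HasDerivAt (fun r => τ + P.p r ^ 2) (2 * P.p ‖x‖ * P.p1 ‖x‖) ‖x‖ := by
      have := ((P.hasDeriv_p hn).pow 2).const_add τ
      simpa using this
    have D2 : HasDerivAt (fun r => P.w τ r / r / r ^ 2)
        (((P.w1 τ ‖x‖ * ‖x‖ - P.w τ ‖x‖) / ‖x‖ ^ 2 * ‖x‖ ^ 2
          - P.w τ ‖x‖ / ‖x‖ * (2 * ‖x‖)) / (‖x‖ ^ 2) ^ 2) ‖x‖ := by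
      have := D0.div (hid.pow 2) (by simp [hn.ne'])
      exact HasDerivAt.congr_deriv (f := fun r => P.w τ r / r / r ^ 2) this (by simp)
    have D3 : HasDerivAt (fun r => P.h τ r / r) ((P.h1 τ ‖x‖ * ‖x‖ - P.h τ ‖x‖) / ‖x‖ ^ 2) ‖x‖ := by
      have := (P.hasDeriv_h hτ hn).div hid hn.ne'
      exact HasDerivAt.congr_deriv (f := fun r => P.h τ r / r) this (by simp)
    have Dr := (((D0.mul D1).const_mul (1 / 2)).add (D2.const_mul (((d : ℝ) - 1) / 2 / 2))).add D3
    have hdp : ∀ i, dp i (P.kk τ V₁) x = _ := fun i =>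
      HasDp.eq (g := P.kk τ V₁)
        ((((HasDp.of_diff (i := i) (hψ.differentiableAt (by norm_num))).mul
          (HasDp.of_diff (hV.differentiable (by norm_num) x))).const_mul (-(1 / 2))).add
          (HasDp.radial (i := i) hx Dr)) (hkC.differentiableAt (by norm_num))
    have hdp2 : ∀ i, x i * dp i (P.kk τ V₁) x = -(1 / 2) * ((P.w1 τ ‖x‖ * ‖x‖ - P.w τ ‖x‖) / ‖x‖ ^ 2 / ‖x‖ * V₁ x) * (x i * x i)
        + -(1 / 2) * P.psi τ x * (x i * dp i V₁ x)
        + (1 / 2 * ((P.w1 τ ‖x‖ * ‖x‖ - P.w τ ‖x‖) / ‖x‖ ^ 2 * (τ + P.p ‖x‖ ^ 2)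
          + P.w τ ‖x‖ / ‖x‖ * (2 * P.p ‖x‖ * P.p1 ‖x‖))
        + ((d : ℝ) - 1) / 2 / 2 * (((P.w1 τ ‖x‖ * ‖x‖ - P.w τ ‖x‖) / ‖x‖ ^ 2 * ‖x‖ ^ 2
          - P.w τ ‖x‖ / ‖x‖ * (2 * ‖x‖)) / (‖x‖ ^ 2) ^ 2)
        + (P.h1 τ ‖x‖ * ‖x‖ - P.h τ ‖x‖) / ‖x‖ ^ 2) / ‖x‖ * (x i * x i) := fun i => by
      rw [hdp i, hψ₁ i]
      ring
    rw [Finset.sum_congr rfl fun i _ => hdp2 i]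
    simp only [Finset.sum_add_distrib, ← Finset.mul_sum]
    rw [hsum]
    have e1 : ∑ i, x i * dp i V₁ x = eul V₁ x := rfl
    rw [e1]
    unfold psi
    field_simp
    ring
  have heul : eul (fun y => P.Ex y * u y) x = P.Ex x * (eul u x + P.p ‖x‖ * ‖x‖ * u x) := by
    unfold eul
    rw [Finset.sum_congr rfl fun i _ => by rw [c1 i]]
    have : ∀ i, x i * (P.Ex x * (dp i u x + P.p ‖x‖ / ‖x‖ * x i * u x))
        = P.Ex x * (x i * dp i u x) + P.Ex x * (P.p ‖x‖ / ‖x‖) * u x * (x i * x i) := fun i => by ring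
    rw [Finset.sum_congr rfl fun i _ => this i, Finset.sum_add_distrib, ← Finset.mul_sum,
      ← Finset.mul_sum, hsum]
    field_simp
  rw [div_flux hvC hψ hkC _ _ hψ₁ hk₁]
  have hT := P.total hτ hn hV1b hVr hV2b (P.Ex x * u x)
    ((eul (fun y => P.Ex y * u y) x + ((d : ℝ) - 1) / 2 * (P.Ex x * u x)) / ‖x‖) (-(P.Ex x * f))
  have hM := morawetz_alg (r := ‖x‖) (gs := gsq (fun y => P.Ex y * u y) x)
    (e := eul (fun y => P.Ex y * u y) x) (v := P.Ex x * u x) (n := ((d : ℝ) - 1) / 2)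
    (w := P.w τ ‖x‖) (w1 := P.w1 τ ‖x‖) (p := P.p ‖x‖) (p1 := P.p1 ‖x‖) (h := P.h τ ‖x‖)
    (h1 := P.h1 τ ‖x‖) (τ := τ) (V := V₁ x) (Vr := eul V₁ x / ‖x‖) (V2 := V2)
    (L := lapr (fun y => P.Ex y * u y) x) (c := P.Ex x * (ce - f)) (dd := d) (k := P.kk τ V₁ x)
    hn (P.B_nonneg hτ hn) (eul_sq_le _ x) rfl (by ring)
    (by
      rw [c2, hlap, heul]
      field_simp
      ring)
    rfl rfl rfl
  refine le_trans ?_ hM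
  have hE : P.w τ ‖x‖ * P.Ex x ^ 2 * ce
        * ((eul u x + (P.p ‖x‖ * ‖x‖ + ((d : ℝ) - 1) / 2) * u x) / ‖x‖)
      = P.w τ ‖x‖ * ((eul (fun y => P.Ex y * u y) x + ((d : ℝ) - 1) / 2 * (P.Ex x * u x)) / ‖x‖)
        * (P.Ex x * ce) := by
    rw [heul]; ring
  rw [hE]
  rw [neg_sq] at hT
  linarith [hT]

end Prm

/-! ### Bounds for the flux -/

theorem abs_flux_le {d : ℕ} {ψ k v : Ed d → ℝ} {x : Ed d} {A : ℝ} (hd : 2 ≤ d) (h0 : 0 ≤ ψ x)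
    (h1 : ψ x ≤ A) (h2 : ψ x * ‖x‖ ≤ A) (h3 : ‖x‖ * |k x| ≤ A) (i : Fin d) :
    |flux ψ k v i x| ≤ A * (2 + d) * (v x ^ 2 + gsq v x) := by
  have hgs : 0 ≤ gsq v x := Finset.sum_nonneg fun j _ => sq_nonneg _
  obtain ⟨s, hs, hs2⟩ : ∃ s : ℝ, 0 ≤ s ∧ gsq v x = s ^ 2 :=
    ⟨√(gsq v x), Real.sqrt_nonneg _, (Real.sq_sqrt hgs).symm⟩
  have he : |eul v x| ≤ ‖x‖ * s := by
    apply abs_le_of_sq_le_sq _ (by positivity)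
    rw [mul_pow, ← hs2]; exact eul_sq_le v x
  have hD : |dp i v x| ≤ s := by
    apply abs_le_of_sq_le_sq _ hs
    rw [← hs2]
    exact Finset.single_le_sum (f := fun j => dp j v x ^ 2) (fun j _ => sq_nonneg _) (Finset.mem_univ i)
  have hxi : |x i| ≤ ‖x‖ := by simpa using PiLp.norm_apply_le x i
  have hA : 0 ≤ A := h0.trans h1
  have hn : 0 ≤ ((d : ℝ) - 1) / 2 := by
    have : (2 : ℝ) ≤ d := by exact_mod_cast hd
    linarith
  unfold flux
  rw [hs2]
  have e1 : |ψ x * (eul v x + ((d : ℝ) - 1) / 2 * v x) * dp i v x|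
      ≤ ψ x * (‖x‖ * s + ((d : ℝ) - 1) / 2 * |v x|) * s := by
    rw [abs_mul, abs_mul, abs_of_nonneg h0]
    have : |eul v x + ((d : ℝ) - 1) / 2 * v x| ≤ ‖x‖ * s + ((d : ℝ) - 1) / 2 * |v x| := by
      refine (abs_add_le _ _).trans (add_le_add he ?_)
      rw [abs_mul, abs_of_nonneg hn]
    gcongr
  have e2 : |x i * (-(1 / 2) * (ψ x * s ^ 2) + k x * (v x * v x))|
      ≤ 1 / 2 * (ψ x * ‖x‖) * s ^ 2 + ‖x‖ * |k x| * v x ^ 2 := by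
    rw [abs_mul]
    have : |(-(1 / 2) * (ψ x * s ^ 2) + k x * (v x * v x))| ≤ 1 / 2 * (ψ x * s ^ 2) + |k x| * v x ^ 2 := by
      refine (abs_add_le _ _).trans (le_of_eq ?_)
      rw [abs_mul, abs_mul, abs_mul (k x), abs_of_nonneg h0, abs_of_nonneg (sq_nonneg s),
        abs_of_nonneg (mul_self_nonneg (v x)), abs_of_neg (by norm_num : (-(1 / 2) : ℝ) < 0)]
      ring
    calc _ ≤ ‖x‖ * (1 / 2 * (ψ x * s ^ 2) + |k x| * v x ^ 2) := by gcongr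
      _ = _ := by ring
  refine (abs_add_le _ _).trans ((add_le_add e1 e2).trans ?_)
  have q1 : ψ x * (‖x‖ * s + ((d : ℝ) - 1) / 2 * |v x|) * s
      = ψ x * ‖x‖ * s ^ 2 + ψ x * (((d : ℝ) - 1) / 2 * (|v x| * s)) := by ring
  have q2 : ψ x * (((d : ℝ) - 1) / 2 * (|v x| * s)) ≤ A * (((d : ℝ) - 1) / 2 * (v x ^ 2 + s ^ 2)) := by
    have : |v x| * s ≤ v x ^ 2 + s ^ 2 := by
      nlinarith [sq_abs (v x), sq_nonneg (|v x| - s), sq_nonneg s, sq_nonneg (v x)]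
    gcongr
  have q3 : ψ x * ‖x‖ * s ^ 2 ≤ A * s ^ 2 := by gcongr
  have q4 : ‖x‖ * |k x| * v x ^ 2 ≤ A * v x ^ 2 := by gcongr
  rw [q1]
  nlinarith [mul_nonneg hA (sq_nonneg s), mul_nonneg hA (sq_nonneg (v x)), mul_nonneg hn (mul_nonneg hA (sq_nonneg s)), mul_nonneg hn (mul_nonneg hA (sq_nonneg (v x)))]

namespace Prm
variable {τ₀ α a γ : ℝ} (P : Prm τ₀ α a γ) {τ : ℝ} {d : ℕ}

theorem Ex_bounds (x : Ed d) : 1 ≤ P.Ex x ∧ P.Ex x ≤ Real.exp P.phMax :=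
  have h := P.ph_bounds (norm_nonneg x)
  ⟨Real.one_le_exp h.1, Real.exp_le_exp.mpr h.2⟩

theorem dp_Ex_mul {u : Ed d → ℝ} {x : Ed d} (hx : x ≠ 0) (hu : DifferentiableAt ℝ u x) (i : Fin d) :
    dp i (fun y => P.Ex y * u y) x = P.Ex x * (dp i u x + P.p ‖x‖ / ‖x‖ * x i * u x) := by
  have hE := (P.contDiffAt_Ex hx).differentiableAt (by norm_num)
  rw [((HasDp.of_diff (i := i) hE).mul (HasDp.of_diff hu)).eq (hE.mul hu), P.dp_Ex hx]
  ring

theorem gsq_Ex_mul_le {u : Ed d → ℝ} {x : Ed d} (hx : x ≠ 0) (hu : DifferentiableAt ℝ u x) :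
    gsq (fun y => P.Ex y * u y) x ≤ Real.exp P.phMax ^ 2 * (2 * gsq u x + 2 * P.b ^ 2 * u x ^ 2) := by
  have hn := norm_pos_iff.mpr hx
  have hE := P.Ex_bounds x
  have hsum : ∑ i, x i * x i = ‖x‖ ^ 2 := by
    rw [EuclideanSpace.norm_sq_eq]; simp [sq]
  have h1 : gsq (fun y => P.Ex y * u y) x
      ≤ P.Ex x ^ 2 * (2 * gsq u x + 2 * P.p ‖x‖ ^ 2 * u x ^ 2) := by
    have : 2 * P.p ‖x‖ ^ 2 * u x ^ 2 = ∑ i, 2 * (P.p ‖x‖ / ‖x‖) ^ 2 * u x ^ 2 * (x i * x i) := by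
      rw [← Finset.mul_sum, hsum]; field_simp
    rw [this]
    unfold gsq
    rw [Finset.mul_sum, ← Finset.sum_add_distrib, Finset.mul_sum]
    refine Finset.sum_le_sum fun i _ => ?_
    rw [P.dp_Ex_mul hx hu, mul_pow]
    gcongr
    nlinarith [sq_nonneg (dp i u x - P.p ‖x‖ / ‖x‖ * x i * u x)]
  have hp := P.p_le hn
  have hp0 := (P.p_pos hn).le
  have hg : 0 ≤ gsq u x := Finset.sum_nonneg fun j _ => sq_nonneg _
  refine h1.trans ?_
  gcongr
  · linarith
  · exact hE.2

/-- A bound on the flux; the constant may depend on `τ`. -/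
theorem flux_growth (hτ : τ₀ ≤ τ) (hd : 2 ≤ d) : ∃ C : ℝ, 0 ≤ C ∧ ∀ (V₁ u : Ed d → ℝ),
    Differentiable ℝ u → ∀ x : Ed d, x ≠ 0 → |V₁ x| ≤ a → ∀ i,
      |flux (P.psi τ) (P.kk τ V₁) (fun y => P.Ex y * u y) i x| ≤ C * (u x ^ 2 + gsq u x) := by
  have hα := P.hα
  have hR := P.hR
  have ha := P.ha
  have hδ := P.hdel hτ
  have hτ0 : 0 < τ := P.hτ₀.trans_le hτ
  have hb := P.hb
  have hd1 : (2 : ℝ) ≤ d := by exact_mod_cast hd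
  have hn0 : 0 ≤ ((d : ℝ) - 1) / 2 / 2 := by linarith
  set A : ℝ := P.R / α with hA
  have hA0 : 0 < A := by positivity
  set A2 : ℝ := A + A / P.del τ ^ 2 + (1 / 2 * (A * a) + (1 / 2 * (A * (τ + P.b ^ 2))
    + ((d : ℝ) - 1) / 2 / 2 * (A / P.del τ ^ 2) + √τ)) with hA2
  have hsum0 : 0 ≤ 1 / 2 * (A * a) + (1 / 2 * (A * (τ + P.b ^ 2))
    + ((d : ℝ) - 1) / 2 / 2 * (A / P.del τ ^ 2) + √τ) := by positivity
  have hA20 : 0 ≤ A / P.del τ ^ 2 := by positivity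
  set M := Real.exp P.phMax
  have hM : 0 < M := Real.exp_pos _
  refine ⟨A2 * (2 + d) * (M ^ 2 * (2 + 2 * P.b ^ 2)), by positivity, fun V₁ u hu x hx hV i => ?_⟩
  have hn := norm_pos_iff.mpr hx
  have hw := P.w_le hτ hn
  have hw0 := P.w_nonneg hτ hn
  have hw2 := P.w_div_sq_le hτ hn
  have hp := P.p_le hn
  have hp0 := (P.p_pos hn).le
  have hh := P.h_le hτ hn
  have hh0 := P.h_nonneg hτ hn
  have h0 : 0 ≤ P.psi τ x := div_nonneg hw0 hn.le
  have hψr : P.psi τ x * ‖x‖ = P.w τ ‖x‖ := by unfold psi; field_simp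
  have hψ : P.psi τ x ≤ A + A / P.del τ ^ 2 := by
    have : P.psi τ x ≤ P.w τ ‖x‖ + P.w τ ‖x‖ / ‖x‖ ^ 2 := by
      unfold psi
      have e : P.w τ ‖x‖ + P.w τ ‖x‖ / ‖x‖ ^ 2 - P.w τ ‖x‖ / ‖x‖
          = P.w τ ‖x‖ * ((1 / ‖x‖ - 1 / 2) ^ 2 + 3 / 4) := by field_simp; ring
      have : 0 ≤ P.w τ ‖x‖ * ((1 / ‖x‖ - 1 / 2) ^ 2 + 3 / 4) := by positivity
      linarith
    linarith
  have hk : ‖x‖ * |P.kk τ V₁ x| ≤ A2 - (A + A / P.del τ ^ 2) := by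
    have : ‖x‖ * P.kk τ V₁ x = -(1 / 2 * (P.w τ ‖x‖ * V₁ x)) + (1 / 2 * (P.w τ ‖x‖ * (τ + P.p ‖x‖ ^ 2))
      + ((d : ℝ) - 1) / 2 / 2 * (P.w τ ‖x‖ / ‖x‖ ^ 2) + P.h τ ‖x‖) := by
      unfold kk psi; field_simp
    rw [show ‖x‖ * |P.kk τ V₁ x| = |‖x‖ * P.kk τ V₁ x| by rw [abs_mul, abs_of_pos hn], this]
    have hr : 0 ≤ (1 / 2 * (P.w τ ‖x‖ * (τ + P.p ‖x‖ ^ 2))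
      + ((d : ℝ) - 1) / 2 / 2 * (P.w τ ‖x‖ / ‖x‖ ^ 2) + P.h τ ‖x‖) := by positivity
    refine (abs_add_le _ _).trans ?_
    rw [abs_neg, abs_of_nonneg hr, abs_mul, abs_mul, abs_of_nonneg hw0, abs_of_pos (by norm_num : (0:ℝ) < 1 / 2)]
    have : A2 - (A + A / P.del τ ^ 2) = (1 / 2 * (A * a) + (1 / 2 * (A * (τ + P.b ^ 2))
      + ((d : ℝ) - 1) / 2 / 2 * (A / P.del τ ^ 2) + √τ)) := by rw [hA2]; ring
    rw [this]
    gcongr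
  refine (abs_flux_le (A := A2) hd h0 (by linarith) (by rw [hψr]; linarith) (by linarith) i).trans ?_
  rw [mul_assoc]
  have hE := P.Ex_bounds x
  have hg : 0 ≤ gsq u x := Finset.sum_nonneg fun j _ => sq_nonneg _
  have h3 := P.gsq_Ex_mul_le hx (hu x)
  have h4 : (P.Ex x * u x) ^ 2 ≤ M ^ 2 * u x ^ 2 := by
    rw [mul_pow]
    have := hE.2
    have := hE.1
    gcongr
  have h5 : (P.Ex x * u x) ^ 2 + gsq (fun y => P.Ex y * u y) x
      ≤ M ^ 2 * (2 + 2 * P.b ^ 2) * (u x ^ 2 + gsq u x) := by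
    have : 0 ≤ M ^ 2 * u x ^ 2 := by positivity
    have : 0 ≤ M ^ 2 * (P.b ^ 2 * gsq u x) := by positivity
    nlinarith
  calc _ ≤ A2 * ((2 + d) * (M ^ 2 * (2 + 2 * P.b ^ 2) * (u x ^ 2 + gsq u x))) := by
        gcongr
    _ = _ := by ring

end Prm

/-! ### The Carleman estimate -/

theorem gsq_nonneg {d : ℕ} (v : Ed d → ℝ) (x : Ed d) : 0 ≤ gsq v x :=
  Finset.sum_nonneg fun _ _ => sq_nonneg _

theorem continuous_gsq {d : ℕ} {v : Ed d → ℝ} (hv : ContDiff ℝ 2 v) : Continuous (gsq v) :=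
  continuous_iff_continuousAt.mpr fun _ => (contDiffAt_gsq hv.contDiffAt).continuousAt

theorem continuous_wt {d : ℕ} (s : ℝ) : Continuous fun x : Ed d => (1 + ‖x‖) ^ s :=
  (continuous_const.add continuous_norm).rpow_const fun x => Or.inl
    (by positivity : 1 + ‖x‖ ≠ 0)

theorem wt_le_one {d : ℕ} {s : ℝ} (hs : s ≤ 0) (x : Ed d) : (1 + ‖x‖) ^ s ≤ 1 :=
  Real.rpow_le_one_of_one_le_of_nonpos (by linarith [norm_nonneg x]) hs

theorem wt_pos {d : ℕ} (s : ℝ) (x : Ed d) : 0 < (1 + ‖x‖) ^ s :=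
  Real.rpow_pos_of_pos (by positivity) _

/-- A bounded continuous weight preserves integrability. -/
theorem integrable_wt_mul {d : ℕ} {s : ℝ} (hs : s ≤ 0) {g : Ed d → ℝ} (hg : Integrable g) :
    Integrable fun x => (1 + ‖x‖) ^ s * g x := by
  refine hg.mono ((continuous_wt s).aestronglyMeasurable.mul hg.1) (Filter.Eventually.of_forall fun x => ?_)
  rw [norm_mul, Real.norm_of_nonneg (wt_pos s x).le]
  exact mul_le_of_le_one_left (norm_nonneg _) (wt_le_one hs x)

/-- The cross term produced by `ε` is controlled by the unweighted energy. -/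
theorem cross_le {r w A E M s t u₁ u₂ e₁ e₂ g₁ g₂ : ℝ} (hr : 0 < r) (hw0 : 0 ≤ w) (hw : w ≤ A)
    (hE : 0 ≤ E) (hEM : E ≤ M) (ht : 0 < t) (he₁ : e₁ ^ 2 ≤ r ^ 2 * g₁) (he₂ : e₂ ^ 2 ≤ r ^ 2 * g₂) :
    |w * E ^ 2 * s * ((u₁ * e₂ - u₂ * e₁) / r)|
      ≤ |s| * (A * M ^ 2) * (t * (u₁ ^ 2 + u₂ ^ 2) + (g₁ + g₂) / t) := by
  have hM := hE.trans hEM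
  have hA := hw0.trans hw
  have key : |(u₁ * e₂ - u₂ * e₁) / r| ≤ t * (u₁ ^ 2 + u₂ ^ 2) + (g₁ + g₂) / t := by
    have h1 : (e₁ / r) ^ 2 ≤ g₁ := by rw [div_pow, div_le_iff₀ (by positivity)]; linarith
    have h2 : (e₂ / r) ^ 2 ≤ g₂ := by rw [div_pow, div_le_iff₀ (by positivity)]; linarith
    have e : (u₁ * e₂ - u₂ * e₁) / r = u₁ * (e₂ / r) - u₂ * (e₁ / r) := by ring
    have h3 : t * (u₁ ^ 2 + u₂ ^ 2) + ((e₁ / r) ^ 2 + (e₂ / r) ^ 2) / t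
        ≤ t * (u₁ ^ 2 + u₂ ^ 2) + (g₁ + g₂) / t := by gcongr
    refine le_trans ?_ h3
    rw [e]
    set y₁ := e₁ / r
    set y₂ := e₂ / r
    have i1 : t * (u₁ ^ 2 + u₂ ^ 2) + (y₁ ^ 2 + y₂ ^ 2) / t - (u₁ * y₂ - u₂ * y₁)
      = ((t * u₁ - y₂ / 2) ^ 2 + (t * u₂ + y₁ / 2) ^ 2 + 3 / 4 * (y₁ ^ 2 + y₂ ^ 2)) / t := by
      field_simp; ring
    have i2 : t * (u₁ ^ 2 + u₂ ^ 2) + (y₁ ^ 2 + y₂ ^ 2) / t + (u₁ * y₂ - u₂ * y₁)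
      = ((t * u₁ + y₂ / 2) ^ 2 + (t * u₂ - y₁ / 2) ^ 2 + 3 / 4 * (y₁ ^ 2 + y₂ ^ 2)) / t := by
      field_simp; ring
    have j1 : 0 ≤ ((t * u₁ - y₂ / 2) ^ 2 + (t * u₂ + y₁ / 2) ^ 2 + 3 / 4 * (y₁ ^ 2 + y₂ ^ 2)) / t := by
      positivity
    have j2 : 0 ≤ ((t * u₁ + y₂ / 2) ^ 2 + (t * u₂ - y₁ / 2) ^ 2 + 3 / 4 * (y₁ ^ 2 + y₂ ^ 2)) / t := by
      positivity
    exact abs_le.mpr ⟨by linarith, by linarith⟩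
  rw [abs_mul, abs_mul, abs_of_nonneg (by positivity : 0 ≤ w * E ^ 2)]
  calc w * E ^ 2 * |s| * |(u₁ * e₂ - u₂ * e₁) / r|
      ≤ A * M ^ 2 * |s| * (t * (u₁ ^ 2 + u₂ ^ 2) + (g₁ + g₂) / t) := by gcongr
    _ = _ := by ring

theorem integral_lin {d : ℕ} {F₁ F₂ F₃ F₄ : Ed d → ℝ} (h₁ : Integrable F₁) (h₂ : Integrable F₂)
    (h₃ : Integrable F₃) (h₄ : Integrable F₄) (c₁ c₂ c₃ c₄ c₅ : ℝ) :
    ∫ x, (c₁ * F₁ x - c₂ * (c₃ * F₂ x + F₃ x / c₄) - c₅ * F₄ x)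
      = c₁ * (∫ x, F₁ x) - c₂ * (c₃ * (∫ x, F₂ x) + (∫ x, F₃ x) / c₄) - c₅ * ∫ x, F₄ x := by
  have i₂ : Integrable fun x => c₃ * F₂ x + F₃ x / c₄ := (h₂.const_mul _).add (h₃.div_const _)
  have i₁ : Integrable fun x => c₁ * F₁ x - c₂ * (c₃ * F₂ x + F₃ x / c₄) :=
    (h₁.const_mul _).sub (i₂.const_mul _)
  rw [integral_sub i₁ (h₄.const_mul _), integral_sub (h₁.const_mul _) (i₂.const_mul _),
    integral_const_mul, integral_const_mul, integral_const_mul,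
    integral_add (h₂.const_mul _) (h₃.div_const _), integral_const_mul, integral_div]

/-- The weighted estimate for the pair of real components `(u₁, u₂)`, with the contribution of `ε`
left as an unweighted energy on the right-hand side. -/
theorem Prm.carleman {τ₀ α a γ : ℝ} (P : Prm τ₀ α a γ) (hγ : 0 < γ) {d : ℕ} (hd : 2 ≤ d) :
    ∃ κ M₂ M₃ : ℝ, 0 < κ ∧ 0 < M₂ ∧ 0 < M₃ ∧ ∀ (τ s : ℝ), τ₀ ≤ τ →
      ∀ (V₁ V₂ u₁ u₂ f₁ f₂ : Ed d → ℝ), ContDiff ℝ 1 V₁ → ContDiff ℝ 2 u₁ → ContDiff ℝ 2 u₂ →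
      (∀ x, |V₁ x| ≤ a * (1 + ‖x‖) ^ (-γ)) →
      (∀ x, |V₂ x| ≤ a * (1 + ‖x‖) ^ (-γ - 1)) →
      (∀ x, eul V₁ x / ‖x‖ ≤ a * (1 + ‖x‖) ^ (-γ - 1)) →
      (∀ x, lapr u₁ x = (V₁ x + V₂ x - τ) * u₁ x + -(s * u₂ x) - f₁ x) →
      (∀ x, lapr u₂ x = (V₁ x + V₂ x - τ) * u₂ x + s * u₁ x - f₂ x) →
      Integrable (fun x => u₁ x ^ 2 + u₂ x ^ 2) → Integrable (fun x => gsq u₁ x + gsq u₂ x) →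
      Integrable (fun x => (1 + ‖x‖) ^ (1 + α) * (f₁ x ^ 2 + f₂ x ^ 2)) →
      κ * τ * ∫ x, (1 + ‖x‖) ^ (-(1 + α)) * (u₁ x ^ 2 + u₂ x ^ 2) ≤
        |s| * M₃ * (√τ * (∫ x, u₁ x ^ 2 + u₂ x ^ 2) + (∫ x, gsq u₁ x + gsq u₂ x) / √τ)
          + M₂ * ∫ x, (1 + ‖x‖) ^ (1 + α) * (f₁ x ^ 2 + f₂ x ^ 2) := by
  have hα := P.hα
  have hR := P.hR
  have ha := P.ha
  have hK := P.hK
  set M := Real.exp P.phMax with hMdef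
  have hM : 0 < M := Real.exp_pos _
  set A : ℝ := P.R / α with hA
  have hA0 : 0 < A := by positivity
  refine ⟨1 / (128 * P.K) * 2 ^ (-(1 + α)), A * (6 / α) * M ^ 2, A * M ^ 2, by positivity,
    by positivity, by positivity, ?_⟩
  intro τ s hτ V₁ V₂ u₁ u₂ f₁ f₂ hV hu₁ hu₂ hV1 hV2 hVr hl₁ hl₂ hm hg hf
  set κ : ℝ := 1 / (128 * P.K) * 2 ^ (-(1 + α)) with hκ
  have hκ0 : 0 < κ := by positivity
  have hτ0 : 0 < τ := P.hτ₀.trans_le hτ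
  have hsτ : 0 < √τ := Real.sqrt_pos.mpr hτ0
  obtain ⟨C, hC, hflux⟩ := P.flux_growth (d := d) hτ hd
  have hρm := integrable_wt_mul (s := -(1 + α)) (by linarith) hm
  have hGi : Integrable fun x => κ * τ * ((1 + ‖x‖) ^ (-(1 + α)) * (u₁ x ^ 2 + u₂ x ^ 2))
      - |s| * (A * M ^ 2) * (√τ * (u₁ x ^ 2 + u₂ x ^ 2) + (gsq u₁ x + gsq u₂ x) / √τ)
      - A * (6 / α) * M ^ 2 * ((1 + ‖x‖) ^ (1 + α) * (f₁ x ^ 2 + f₂ x ^ 2)) :=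
    ((hρm.const_mul _).sub (((hm.const_mul _).add (hg.div_const _)).const_mul _)).sub (hf.const_mul _)
  have hmain := integral_nonpos_of_le_div hd
    (fun i x => flux (P.psi τ) (P.kk τ V₁) (fun y => P.Ex y * u₁ y) i x
      + flux (P.psi τ) (P.kk τ V₁) (fun y => P.Ex y * u₂ y) i x)
    (fun i x hx => by
      have hψ : ContDiffAt ℝ 1 (P.psi τ : Ed d → ℝ) x := (P.contDiffAt_psi hτ hx).of_le (by norm_num)
      have hk := P.contDiffAt_kk hτ hV hx
      exact (contDiffAt_flux ((P.contDiffAt_Ex hx).mul hu₁.contDiffAt) hψ hk i).add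
        (contDiffAt_flux ((P.contDiffAt_Ex hx).mul hu₂.contDiffAt) hψ hk i))
    (fun x => C * ((u₁ x ^ 2 + u₂ x ^ 2) + (gsq u₁ x + gsq u₂ x)))
    (by
      have := continuous_gsq hu₁
      have := continuous_gsq hu₂
      have := hu₁.continuous
      have := hu₂.continuous
      fun_prop)
    ((hm.add hg).const_mul C)
    (fun i x hx => by
      have hVa : |V₁ x| ≤ a := (hV1 x).trans
        (mul_le_of_le_one_right ha.le (wt_le_one (by linarith) x))
      have h1 := hflux V₁ u₁ (hu₁.differentiable (by norm_num)) x hx hVa i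
      have h2 := hflux V₁ u₂ (hu₂.differentiable (by norm_num)) x hx hVa i
      refine (abs_add_le _ _).trans ?_
      linarith)
    _ hGi
    (fun x hx => by
      have hn := norm_pos_iff.mpr hx
      have hψ : ContDiffAt ℝ 1 (P.psi τ : Ed d → ℝ) x := (P.contDiffAt_psi hτ hx).of_le (by norm_num)
      have hk := P.contDiffAt_kk hτ hV hx
      have hd₁ := fun i => (contDiffAt_flux ((P.contDiffAt_Ex hx).mul hu₁.contDiffAt) hψ hk i).differentiableAt
        (by norm_num)
      have hd₂ := fun i => (contDiffAt_flux ((P.contDiffAt_Ex hx).mul hu₂.contDiffAt) hψ hk i).differentiableAt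
        (by norm_num)
      have hsplit : ∀ i, fderiv ℝ (fun x => flux (P.psi τ) (P.kk τ V₁) (fun y => P.Ex y * u₁ y) i x
          + flux (P.psi τ) (P.kk τ V₁) (fun y => P.Ex y * u₂ y) i x) x (bv i)
          = fderiv ℝ (flux (P.psi τ) (P.kk τ V₁) (fun y => P.Ex y * u₁ y) i) x (bv i)
          + fderiv ℝ (flux (P.psi τ) (P.kk τ V₁) (fun y => P.Ex y * u₂ y) i) x (bv i) := fun i => by
        rw [fderiv_fun_add (hd₁ i) (hd₂ i)]; rfl
      rw [Finset.sum_congr rfl fun i _ => hsplit i, Finset.sum_add_distrib]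
      have c₁ := P.comp_ineq hτ hV hu₁ hx (hV1 x) (hVr x) (hV2 x) (hl₁ x)
      have c₂ := P.comp_ineq hτ hV hu₂ hx (hV1 x) (hVr x) (hV2 x) (hl₂ x)
      have hw := P.w_le hτ hn
      have hw0 := P.w_nonneg hτ hn
      obtain ⟨hE1, hE2⟩ := P.Ex_bounds x
      have hcr := neg_le_of_abs_le (cross_le (s := s) (u₁ := u₁ x) (u₂ := u₂ x) hn hw0 hw
        (by linarith) hE2 hsτ (eul_sq_le u₁ x) (eul_sq_le u₂ x))
      have hcr' : P.w τ ‖x‖ * P.Ex x ^ 2 * -(s * u₂ x)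
            * ((eul u₁ x + (P.p ‖x‖ * ‖x‖ + ((d : ℝ) - 1) / 2) * u₁ x) / ‖x‖)
          + P.w τ ‖x‖ * P.Ex x ^ 2 * (s * u₁ x)
            * ((eul u₂ x + (P.p ‖x‖ * ‖x‖ + ((d : ℝ) - 1) / 2) * u₂ x) / ‖x‖)
          = P.w τ ‖x‖ * P.Ex x ^ 2 * s * ((u₁ x * eul u₂ x - u₂ x * eul u₁ x) / ‖x‖) := by ring
      have hom := P.om1_lower hτ hn
      have hom' : 2 ^ (-(1 + α)) * (1 + ‖x‖) ^ (-(1 + α)) ≤ P.om1 (‖x‖ + P.del τ) := by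
        rw [← Real.mul_rpow (by norm_num) (by positivity)]
        convert hom using 2; ring
      have hgain : ∀ y : ℝ, κ * τ * ((1 + ‖x‖) ^ (-(1 + α)) * y ^ 2)
          ≤ 1 / (128 * P.K) * τ * P.om1 (‖x‖ + P.del τ) * (P.Ex x * y) ^ 2 := fun y => by
        have : y ^ 2 ≤ (P.Ex x * y) ^ 2 := by
          rw [mul_pow]
          exact le_mul_of_one_le_left (sq_nonneg y) (one_le_pow₀ hE1)
        calc _ = 1 / (128 * P.K) * τ * (2 ^ (-(1 + α)) * (1 + ‖x‖) ^ (-(1 + α))) * y ^ 2 := by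
              rw [hκ]; ring
          _ ≤ _ := by
              have := P.om1_pos (s := ‖x‖ + P.del τ) (by linarith [P.hdel hτ])
              gcongr
      have hfb : ∀ y : ℝ, P.w τ ‖x‖ ^ 2 / P.w1 τ ‖x‖ * (P.Ex x * y) ^ 2
          ≤ A * (6 / α) * M ^ 2 * ((1 + ‖x‖) ^ (1 + α) * y ^ 2) := fun y => by
        have h1 := P.wsq_div_le hτ hn
        calc _ ≤ A * (6 / α) * (1 + ‖x‖) ^ (1 + α) * (M ^ 2 * y ^ 2) := by
              rw [mul_pow]
              have := P.w1_pos hτ hn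
              have : 0 ≤ P.Ex x := by linarith
              gcongr
          _ = _ := by ring
      have g₁ := hgain (u₁ x)
      have g₂ := hgain (u₂ x)
      have b₁ := hfb (f₁ x)
      have b₂ := hfb (f₂ x)
      linarith)
  have hint := (integral_lin hρm hm hg hf (κ * τ) (|s| * (A * M ^ 2)) (√τ) (√τ)
    (A * (6 / α) * M ^ 2)).symm.trans_le hmain
  linarith

/-! ### Energy identities -/

/-- The product `|u| |f|`, where `u = (u₁, u₂)` and `f = (f₁, f₂)`. -/
def crossTerm {d : ℕ} (u₁ u₂ f₁ f₂ : Ed d → ℝ) (x : Ed d) : ℝ :=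
  √(u₁ x ^ 2 + u₂ x ^ 2) * √(f₁ x ^ 2 + f₂ x ^ 2)

theorem crossTerm_nonneg {d : ℕ} (u₁ u₂ f₁ f₂ : Ed d → ℝ) (x : Ed d) :
    0 ≤ crossTerm u₁ u₂ f₁ f₂ x := by unfold crossTerm; positivity

theorem crossTerm_le {d : ℕ} (u₁ u₂ f₁ f₂ : Ed d → ℝ) (x : Ed d) {θ : ℝ} (hθ : 0 < θ) :
    crossTerm u₁ u₂ f₁ f₂ x ≤ θ * (u₁ x ^ 2 + u₂ x ^ 2) + (f₁ x ^ 2 + f₂ x ^ 2) / (4 * θ) := by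
  unfold crossTerm
  have h1 : (√(u₁ x ^ 2 + u₂ x ^ 2)) ^ 2 = u₁ x ^ 2 + u₂ x ^ 2 := Real.sq_sqrt (by positivity)
  have h2 : (√(f₁ x ^ 2 + f₂ x ^ 2)) ^ 2 = f₁ x ^ 2 + f₂ x ^ 2 := Real.sq_sqrt (by positivity)
  set A := √(u₁ x ^ 2 + u₂ x ^ 2)
  set B := √(f₁ x ^ 2 + f₂ x ^ 2)
  rw [← h1, ← h2]
  have : θ * A ^ 2 + B ^ 2 / (4 * θ) - A * B = (2 * θ * A - B) ^ 2 / (4 * θ) := by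
    field_simp; ring
  have : 0 ≤ (2 * θ * A - B) ^ 2 / (4 * θ) := by positivity
  linarith

theorem abs_pair_le {d : ℕ} (u₁ u₂ f₁ f₂ : Ed d → ℝ) (x : Ed d) :
    |u₁ x * f₁ x + u₂ x * f₂ x| ≤ crossTerm u₁ u₂ f₁ f₂ x ∧
    |u₁ x * f₂ x - u₂ x * f₁ x| ≤ crossTerm u₁ u₂ f₁ f₂ x := by
  unfold crossTerm
  rw [← Real.sqrt_mul (by positivity)]
  exact ⟨Real.abs_le_sqrt (by nlinarith [sq_nonneg (u₁ x * f₂ x - u₂ x * f₁ x)]),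
    Real.abs_le_sqrt (by nlinarith [sq_nonneg (u₁ x * f₁ x + u₂ x * f₂ x)])⟩

/-- The terms with a derivative on the weight. -/
theorem grad_weight_le {d : ℕ} {ψ u v₁ v₂ u' : Ed d → ℝ} {x : Ed d} {η : ℝ} (hη : 0 ≤ η)
    (h0 : 0 ≤ ψ x) (hψ : gsq ψ x ≤ (η * ψ x) ^ 2) :
    |∑ i, dp i ψ x * (u x * dp i v₁ x + u' x * dp i v₂ x)|
      ≤ η / 2 * (ψ x * ((u x ^ 2 + u' x ^ 2) + (gsq v₁ x + gsq v₂ x))) := by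
  have hm : 0 ≤ u x ^ 2 + u' x ^ 2 := by positivity
  have hg : 0 ≤ gsq v₁ x + gsq v₂ x := add_nonneg (gsq_nonneg _ _) (gsq_nonneg _ _)
  have hCS : (∑ i, dp i ψ x * (u x * dp i v₁ x + u' x * dp i v₂ x)) ^ 2
      ≤ gsq ψ x * ((u x ^ 2 + u' x ^ 2) * (gsq v₁ x + gsq v₂ x)) := by
    refine (Finset.sum_mul_sq_le_sq_mul_sq _ _ _).trans ?_
    refine mul_le_mul_of_nonneg_left ?_ (gsq_nonneg _ _)
    unfold gsq
    rw [← Finset.sum_add_distrib, Finset.mul_sum]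
    refine Finset.sum_le_sum fun i _ => ?_
    nlinarith [sq_nonneg (u x * dp i v₂ x - u' x * dp i v₁ x)]
  apply abs_le_of_sq_le_sq _ (by positivity)
  refine hCS.trans ?_
  set m := u x ^ 2 + u' x ^ 2
  set g := gsq v₁ x + gsq v₂ x
  calc gsq ψ x * (m * g) ≤ (η * ψ x) ^ 2 * (m * g) := by gcongr
    _ ≤ (η * ψ x) ^ 2 * ((m + g) ^ 2 / 4) := by
      gcongr
      nlinarith [sq_nonneg (m - g)]
    _ = _ := by ring

theorem div_wflux {d : ℕ} {ψ u v : Ed d → ℝ} {x : Ed d} (hψ : DifferentiableAt ℝ ψ x)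
    (hu : DifferentiableAt ℝ u x) (hv : ContDiffAt ℝ 2 v x) (i : Fin d) :
    HasDp i (fun y => ψ y * (u y * dp i v y))
      (dp i ψ x * (u x * dp i v x) + ψ x * (dp i u x * dp i v x + u x * dp i (dp i v) x)) x :=
  (HasDp.of_diff hψ).mul ((HasDp.of_diff hu).mul
    (HasDp.of_diff ((contDiffAt_dp hv i).differentiableAt (by norm_num))))

theorem abs_wflux_le {d : ℕ} {ψ u v₁ v₂ u' : Ed d → ℝ} {x : Ed d} (h0 : 0 ≤ ψ x) (i : Fin d) :
    |ψ x * (u x * dp i v₁ x) + ψ x * (u' x * dp i v₂ x)|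
      ≤ ψ x * ((u x ^ 2 + u' x ^ 2) + (gsq v₁ x + gsq v₂ x)) := by
  rw [← mul_add, abs_mul, abs_of_nonneg h0]
  refine mul_le_mul_of_nonneg_left ?_ h0
  have h1 : dp i v₁ x ^ 2 ≤ gsq v₁ x :=
    Finset.single_le_sum (f := fun j => dp j v₁ x ^ 2) (fun j _ => sq_nonneg _) (Finset.mem_univ i)
  have h2 : dp i v₂ x ^ 2 ≤ gsq v₂ x :=
    Finset.single_le_sum (f := fun j => dp j v₂ x ^ 2) (fun j _ => sq_nonneg _) (Finset.mem_univ i)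
  rw [abs_le]
  constructor <;> nlinarith [sq_nonneg (u x + dp i v₁ x), sq_nonneg (u x - dp i v₁ x),
    sq_nonneg (u' x + dp i v₂ x), sq_nonneg (u' x - dp i v₂ x), sq_nonneg (u x), sq_nonneg (u' x)]

/-- The integrated inequality for a flux `ψ (u ∇v₁ + u' ∇v₂)`, where `u, u'` are `± u₁, ± u₂`. -/
theorem energy_aux {d : ℕ} (hd : 2 ≤ d) {ψ u u' v₁ v₂ : Ed d → ℝ} {η : ℝ} (hη : 0 ≤ η)
    (hψ : ContDiff ℝ 1 ψ) (h0 : ∀ x, 0 ≤ ψ x) (hψη : ∀ x, gsq ψ x ≤ (η * ψ x) ^ 2)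
    (hu : ContDiff ℝ 2 u) (hu' : ContDiff ℝ 2 u') (hv₁ : ContDiff ℝ 2 v₁) (hv₂ : ContDiff ℝ 2 v₂)
    (hm : Integrable fun x => ψ x * (u x ^ 2 + u' x ^ 2))
    (hg : Integrable fun x => ψ x * (gsq v₁ x + gsq v₂ x))
    (H : Ed d → ℝ) (hH : Integrable H)
    (hle : ∀ x, H x ≤ ψ x * ((∑ i, (dp i u x * dp i v₁ x + dp i u' x * dp i v₂ x))
      + (u x * lapr v₁ x + u' x * lapr v₂ x))) :
    ∫ x, H x ≤ η / 2 * ((∫ x, ψ x * (u x ^ 2 + u' x ^ 2)) + ∫ x, ψ x * (gsq v₁ x + gsq v₂ x)) := by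
  have hmg : Integrable fun x => ψ x * ((u x ^ 2 + u' x ^ 2) + (gsq v₁ x + gsq v₂ x)) := by
    refine (hm.add hg).congr (Filter.Eventually.of_forall fun x => ?_)
    simp only [Pi.add_apply]; ring
  have hψd := hψ.differentiable (by norm_num)
  have hcd : ∀ i x, ContDiffAt ℝ 1 (fun x => ψ x * (u x * dp i v₁ x) + ψ x * (u' x * dp i v₂ x)) x :=
    fun i x => (hψ.contDiffAt.mul ((hu.contDiffAt.of_le (by norm_num)).mul
      (contDiffAt_dp hv₁.contDiffAt i))).add (hψ.contDiffAt.mul ((hu'.contDiffAt.of_le (by norm_num)).mul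
      (contDiffAt_dp hv₂.contDiffAt i)))
  have main := integral_nonpos_of_le_div hd
    (fun i x => ψ x * (u x * dp i v₁ x) + ψ x * (u' x * dp i v₂ x))
    (fun i x _ => hcd i x)
    (fun x => ψ x * ((u x ^ 2 + u' x ^ 2) + (gsq v₁ x + gsq v₂ x)))
    (by
      have := continuous_gsq hv₁
      have := continuous_gsq hv₂
      have := hu.continuous
      have := hu'.continuous
      have := hψ.continuous
      fun_prop)
    hmg (fun i x _ => abs_wflux_le (h0 x) i)
    (fun x => H x - η / 2 * (ψ x * ((u x ^ 2 + u' x ^ 2) + (gsq v₁ x + gsq v₂ x))))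
    (hH.sub (hmg.const_mul _))
    (fun x _ => by
      have e : ∀ i, fderiv ℝ (fun x => ψ x * (u x * dp i v₁ x) + ψ x * (u' x * dp i v₂ x)) x (bv i)
          = dp i ψ x * (u x * dp i v₁ x + u' x * dp i v₂ x)
          + ψ x * ((dp i u x * dp i v₁ x + dp i u' x * dp i v₂ x)
            + (u x * dp i (dp i v₁) x + u' x * dp i (dp i v₂) x)) := fun i => by
        have h := (div_wflux (hψd x) (hu.differentiable (by norm_num) x) hv₁.contDiffAt i).add
          (div_wflux (hψd x) (hu'.differentiable (by norm_num) x) hv₂.contDiffAt i)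
        have := h.eq ((hcd i x).differentiableAt (by norm_num))
        unfold dp at this ⊢
        rw [this]; ring
      rw [Finset.sum_congr rfl fun i _ => e i, Finset.sum_add_distrib, ← Finset.mul_sum,
        Finset.sum_add_distrib, Finset.sum_add_distrib (f := fun i => u x * dp i (dp i v₁) x),
        ← Finset.mul_sum, ← Finset.mul_sum]
      have h1 := neg_le_of_abs_le (grad_weight_le (u := u) (u' := u') (v₁ := v₁) (v₂ := v₂) hη (h0 x) (hψη x))
      have h2 := hle x
      unfold lapr at h2
      linarith)
  rw [integral_sub hH (hmg.const_mul _), integral_const_mul] at main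
  have e2 : ∫ x, ψ x * ((u x ^ 2 + u' x ^ 2) + (gsq v₁ x + gsq v₂ x))
      = (∫ x, ψ x * (u x ^ 2 + u' x ^ 2)) + ∫ x, ψ x * (gsq v₁ x + gsq v₂ x) := by
    rw [← integral_add hm hg]
    congr 1; funext x; ring
  rw [e2] at main
  linarith

/-- The system satisfied by the real and imaginary parts `(u₁, u₂)` of a solution, where `s = ± ε`. -/
structure Sys {d : ℕ} (s τ : ℝ) (V u₁ u₂ f₁ f₂ : Ed d → ℝ) : Prop where
  c₁ : ContDiff ℝ 2 u₁
  c₂ : ContDiff ℝ 2 u₂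
  l₁ : ∀ x, lapr u₁ x = (V x - τ) * u₁ x + -(s * u₂ x) - f₁ x
  l₂ : ∀ x, lapr u₂ x = (V x - τ) * u₂ x + s * u₁ x - f₂ x

/-- The real and imaginary parts of the equation tested against `ψ ū`, where `|∇ψ| ≤ η ψ`. -/
theorem Sys.energy {d : ℕ} (hd : 2 ≤ d) {s τ v : ℝ} {V u₁ u₂ f₁ f₂ : Ed d → ℝ}
    (S : Sys s τ V u₁ u₂ f₁ f₂) (hV : ∀ x, |V x| ≤ v) {ψ : Ed d → ℝ} {η : ℝ} (hη : 0 ≤ η)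
    (hψ : ContDiff ℝ 1 ψ) (h0 : ∀ x, 0 ≤ ψ x) (hψη : ∀ x, gsq ψ x ≤ (η * ψ x) ^ 2)
    (hm : Integrable fun x => ψ x * (u₁ x ^ 2 + u₂ x ^ 2))
    (hg : Integrable fun x => ψ x * (gsq u₁ x + gsq u₂ x))
    (hq : Integrable fun x => ψ x * crossTerm u₁ u₂ f₁ f₂ x) :
    (∫ x, ψ x * (gsq u₁ x + gsq u₂ x)) ≤
      η / 2 * ((∫ x, ψ x * (u₁ x ^ 2 + u₂ x ^ 2)) + ∫ x, ψ x * (gsq u₁ x + gsq u₂ x))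
      + (τ + v) * (∫ x, ψ x * (u₁ x ^ 2 + u₂ x ^ 2)) + ∫ x, ψ x * crossTerm u₁ u₂ f₁ f₂ x ∧
    |s| * (∫ x, ψ x * (u₁ x ^ 2 + u₂ x ^ 2)) ≤
      η / 2 * ((∫ x, ψ x * (u₁ x ^ 2 + u₂ x ^ 2)) + ∫ x, ψ x * (gsq u₁ x + gsq u₂ x))
      + ∫ x, ψ x * crossTerm u₁ u₂ f₁ f₂ x := by
  constructor
  · have := energy_aux hd hη hψ h0 hψη S.c₁ S.c₂ S.c₁ S.c₂ hm hg
      (fun x => ψ x * (gsq u₁ x + gsq u₂ x) - (τ + v) * (ψ x * (u₁ x ^ 2 + u₂ x ^ 2))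
        - ψ x * crossTerm u₁ u₂ f₁ f₂ x) ((hg.sub (hm.const_mul _)).sub hq)
      (fun x => by
        have h1 := (abs_pair_le u₁ u₂ f₁ f₂ x).1
        have h2 := neg_le_of_abs_le (hV x)
        have e : ∑ i, (dp i u₁ x * dp i u₁ x + dp i u₂ x * dp i u₂ x) = gsq u₁ x + gsq u₂ x := by
          unfold gsq; rw [← Finset.sum_add_distrib]
          exact Finset.sum_congr rfl fun i _ => by ring
        rw [e, S.l₁ x, S.l₂ x]
        have h3 : 0 ≤ (V x + v) * (u₁ x ^ 2 + u₂ x ^ 2) := mul_nonneg (by linarith) (by positivity)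
        have h4 := le_of_abs_le h1
        have := mul_le_mul_of_nonneg_left
          (show gsq u₁ x + gsq u₂ x - (τ + v) * (u₁ x ^ 2 + u₂ x ^ 2) - crossTerm u₁ u₂ f₁ f₂ x
          ≤ gsq u₁ x + gsq u₂ x + (u₁ x * ((V x - τ) * u₁ x + -(s * u₂ x) - f₁ x)
            + u₂ x * ((V x - τ) * u₂ x + s * u₁ x - f₂ x)) by linarith) (h0 x)
        linarith)
    have hgm : Integrable fun x => ψ x * (gsq u₁ x + gsq u₂ x) - (τ + v) * (ψ x * (u₁ x ^ 2 + u₂ x ^ 2)) :=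
      hg.sub (hm.const_mul _)
    rw [integral_sub hgm hq, integral_sub hg (hm.const_mul _), integral_const_mul] at this
    linarith
  · obtain ⟨t, ht, hts⟩ : ∃ t : ℝ, (t = 1 ∨ t = -1) ∧ t * s = |s| := by
      rcases le_total 0 s with h | h
      · exact ⟨1, Or.inl rfl, by rw [abs_of_nonneg h, one_mul]⟩
      · exact ⟨-1, Or.inr rfl, by rw [abs_of_nonpos h]; ring⟩
    have ht2 : t ^ 2 = 1 := by rcases ht with rfl | rfl <;> norm_num
    have hta : |t| = 1 := by rcases ht with rfl | rfl <;> norm_num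
    have e0 : ∀ x, (t * u₁ x) ^ 2 + (-t * u₂ x) ^ 2 = u₁ x ^ 2 + u₂ x ^ 2 := fun x => by
      rw [mul_pow, mul_pow, neg_sq, ht2]; ring
    have hdc : ∀ (c : ℝ) {w : Ed d → ℝ}, ContDiff ℝ 2 w → ∀ i x, dp i (fun y => c * w y) x = c * dp i w x :=
      fun c w hw i x => ((HasDp.of_diff (hw.differentiable (by norm_num) x)).const_mul c).eq
        ((hw.differentiable (by norm_num) x).const_mul c)
    have := energy_aux hd hη hψ h0 hψη (u := fun x => t * u₁ x) (u' := fun x => -t * u₂ x)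
      (v₁ := u₂) (v₂ := u₁) (contDiff_const.mul S.c₁) (contDiff_const.mul S.c₂) S.c₂ S.c₁
      (by simpa only [e0] using hm) (by simpa only [add_comm] using hg)
      (fun x => |s| * (ψ x * (u₁ x ^ 2 + u₂ x ^ 2)) - ψ x * crossTerm u₁ u₂ f₁ f₂ x)
      ((hm.const_mul _).sub hq)
      (fun x => by
        have h1 : t * (u₁ x * f₂ x - u₂ x * f₁ x) ≤ crossTerm u₁ u₂ f₁ f₂ x := by
          refine (le_abs_self _).trans ?_
          rw [abs_mul, hta, one_mul]
          exact (abs_pair_le u₁ u₂ f₁ f₂ x).2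
        have e : ∑ i, (dp i (fun y => t * u₁ y) x * dp i u₂ x + dp i (fun y => -t * u₂ y) x * dp i u₁ x) = 0 :=
          Finset.sum_eq_zero fun i _ => by rw [hdc _ S.c₁, hdc _ S.c₂]; ring
        rw [e, S.l₁ x, S.l₂ x, ← hts]
        have := mul_le_mul_of_nonneg_left
          (show t * s * (u₁ x ^ 2 + u₂ x ^ 2) - crossTerm u₁ u₂ f₁ f₂ x
          ≤ 0 + (t * u₁ x * ((V x - τ) * u₂ x + s * u₁ x - f₂ x)
            + -t * u₂ x * ((V x - τ) * u₁ x + -(s * u₂ x) - f₁ x)) by linarith) (h0 x)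
        linarith)
    simp only [e0] at this
    simp only [add_comm (gsq u₂ _)] at this
    rw [integral_sub (hm.const_mul _) hq, integral_const_mul] at this
    linarith

/-! ### Solutions in the weighted space belong to `H¹` -/

/-- A smooth weight comparable to `(1 + |x|)^(-(1+α))`, increasing to `1` as `R → ∞`. -/
def smw {d : ℕ} (α R : ℝ) (x : Ed d) : ℝ := (1 + ‖x‖ ^ 2 / R ^ 2) ^ (-((1 + α) / 2))

section
variable {d : ℕ} {α R : ℝ}

theorem smw_base (x : Ed d) (R : ℝ) : 0 < 1 + ‖x‖ ^ 2 / R ^ 2 := by positivity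

theorem smw_pos (x : Ed d) : 0 < smw α R x := Real.rpow_pos_of_pos (smw_base x R) _

theorem smw_le_one (hα : 0 < α) (x : Ed d) : smw α R x ≤ 1 :=
  Real.rpow_le_one_of_one_le_of_nonpos (by have : 0 ≤ ‖x‖ ^ 2 / R ^ 2 := by positivity
                                           linarith) (by linarith)

theorem contDiff_smw : ContDiff ℝ 1 (smw α R : Ed d → ℝ) := by
  unfold smw
  exact (contDiff_const.add ((contDiff_norm_sq ℝ).div_const _)).rpow_const_of_ne
    fun x => (smw_base x R).ne'

theorem dp_smw (x : Ed d) (i : Fin d) :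
    dp i (smw α R : Ed d → ℝ) x
      = -((1 + α) / 2) * (2 * x i / R ^ 2) * smw α R x / (1 + ‖x‖ ^ 2 / R ^ 2) := by
  have hb := smw_base x R
  have h1 : HasFDerivAt (fun y : Ed d => 1 + ‖y‖ ^ 2 / R ^ 2) _ x :=
    ((hasStrictFDerivAt_norm_sq x).hasFDerivAt.mul_const (R ^ 2)⁻¹).const_add 1
  have h2 := h1.rpow_const (p := -((1 + α) / 2)) (Or.inl hb.ne')
  have h3 : fderiv ℝ (smw α R : Ed d → ℝ) x = _ := h2.fderiv
  unfold dp
  rw [h3]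
  simp [bv, EuclideanSpace.inner_single_right]
  unfold smw
  rw [Real.rpow_sub_one hb.ne']
  ring

theorem gsq_smw_le (hα : 0 < α) (hR : 0 < R) (x : Ed d) :
    gsq (smw α R : Ed d → ℝ) x ≤ ((1 + α) / R * smw α R x) ^ 2 := by
  have hb := smw_base x R
  have hs := smw_pos (α := α) (R := R) x
  have hsum : ∑ i, x i ^ 2 = ‖x‖ ^ 2 := by
    rw [EuclideanSpace.norm_sq_eq]; simp
  unfold gsq
  have : ∀ i, dp i (smw α R : Ed d → ℝ) x ^ 2
      = ((1 + α) * smw α R x / (R ^ 2 * (1 + ‖x‖ ^ 2 / R ^ 2))) ^ 2 * x i ^ 2 := fun i => by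
    rw [dp_smw]; field_simp
  rw [Finset.sum_congr rfl fun i _ => this i, ← Finset.mul_sum, hsum]
  have e : ((1 + α) * smw α R x / (R ^ 2 * (1 + ‖x‖ ^ 2 / R ^ 2))) ^ 2 * ‖x‖ ^ 2
    = ((1 + α) / R * smw α R x) ^ 2 * (‖x‖ ^ 2 / R ^ 2 / (1 + ‖x‖ ^ 2 / R ^ 2) ^ 2) := by
    field_simp
  rw [e]
  apply mul_le_of_le_one_right (sq_nonneg _)
  rw [div_le_one (by positivity)]
  have : 0 ≤ ‖x‖ ^ 2 / R ^ 2 := by positivity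
  nlinarith

theorem smw_le (hα : 0 < α) (hR : 1 ≤ R) (x : Ed d) :
    smw α R x ≤ (2 * R ^ 2) ^ ((1 + α) / 2) * (1 + ‖x‖) ^ (-(1 + α)) := by
  have hb := smw_base x R
  have hn := norm_nonneg x
  have h1 : (1 + ‖x‖) ^ (-(1 + α)) = ((1 + ‖x‖) ^ 2) ^ (-((1 + α) / 2)) := by
    rw [← Real.rpow_natCast, ← Real.rpow_mul (by positivity)]
    congr 1; push_cast; ring
  have h2 : (2 * R ^ 2) ^ ((1 + α) / 2) = ((2 * R ^ 2)⁻¹) ^ (-((1 + α) / 2)) := by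
    rw [Real.rpow_neg (by positivity), Real.inv_rpow (by positivity), inv_inv]
  rw [h1, h2, ← Real.mul_rpow (by positivity) (by positivity)]
  unfold smw
  apply Real.rpow_le_rpow_of_nonpos (by positivity) _ (by linarith)
  rw [inv_mul_le_iff₀ (by positivity)]
  have : 2 * R ^ 2 * (1 + ‖x‖ ^ 2 / R ^ 2) = 2 * R ^ 2 + 2 * ‖x‖ ^ 2 := by field_simp
  rw [this]
  nlinarith [sq_nonneg (1 - ‖x‖)]

theorem le_smw_one (hα : 0 < α) (x : Ed d) : (1 + ‖x‖) ^ (-(1 + α)) ≤ smw α 1 x := by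
  have hn := norm_nonneg x
  have h1 : (1 + ‖x‖) ^ (-(1 + α)) = ((1 + ‖x‖) ^ 2) ^ (-((1 + α) / 2)) := by
    rw [← Real.rpow_natCast, ← Real.rpow_mul (by positivity)]
    congr 1; push_cast; ring
  rw [h1]
  unfold smw
  apply Real.rpow_le_rpow_of_nonpos (by positivity) _ (by linarith)
  norm_num
  nlinarith

theorem smw_tendsto (x : Ed d) :
    Filter.Tendsto (fun n : ℕ => smw α (n : ℝ) x) Filter.atTop (nhds 1) := by
  have h1 : Filter.Tendsto (fun n : ℕ => 1 + ‖x‖ ^ 2 / (n : ℝ) ^ 2) Filter.atTop (nhds (1 + 0)) := by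
    apply Filter.Tendsto.const_add
    apply Filter.Tendsto.div_atTop tendsto_const_nhds
    exact (Filter.tendsto_pow_atTop (by norm_num)).comp tendsto_natCast_atTop_atTop
  have h2 := h1.rpow_const (p := -((1 + α) / 2)) (Or.inl (by norm_num))
  simpa [smw] using h2

/-- A nonnegative continuous function whose integrals against the weights `smw α n` are eventually
bounded is integrable. -/
theorem integrable_of_smw_bound {g : Ed d → ℝ} (hgc : Continuous g) (hg0 : ∀ x, 0 ≤ g x) (C : ℝ)
    (hi : ∀ᶠ n : ℕ in Filter.atTop, Integrable fun x => smw α (n : ℝ) x * g x)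
    (hC : ∀ᶠ n : ℕ in Filter.atTop, ∫ x, smw α (n : ℝ) x * g x ≤ C) : Integrable g := by
  refine ⟨hgc.aestronglyMeasurable, ?_⟩
  rw [hasFiniteIntegral_iff_ofReal (Filter.Eventually.of_forall hg0)]
  have hF := lintegral_liminf_le (μ := (volume : Measure (Ed d))) (u := Filter.atTop)
    (f := fun (n : ℕ) x => ENNReal.ofReal (smw α (n : ℝ) x * g x))
    (fun n => (((contDiff_smw (d := d)).continuous.mul hgc).measurable).ennreal_ofReal)
  have hlim : ∀ x, Filter.liminf (fun n : ℕ => ENNReal.ofReal (smw α (n : ℝ) x * g x)) Filter.atTop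
      = ENNReal.ofReal (g x) := fun x => by
    apply Filter.Tendsto.liminf_eq
    have := ((smw_tendsto (α := α) x).mul_const (g x))
    rw [one_mul] at this
    exact ENNReal.tendsto_ofReal this
  simp only [hlim] at hF
  refine (hF.trans ?_).trans_lt (ENNReal.ofReal_lt_top (r := C))
  apply Filter.liminf_le_of_le
  · isBoundedDefault
  intro b hb
  obtain ⟨n, h1, h2, h3⟩ := (hb.and (hi.and hC)).exists
  refine h1.trans ?_
  rw [← ofReal_integral_eq_lintegral_ofReal h2
    (Filter.Eventually.of_forall fun x => mul_nonneg (smw_pos x).le (hg0 x))]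
  exact ENNReal.ofReal_le_ofReal h3

/-- As `smw α R` is bounded by a multiple of `(1 + |x|)^(-(1+α))`, weighted integrability carries
over to it. -/
theorem integrable_smw_mul (hα : 0 < α) (hR : 1 ≤ R) {g : Ed d → ℝ} (hgc : Continuous g)
    (hg : Integrable fun x => (1 + ‖x‖) ^ (-(1 + α)) * g x) :
    Integrable fun x => smw α R x * g x := by
  refine (hg.const_mul ((2 * R ^ 2) ^ ((1 + α) / 2))).mono
    ((contDiff_smw (d := d)).continuous.mul hgc).aestronglyMeasurable
    (Filter.Eventually.of_forall fun x => ?_)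
  rw [norm_mul, norm_mul, norm_mul, ← mul_assoc, Real.norm_of_nonneg (smw_pos x).le,
    Real.norm_of_nonneg (wt_pos _ x).le,
    Real.norm_of_nonneg (show (0 : ℝ) ≤ (2 * R ^ 2) ^ ((1 + α) / 2) by positivity)]
  exact mul_le_mul_of_nonneg_right (smw_le hα hR x) (norm_nonneg _)

theorem integrable_mul_crossTerm {ψ u₁ u₂ f₁ f₂ : Ed d → ℝ} (hψ : Continuous ψ) (h0 : ∀ x, 0 ≤ ψ x)
    (hu₁ : Continuous u₁) (hu₂ : Continuous u₂) (hf₁ : Measurable f₁) (hf₂ : Measurable f₂)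
    (hm : Integrable fun x => ψ x * (u₁ x ^ 2 + u₂ x ^ 2))
    (hF : Integrable fun x => ψ x * (f₁ x ^ 2 + f₂ x ^ 2)) :
    Integrable fun x => ψ x * crossTerm u₁ u₂ f₁ f₂ x := by
  refine (hm.add hF).mono ?_ (Filter.Eventually.of_forall fun x => ?_)
  · apply Measurable.aestronglyMeasurable
    unfold crossTerm
    have := hψ.measurable
    have := hu₁.measurable
    have := hu₂.measurable
    fun_prop
  · have hq := crossTerm_nonneg u₁ u₂ f₁ f₂ x
    have hle := crossTerm_le u₁ u₂ f₁ f₂ x one_pos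
    have hF0 : 0 ≤ f₁ x ^ 2 + f₂ x ^ 2 := by positivity
    rw [Real.norm_of_nonneg (mul_nonneg (h0 x) hq)]
    refine le_trans ?_ (le_abs_self _)
    simp only [Pi.add_apply]
    rw [← mul_add]
    refine mul_le_mul_of_nonneg_left ?_ (h0 x)
    linarith

theorem integral_mul_crossTerm_le {ψ u₁ u₂ f₁ f₂ : Ed d → ℝ} (hψ : Continuous ψ) (h0 : ∀ x, 0 ≤ ψ x)
    (hu₁ : Continuous u₁) (hu₂ : Continuous u₂) (hf₁ : Measurable f₁) (hf₂ : Measurable f₂)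
    (hm : Integrable fun x => ψ x * (u₁ x ^ 2 + u₂ x ^ 2))
    (hF : Integrable fun x => ψ x * (f₁ x ^ 2 + f₂ x ^ 2)) {θ : ℝ} (hθ : 0 < θ) :
    ∫ x, ψ x * crossTerm u₁ u₂ f₁ f₂ x ≤
      θ * (∫ x, ψ x * (u₁ x ^ 2 + u₂ x ^ 2)) + (∫ x, ψ x * (f₁ x ^ 2 + f₂ x ^ 2)) / (4 * θ) := by
  rw [← integral_const_mul, ← integral_div, ← integral_add (hm.const_mul _) (hF.div_const _)]
  refine integral_mono (integrable_mul_crossTerm hψ h0 hu₁ hu₂ hf₁ hf₂ hm hF)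
    ((hm.const_mul _).add (hF.div_const _)) fun x => ?_
  have := mul_le_mul_of_nonneg_left (crossTerm_le u₁ u₂ f₁ f₂ x hθ) (h0 x)
  refine this.trans (le_of_eq ?_)
  ring

/-- For `ε ≠ 0` a solution in the weighted space belongs to `H¹`. -/
theorem Sys.h1 (hd : 2 ≤ d) {s τ v : ℝ} (hs : s ≠ 0) (hτ : 0 < τ) {V u₁ u₂ f₁ f₂ : Ed d → ℝ}
    (S : Sys s τ V u₁ u₂ f₁ f₂) (hV : ∀ x, |V x| ≤ v) (hα : 0 < α)
    (hf₁ : Measurable f₁) (hf₂ : Measurable f₂)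
    (hm : Integrable fun x => (1 + ‖x‖) ^ (-(1 + α)) * (u₁ x ^ 2 + u₂ x ^ 2))
    (hg : Integrable fun x => (1 + ‖x‖) ^ (-(1 + α)) * (gsq u₁ x + gsq u₂ x))
    (hF : Integrable fun x => f₁ x ^ 2 + f₂ x ^ 2) :
    (Integrable fun x => u₁ x ^ 2 + u₂ x ^ 2) ∧ Integrable fun x => gsq u₁ x + gsq u₂ x := by
  have hv : 0 ≤ v := (abs_nonneg _).trans (hV 0)
  have hs0 : 0 < |s| := abs_pos.mpr hs
  have cu₁ := S.c₁.continuous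
  have cu₂ := S.c₂.continuous
  have cm : Continuous fun x => u₁ x ^ 2 + u₂ x ^ 2 := by fun_prop
  have cg : Continuous fun x => gsq u₁ x + gsq u₂ x :=
    (continuous_gsq S.c₁).add (continuous_gsq S.c₂)
  set Φ := ∫ x, f₁ x ^ 2 + f₂ x ^ 2 with hΦ
  -- `B` bounds `∫ ψ |u|²` uniformly in the cut-off radius
  set B := 8 * Φ / |s| ^ 2 with hB
  have key : ∀ᶠ n : ℕ in Filter.atTop,
      ((Integrable fun x => smw α (n : ℝ) x * (u₁ x ^ 2 + u₂ x ^ 2)) ∧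
       Integrable fun x => smw α (n : ℝ) x * (gsq u₁ x + gsq u₂ x)) ∧
      ∫ x, smw α (n : ℝ) x * (u₁ x ^ 2 + u₂ x ^ 2) ≤ B ∧
      ∫ x, smw α (n : ℝ) x * (gsq u₁ x + gsq u₂ x) ≤ (3 + 2 * τ + 2 * v) * B + Φ / 2 := by
    have hev : ∀ᶠ n : ℕ in Filter.atTop,
        max (1 + α) (4 * (1 + α) * (1 + τ + v) / |s|) ≤ (n : ℝ) :=
      tendsto_natCast_atTop_atTop.eventually_ge_atTop _
    filter_upwards [hev] with n hn
    have hn1 : 1 + α ≤ (n : ℝ) := (le_max_left _ _).trans hn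
    have hn2 : 4 * (1 + α) * (1 + τ + v) / |s| ≤ (n : ℝ) := (le_max_right _ _).trans hn
    have hn0 : (1 : ℝ) ≤ n := by linarith
    have hnpos : (0 : ℝ) < n := by linarith
    set η := (1 + α) / (n : ℝ) with hη
    have hη0 : 0 ≤ η := by positivity
    have hη1 : η ≤ 1 := by rw [hη, div_le_one hnpos]; exact hn1
    have hη2 : η * (1 + τ + v) ≤ |s| / 4 := by
      rw [div_le_iff₀ hs0] at hn2
      rw [hη, div_mul_eq_mul_div, div_le_iff₀ hnpos]
      linarith
    have im := integrable_smw_mul (R := (n : ℝ)) hα hn0 cm hm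
    have ig := integrable_smw_mul (R := (n : ℝ)) hα hn0 cg hg
    have cψ := (contDiff_smw (d := d) (α := α) (R := (n : ℝ))).continuous
    have iF : Integrable fun x => smw α (n : ℝ) x * (f₁ x ^ 2 + f₂ x ^ 2) := by
      refine hF.mono (cψ.aestronglyMeasurable.mul hF.1) (Filter.Eventually.of_forall fun x => ?_)
      rw [norm_mul, Real.norm_of_nonneg (smw_pos x).le]
      exact mul_le_of_le_one_left (norm_nonneg _) (smw_le_one hα x)
    have hFle : ∫ x, smw α (n : ℝ) x * (f₁ x ^ 2 + f₂ x ^ 2) ≤ Φ :=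
      integral_mono iF hF fun x => mul_le_of_le_one_left (by positivity) (smw_le_one hα x)
    have h0 : ∀ x : Ed d, 0 ≤ smw α (n : ℝ) x := fun x => (smw_pos x).le
    have iq := integrable_mul_crossTerm cψ h0 cu₁ cu₂ hf₁ hf₂ im iF
    obtain ⟨e1, e2⟩ := S.energy hd hV hη0 contDiff_smw h0 (gsq_smw_le hα hnpos) im ig iq
    have q1 := integral_mul_crossTerm_le cψ h0 cu₁ cu₂ hf₁ hf₂ im iF (θ := |s| / 8) (by positivity)
    have q2 := integral_mul_crossTerm_le cψ h0 cu₁ cu₂ hf₁ hf₂ im iF (θ := 1) (by positivity)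
    have hX0 : 0 ≤ ∫ x, smw α (n : ℝ) x * (u₁ x ^ 2 + u₂ x ^ 2) :=
      integral_nonneg fun x => mul_nonneg (h0 x) (by positivity)
    have hY0 : 0 ≤ ∫ x, smw α (n : ℝ) x * (gsq u₁ x + gsq u₂ x) :=
      integral_nonneg fun x => mul_nonneg (h0 x) (add_nonneg (gsq_nonneg _ _) (gsq_nonneg _ _))
    have hQ0 : 0 ≤ ∫ x, smw α (n : ℝ) x * crossTerm u₁ u₂ f₁ f₂ x :=
      integral_nonneg fun x => mul_nonneg (h0 x) (crossTerm_nonneg _ _ _ _ _)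
    set X := ∫ x, smw α (n : ℝ) x * (u₁ x ^ 2 + u₂ x ^ 2)
    set Y := ∫ x, smw α (n : ℝ) x * (gsq u₁ x + gsq u₂ x)
    set Q := ∫ x, smw α (n : ℝ) x * crossTerm u₁ u₂ f₁ f₂ x
    set Φn := ∫ x, smw α (n : ℝ) x * (f₁ x ^ 2 + f₂ x ^ 2)
    have hY : Y ≤ (1 + 2 * τ + 2 * v) * X + 2 * Q := by nlinarith
    have hq1 : Q ≤ |s| / 8 * X + 2 / |s| * Φ := by
      have : Φn / (4 * (|s| / 8)) = 2 / |s| * Φn := by field_simp; ring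
      rw [this] at q1
      have : 2 / |s| * Φn ≤ 2 / |s| * Φ := by gcongr
      linarith
    have hXB : X ≤ B := by
      have h1 : |s| * X ≤ |s| / 4 * X + 2 * Q := by nlinarith
      have h2 : |s| / 2 * X ≤ 4 / |s| * Φ := by
        have : 4 / |s| * Φ = 2 * (2 / |s| * Φ) := by ring
        linarith
      have h3 : B = 2 / |s| * (4 / |s| * Φ) := by rw [hB]; field_simp; ring
      have h4 : X = 2 / |s| * (|s| / 2 * X) := by field_simp
      rw [h3, h4]
      gcongr
    refine ⟨⟨im, ig⟩, hXB, ?_⟩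
    have : (3 + 2 * τ + 2 * v) * X ≤ (3 + 2 * τ + 2 * v) * B := by gcongr
    linarith
  exact ⟨integrable_of_smw_bound cm (fun x => by positivity) B (key.mono fun n h => h.1.1)
      (key.mono fun n h => h.2.1),
    integrable_of_smw_bound cg (fun x => add_nonneg (gsq_nonneg _ _) (gsq_nonneg _ _)) _
      (key.mono fun n h => h.1.2) (key.mono fun n h => h.2.2)⟩

end

/-! ### The resolvent estimate for a small weight exponent -/

theorem one_le_wt {d : ℕ} {s : ℝ} (hs : 0 ≤ s) (x : Ed d) : 1 ≤ (1 + ‖x‖) ^ s :=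
  Real.one_le_rpow (by linarith [norm_nonneg x]) hs

theorem integrable_of_wt_mul {d : ℕ} {s : ℝ} (hs : 0 ≤ s) {F : Ed d → ℝ} (hF : Measurable F)
    (h : Integrable fun x => (1 + ‖x‖) ^ s * F x) : Integrable F := by
  refine h.mono hF.aestronglyMeasurable (Filter.Eventually.of_forall fun x => ?_)
  rw [norm_mul, Real.norm_of_nonneg (wt_pos _ x).le]
  exact le_mul_of_one_le_left (norm_nonneg _) (one_le_wt hs x)

/-- Testing the equation against the weight `smw α 1` bounds the weighted gradient by the weighted
mass. -/
theorem Sys.caccioppoli {d : ℕ} (hd : 2 ≤ d) {s τ v α : ℝ} {V u₁ u₂ f₁ f₂ : Ed d → ℝ}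
    (hτ : 0 ≤ τ) (S : Sys s τ V u₁ u₂ f₁ f₂) (hV : ∀ x, |V x| ≤ v) (hα : 0 < α) (hα1 : α ≤ 1 / 2)
    (hf₁ : Measurable f₁) (hf₂ : Measurable f₂)
    (hm : Integrable fun x => (1 + ‖x‖) ^ (-(1 + α)) * (u₁ x ^ 2 + u₂ x ^ 2))
    (hg : Integrable fun x => (1 + ‖x‖) ^ (-(1 + α)) * (gsq u₁ x + gsq u₂ x))
    (hF : Integrable fun x => (1 + ‖x‖) ^ (1 + α) * (f₁ x ^ 2 + f₂ x ^ 2)) :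
    ∫ x, (1 + ‖x‖) ^ (-(1 + α)) * (gsq u₁ x + gsq u₂ x) ≤
      8 * (2 + τ + v) * (∫ x, (1 + ‖x‖) ^ (-(1 + α)) * (u₁ x ^ 2 + u₂ x ^ 2))
        + ∫ x, (1 + ‖x‖) ^ (1 + α) * (f₁ x ^ 2 + f₂ x ^ 2) := by
  have hv : 0 ≤ v := (abs_nonneg _).trans (hV 0)
  have cu₁ := S.c₁.continuous
  have cu₂ := S.c₂.continuous
  have cm : Continuous fun x => u₁ x ^ 2 + u₂ x ^ 2 := by fun_prop
  have cg : Continuous fun x => gsq u₁ x + gsq u₂ x :=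
    (continuous_gsq S.c₁).add (continuous_gsq S.c₂)
  have mF : Measurable fun x => f₁ x ^ 2 + f₂ x ^ 2 := by fun_prop
  have im := integrable_smw_mul (R := 1) hα le_rfl cm hm
  have ig := integrable_smw_mul (R := 1) hα le_rfl cg hg
  have cψ := (contDiff_smw (d := d) (α := α) (R := 1)).continuous
  have h0 : ∀ x : Ed d, 0 ≤ smw α 1 x := fun x => (smw_pos x).le
  have hψ1 : ∀ x : Ed d, smw α 1 x ≤ (1 + ‖x‖) ^ (1 + α) := fun x =>
    (smw_le_one hα x).trans (one_le_wt (by linarith) x)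
  have iF : Integrable fun x => smw α 1 x * (f₁ x ^ 2 + f₂ x ^ 2) := by
    refine hF.mono (cψ.measurable.mul mF).aestronglyMeasurable
      (Filter.Eventually.of_forall fun x => ?_)
    rw [norm_mul, norm_mul, Real.norm_of_nonneg (h0 x), Real.norm_of_nonneg (wt_pos _ x).le]
    exact mul_le_mul_of_nonneg_right (hψ1 x) (norm_nonneg _)
  have hFle : ∫ x, smw α 1 x * (f₁ x ^ 2 + f₂ x ^ 2)
      ≤ ∫ x, (1 + ‖x‖) ^ (1 + α) * (f₁ x ^ 2 + f₂ x ^ 2) :=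
    integral_mono iF hF fun x => mul_le_mul_of_nonneg_right (hψ1 x) (by positivity)
  have iq := integrable_mul_crossTerm cψ h0 cu₁ cu₂ hf₁ hf₂ im iF
  obtain ⟨e1, -⟩ := S.energy hd hV (η := (1 + α) / 1) (by positivity) contDiff_smw h0
    (gsq_smw_le hα one_pos) im ig iq
  have q := integral_mul_crossTerm_le cψ h0 cu₁ cu₂ hf₁ hf₂ im iF (θ := 1) one_pos
  have hX0 : 0 ≤ ∫ x, smw α 1 x * (u₁ x ^ 2 + u₂ x ^ 2) :=
    integral_nonneg fun x => mul_nonneg (h0 x) (by positivity)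
  have hY0 : 0 ≤ ∫ x, smw α 1 x * (gsq u₁ x + gsq u₂ x) :=
    integral_nonneg fun x => mul_nonneg (h0 x) (add_nonneg (gsq_nonneg _ _) (gsq_nonneg _ _))
  have hYle : ∫ x, (1 + ‖x‖) ^ (-(1 + α)) * (gsq u₁ x + gsq u₂ x)
      ≤ ∫ x, smw α 1 x * (gsq u₁ x + gsq u₂ x) :=
    integral_mono hg ig fun x => mul_le_mul_of_nonneg_right (le_smw_one hα x)
      (add_nonneg (gsq_nonneg _ _) (gsq_nonneg _ _))
  have hXle : ∫ x, smw α 1 x * (u₁ x ^ 2 + u₂ x ^ 2)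
      ≤ 2 * ∫ x, (1 + ‖x‖) ^ (-(1 + α)) * (u₁ x ^ 2 + u₂ x ^ 2) := by
    rw [← integral_const_mul]
    refine integral_mono im (hm.const_mul 2) fun x => ?_
    have h2 : ((2 : ℝ) * 1 ^ 2) ^ ((1 + α) / 2) ≤ 2 := by
      rw [one_pow, mul_one]
      calc (2 : ℝ) ^ ((1 + α) / 2) ≤ 2 ^ (1 : ℝ) :=
            Real.rpow_le_rpow_of_exponent_le (by norm_num) (by linarith)
        _ = 2 := Real.rpow_one 2
    have h3 := (smw_le hα le_rfl x).trans (mul_le_mul_of_nonneg_right h2 (wt_pos (-(1 + α)) x).le)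
    have := mul_le_mul_of_nonneg_right h3 (show 0 ≤ u₁ x ^ 2 + u₂ x ^ 2 by positivity)
    simpa only [mul_assoc] using this
  set X := ∫ x, smw α 1 x * (u₁ x ^ 2 + u₂ x ^ 2)
  set Y := ∫ x, smw α 1 x * (gsq u₁ x + gsq u₂ x)
  set Q := ∫ x, smw α 1 x * crossTerm u₁ u₂ f₁ f₂ x
  have hη : (1 + α) / 1 / 2 * (X + Y) ≤ 3 / 4 * (X + Y) :=
    mul_le_mul_of_nonneg_right (by linarith) (by linarith)
  have h1 : Y ≤ 4 * (2 + τ + v) * X + ∫ x, smw α 1 x * (f₁ x ^ 2 + f₂ x ^ 2) := by linarith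
  have h2 : 4 * (2 + τ + v) * X ≤ 4 * (2 + τ + v) *
    (2 * ∫ x, (1 + ‖x‖) ^ (-(1 + α)) * (u₁ x ^ 2 + u₂ x ^ 2)) := by gcongr
  linarith

theorem integral_le_wt {d : ℕ} {s : ℝ} (hs : 0 ≤ s) {F : Ed d → ℝ} (hF : Measurable F)
    (h0 : ∀ x, 0 ≤ F x) (h : Integrable fun x => (1 + ‖x‖) ^ s * F x) :
    ∫ x, F x ≤ ∫ x, (1 + ‖x‖) ^ s * F x :=
  integral_mono (integrable_of_wt_mul hs hF h) h fun x =>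
    le_mul_of_one_le_left (h0 x) (one_le_wt hs x)

/-- The resolvent estimate for `H¹` solutions and a small weight exponent. -/
theorem real_estimate {d : ℕ} (hd : 2 ≤ d) {τ₀ α a γ : ℝ} (hτ₀ : 0 < τ₀) (hα : 0 < α)
    (hα1 : α ≤ 1 / 2) (hαγ : α ≤ γ / 2) (ha : 0 < a) (hγ : 0 < γ) :
    ∃ C : ℝ, 0 < C ∧ ∀ (τ s : ℝ), τ₀ ≤ τ → ∀ (V₁ V₂ u₁ u₂ f₁ f₂ : Ed d → ℝ), ContDiff ℝ 1 V₁ →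
      (∀ x, |V₁ x| ≤ a * (1 + ‖x‖) ^ (-γ)) →
      (∀ x, |V₂ x| ≤ a * (1 + ‖x‖) ^ (-γ - 1)) →
      (∀ x, eul V₁ x / ‖x‖ ≤ a * (1 + ‖x‖) ^ (-γ - 1)) →
      (∀ x, |V₁ x + V₂ x| ≤ 2 * a) →
      Sys s τ (fun x => V₁ x + V₂ x) u₁ u₂ f₁ f₂ → Measurable f₁ → Measurable f₂ →
      Integrable (fun x => u₁ x ^ 2 + u₂ x ^ 2) → Integrable (fun x => gsq u₁ x + gsq u₂ x) →
      Integrable (fun x => (1 + ‖x‖) ^ (1 + α) * (f₁ x ^ 2 + f₂ x ^ 2)) →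
      (∫ x, (1 + ‖x‖) ^ (-(1 + α)) * (gsq u₁ x + gsq u₂ x))
        + τ * (∫ x, (1 + ‖x‖) ^ (-(1 + α)) * (u₁ x ^ 2 + u₂ x ^ 2))
        ≤ C * ∫ x, (1 + ‖x‖) ^ (1 + α) * (f₁ x ^ 2 + f₂ x ^ 2) := by
  obtain ⟨P⟩ := Prm.exists hτ₀ hα hα1 hαγ ha
  obtain ⟨κ, M₂, M₃, hκ, hM₂, hM₃, hcar⟩ := P.carleman hγ hd
  set M₄ := M₃ * (3 + 2 * a / τ₀) with hM₄
  have hM₄0 : 0 < M₄ := by positivity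
  set C₁ := 1 / τ₀ + 2 / κ * (M₂ + M₄ ^ 2 / (2 * κ)) with hC₁
  have hC₁0 : 0 < C₁ := by positivity
  refine ⟨(1 + 8 * ((2 + 2 * a) / τ₀ + 1)) * C₁ + 1, by positivity, ?_⟩
  intro τ s hτ V₁ V₂ u₁ u₂ f₁ f₂ hV hV1 hV2 hVr hVb S hf₁ hf₂ hm hg hF
  have hτ0 : 0 < τ := hτ₀.trans_le hτ
  have cu₁ := S.c₁.continuous
  have cu₂ := S.c₂.continuous
  have mF : Measurable fun x => f₁ x ^ 2 + f₂ x ^ 2 := by fun_prop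
  have hF1 := integrable_of_wt_mul (by linarith) mF hF
  have hFle := integral_le_wt (by linarith) mF (fun x => by positivity) hF
  have hwm := integrable_wt_mul (s := -(1 + α)) (by linarith) hm
  have hwg := integrable_wt_mul (s := -(1 + α)) (by linarith) hg
  have hwm0 : 0 ≤ ∫ x, (1 + ‖x‖) ^ (-(1 + α)) * (u₁ x ^ 2 + u₂ x ^ 2) :=
    integral_nonneg fun x => mul_nonneg (wt_pos _ x).le (by positivity)
  have hwmle : ∫ x, (1 + ‖x‖) ^ (-(1 + α)) * (u₁ x ^ 2 + u₂ x ^ 2) ≤ ∫ x, u₁ x ^ 2 + u₂ x ^ 2 :=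
    integral_mono hwm hm fun x => mul_le_of_le_one_left (by positivity)
      (wt_le_one (by linarith) x)
  have hΦ0 : 0 ≤ ∫ x, (1 + ‖x‖) ^ (1 + α) * (f₁ x ^ 2 + f₂ x ^ 2) :=
    integral_nonneg fun x => mul_nonneg (wt_pos _ x).le (by positivity)
  -- the energy identities with the constant weight
  have one_m : Integrable fun x => (1 : ℝ) * (u₁ x ^ 2 + u₂ x ^ 2) := by simpa only [one_mul] using hm
  have one_g : Integrable fun x => (1 : ℝ) * (gsq u₁ x + gsq u₂ x) := by simpa only [one_mul] using hg
  have one_F : Integrable fun x => (1 : ℝ) * (f₁ x ^ 2 + f₂ x ^ 2) := by simpa only [one_mul] using hF1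
  have one_q := integrable_mul_crossTerm (ψ := fun _ : Ed d => (1 : ℝ)) continuous_const
    (fun _ => zero_le_one) cu₁ cu₂ hf₁ hf₂ one_m one_F
  obtain ⟨e1, e2⟩ := S.energy hd hVb (ψ := fun _ => (1 : ℝ)) le_rfl contDiff_const
    (fun _ => zero_le_one) (fun x => by simp [gsq, dp]) one_m one_g one_q
  have hq := fun θ (hθ : 0 < θ) => integral_mul_crossTerm_le (ψ := fun _ : Ed d => (1 : ℝ))
    continuous_const (fun _ => zero_le_one) cu₁ cu₂ hf₁ hf₂ one_m one_F (θ := θ) hθ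
  simp only [one_mul] at e1 e2 hq one_q
  have hm0 : 0 ≤ ∫ x, u₁ x ^ 2 + u₂ x ^ 2 := integral_nonneg fun x => by positivity
  have hI0 : 0 ≤ ∫ x, crossTerm u₁ u₂ f₁ f₂ x := integral_nonneg fun x => crossTerm_nonneg _ _ _ _ _
  have hA : τ * (∫ x, (1 + ‖x‖) ^ (-(1 + α)) * (u₁ x ^ 2 + u₂ x ^ 2))
      ≤ C₁ * ∫ x, (1 + ‖x‖) ^ (1 + α) * (f₁ x ^ 2 + f₂ x ^ 2) := by
    rcases le_total τ |s| with hs | hs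
    · have hs0 : 0 < |s| := hτ0.trans_le hs
      have h1 := hq (|s| / 2) (by positivity)
      set m := ∫ x, u₁ x ^ 2 + u₂ x ^ 2
      set Φ := ∫ x, (1 + ‖x‖) ^ (1 + α) * (f₁ x ^ 2 + f₂ x ^ 2)
      set Φ₀ := ∫ x, f₁ x ^ 2 + f₂ x ^ 2
      have h2 : Φ₀ / (4 * (|s| / 2)) = Φ₀ / |s| / 2 := by
        rw [show 4 * (|s| / 2) = |s| * 2 by ring, div_div]
      rw [h2] at h1
      have h3 : |s| * m ≤ Φ₀ / |s| := by linarith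
      calc τ * (∫ x, (1 + ‖x‖) ^ (-(1 + α)) * (u₁ x ^ 2 + u₂ x ^ 2)) ≤ |s| * m := by gcongr
        _ ≤ Φ₀ / |s| := h3
        _ ≤ Φ / τ₀ := by gcongr; exact hτ.trans hs
        _ = 1 / τ₀ * Φ := by ring
        _ ≤ C₁ * Φ := by
          gcongr
          rw [hC₁]
          have : 0 ≤ 2 / κ * (M₂ + M₄ ^ 2 / (2 * κ)) := by positivity
          linarith
    · have hc := hcar τ s hτ V₁ V₂ u₁ u₂ f₁ f₂ hV S.c₁ S.c₂ hV1 hV2 hVr S.l₁ S.l₂ hm hg hF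
      have hsτ : 0 < √τ := Real.sqrt_pos.mpr hτ0
      have hsq : √τ * √τ = τ := Real.mul_self_sqrt hτ0.le
      -- absorb `√τ |u| |f|` with an `x`-dependent parameter
      have hpt : M₄ * √τ * (∫ x, crossTerm u₁ u₂ f₁ f₂ x) ≤
          κ / 2 * τ * (∫ x, (1 + ‖x‖) ^ (-(1 + α)) * (u₁ x ^ 2 + u₂ x ^ 2))
          + M₄ ^ 2 / (2 * κ) * ∫ x, (1 + ‖x‖) ^ (1 + α) * (f₁ x ^ 2 + f₂ x ^ 2) := by
        rw [← integral_const_mul, ← integral_const_mul, ← integral_const_mul,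
          ← integral_add (hwm.const_mul _) (hF.const_mul _)]
        refine integral_mono (one_q.const_mul _) ((hwm.const_mul _).add (hF.const_mul _)) fun x => ?_
        have hρ := wt_pos (-(1 + α)) x
        have hinv : (1 + ‖x‖) ^ (1 + α) = ((1 + ‖x‖) ^ (-(1 + α)))⁻¹ := by
          rw [Real.rpow_neg (by positivity), inv_inv]
        simp only [hinv]
        set ρ := (1 + ‖x‖) ^ (-(1 + α))
        have h := mul_le_mul_of_nonneg_left
          (crossTerm_le u₁ u₂ f₁ f₂ x (θ := κ * √τ * ρ / (2 * M₄)) (by positivity))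
          (show 0 ≤ M₄ * √τ by positivity)
        refine h.trans (le_of_eq ?_)
        clear h
        generalize √τ = r at hsq hsτ ⊢
        rw [← hsq]
        field_simp
        ring
      set m := ∫ x, u₁ x ^ 2 + u₂ x ^ 2
      set g := ∫ x, gsq u₁ x + gsq u₂ x
      set I := ∫ x, crossTerm u₁ u₂ f₁ f₂ x
      set X := ∫ x, (1 + ‖x‖) ^ (-(1 + α)) * (u₁ x ^ 2 + u₂ x ^ 2)
      set Φ := ∫ x, (1 + ‖x‖) ^ (1 + α) * (f₁ x ^ 2 + f₂ x ^ 2)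
      have hsm : |s| * m ≤ I := by linarith
      have hsg : |s| * g ≤ (2 + 2 * a / τ₀) * τ * I := by
        have h1 : |s| * g ≤ |s| * ((τ + 2 * a) * m + I) := by gcongr; linarith
        have h2 : (τ + 2 * a) * (|s| * m) ≤ (τ + 2 * a) * I := by gcongr
        have h3 : |s| * I ≤ τ * I := by gcongr
        have h4 : 2 * a * I ≤ 2 * a / τ₀ * τ * I := by
          refine mul_le_mul_of_nonneg_right ?_ hI0
          rw [div_mul_eq_mul_div, le_div_iff₀ hτ₀]
          gcongr
        linarith
      have hsum : |s| * M₃ * (√τ * m + g / √τ) ≤ M₄ * √τ * I := by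
        have h1 : |s| * g / √τ ≤ (2 + 2 * a / τ₀) * √τ * I := by
          rw [div_le_iff₀ hsτ]
          calc |s| * g ≤ (2 + 2 * a / τ₀) * τ * I := hsg
            _ = (2 + 2 * a / τ₀) * √τ * I * √τ := by linear_combination -(2 + 2 * a / τ₀) * I * hsq
        have h2 : √τ * (|s| * m) ≤ √τ * I := by gcongr
        have h3 : |s| * M₃ * (√τ * m + g / √τ) = M₃ * (√τ * (|s| * m) + |s| * g / √τ) := by ring
        rw [h3, hM₄, mul_assoc, mul_assoc]
        apply mul_le_mul_of_nonneg_left _ hM₃.le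
        linarith
      have h5 : κ / 2 * (τ * X) ≤ (M₂ + M₄ ^ 2 / (2 * κ)) * Φ := by linarith
      calc τ * X = 2 / κ * (κ / 2 * (τ * X)) := by field_simp
        _ ≤ 2 / κ * ((M₂ + M₄ ^ 2 / (2 * κ)) * Φ) := by gcongr
        _ = 2 / κ * (M₂ + M₄ ^ 2 / (2 * κ)) * Φ := by ring
        _ ≤ C₁ * Φ := by
          gcongr
          rw [hC₁]
          have : 0 ≤ 1 / τ₀ := by positivity
          linarith
  have hB := S.caccioppoli hd hτ0.le hVb hα hα1 hf₁ hf₂ hwm hwg hF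
  set X := ∫ x, (1 + ‖x‖) ^ (-(1 + α)) * (u₁ x ^ 2 + u₂ x ^ 2)
  set Φ := ∫ x, (1 + ‖x‖) ^ (1 + α) * (f₁ x ^ 2 + f₂ x ^ 2)
  have h1 : 8 * (2 + τ + 2 * a) * X ≤ 8 * ((2 + 2 * a) / τ₀ + 1) * (τ * X) := by
    have : (2 + τ + 2 * a) ≤ ((2 + 2 * a) / τ₀ + 1) * τ := by
      have : 2 + 2 * a ≤ (2 + 2 * a) / τ₀ * τ := by
        rw [div_mul_eq_mul_div, le_div_iff₀ hτ₀]
        gcongr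
      linarith
    have := mul_le_mul_of_nonneg_right this hwm0
    linarith
  have h2 : (1 + 8 * ((2 + 2 * a) / τ₀ + 1)) * (τ * X)
      ≤ (1 + 8 * ((2 + 2 * a) / τ₀ + 1)) * (C₁ * Φ) := by gcongr
  linarith

/-! ### From complex solutions to real systems, and conclusion -/

theorem dp_re {d : ℕ} {u : Ed d → ℂ} {x : Ed d} (hu : DifferentiableAt ℝ u x) (i : Fin d) :
    dp i (fun y => (u y).re) x = (fderiv ℝ u x (bv i)).re := by
  have h : HasFDerivAt (fun y => (u y).re) _ x :=
    (Complex.reCLM.hasFDerivAt (x := u x)).comp x hu.hasFDerivAt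
  unfold dp
  rw [h.fderiv]; rfl

theorem dp_im {d : ℕ} {u : Ed d → ℂ} {x : Ed d} (hu : DifferentiableAt ℝ u x) (i : Fin d) :
    dp i (fun y => (u y).im) x = (fderiv ℝ u x (bv i)).im := by
  have h : HasFDerivAt (fun y => (u y).im) _ x :=
    (Complex.imCLM.hasFDerivAt (x := u x)).comp x hu.hasFDerivAt
  unfold dp
  rw [h.fderiv]; rfl

theorem contDiff_pd {d : ℕ} {u : Ed d → ℂ} (hu : ContDiff ℝ 2 u) (i : Fin d) :
    ContDiff ℝ 1 (pd u i) :=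
  (hu.fderiv_right (m := 1) (by norm_num)).clm_apply contDiff_const

theorem lapr_re {d : ℕ} {u : Ed d → ℂ} (hu : ContDiff ℝ 2 u) (x : Ed d) :
    lapr (fun y => (u y).re) x = (lap u x).re := by
  unfold lapr lap
  rw [Complex.re_sum]
  refine Finset.sum_congr rfl fun i _ => ?_
  have e : dp i (fun y => (u y).re) = fun y => (pd u i y).re :=
    funext fun y => dp_re (hu.differentiable (by norm_num) y) i
  rw [e]
  exact dp_re ((contDiff_pd hu i).differentiable (by norm_num) x) i

theorem lapr_im {d : ℕ} {u : Ed d → ℂ} (hu : ContDiff ℝ 2 u) (x : Ed d) :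
    lapr (fun y => (u y).im) x = (lap u x).im := by
  unfold lapr lap
  rw [Complex.im_sum]
  refine Finset.sum_congr rfl fun i _ => ?_
  have e : dp i (fun y => (u y).im) = fun y => (pd u i y).im :=
    funext fun y => dp_im (hu.differentiable (by norm_num) y) i
  rw [e]
  exact dp_im ((contDiff_pd hu i).differentiable (by norm_num) x) i

theorem continuous_lapr {d : ℕ} {v : Ed d → ℝ} (hv : ContDiff ℝ 2 v) : Continuous (lapr v) := by
  unfold lapr
  refine continuous_finsetSum _ fun i _ => ?_
  have h1 : ContDiff ℝ 1 (dp i v) :=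
    (hv.fderiv_right (m := 1) (by norm_num)).clm_apply contDiff_const
  exact ((h1.fderiv_right (m := 0) (by norm_num)).clm_apply contDiff_const).continuous

theorem eul_eq_fderiv {d : ℕ} (v : Ed d → ℝ) (x : Ed d) : eul v x = fderiv ℝ v x x := by
  have hx : x = ∑ j, x j • (bv j : Ed d) := by
    ext k
    simp [bv, Pi.single_apply]
  unfold eul dp
  conv_rhs => rw [hx, map_sum]
  simp only [map_smul, smul_eq_mul, ← hx]

theorem ofReal_norm_sq (z : ℂ) :
    (‖z‖₊ : ℝ≥0∞) ^ 2 = ENNReal.ofReal (z.re ^ 2 + z.im ^ 2) := by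
  rw [← enorm_eq_nnnorm, ← ofReal_norm, ← ENNReal.ofReal_pow (norm_nonneg _), Complex.sq_norm,
    Complex.normSq_apply]
  ring_nf

theorem usq_eq {d : ℕ} (u : Ed d → ℂ) (x : Ed d) :
    usq u x = ENNReal.ofReal ((u x).re ^ 2 + (u x).im ^ 2) := ofReal_norm_sq _

theorem gradSq_eq {d : ℕ} {u : Ed d → ℂ} (hu : ContDiff ℝ 2 u) (x : Ed d) :
    gradSq u x = ENNReal.ofReal (gsq (fun y => (u y).re) x + gsq (fun y => (u y).im) x) := by
  have hx := hu.differentiable (by norm_num) x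
  unfold gradSq gsq
  rw [← Finset.sum_add_distrib, ENNReal.ofReal_sum_of_nonneg fun i _ => by positivity]
  refine Finset.sum_congr rfl fun i _ => ?_
  rw [ofReal_norm_sq, dp_re hx, dp_im hx]
  rfl

/-- Minimising `|g + t u|` over `t ∈ [-B, B]`: the minimiser is the truncation of
`-Re (g ū) / |u|²`. -/
theorem clamp_min (g₁ g₂ u₁ u₂ B V : ℝ) (hV : |V| ≤ B) :
    |max (-B) (min B (-(g₁ * u₁ + g₂ * u₂) / (u₁ ^ 2 + u₂ ^ 2)))| ≤ B ∧
    (g₁ + max (-B) (min B (-(g₁ * u₁ + g₂ * u₂) / (u₁ ^ 2 + u₂ ^ 2))) * u₁) ^ 2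
      + (g₂ + max (-B) (min B (-(g₁ * u₁ + g₂ * u₂) / (u₁ ^ 2 + u₂ ^ 2))) * u₂) ^ 2
      ≤ (g₁ + V * u₁) ^ 2 + (g₂ + V * u₂) ^ 2 := by
  have hB : 0 ≤ B := (abs_nonneg _).trans hV
  obtain ⟨hV1, hV2⟩ := abs_le.mp hV
  set t := -(g₁ * u₁ + g₂ * u₂) / (u₁ ^ 2 + u₂ ^ 2) with ht
  refine ⟨abs_le.mpr ⟨le_max_left _ _, max_le (by linarith) (min_le_left _ _)⟩, ?_⟩
  have hm : 0 ≤ u₁ ^ 2 + u₂ ^ 2 := by positivity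
  have hp : g₁ * u₁ + g₂ * u₂ = -t * (u₁ ^ 2 + u₂ ^ 2) := by
    rcases hm.eq_or_lt with h | h
    · have h1 : u₁ = 0 := by nlinarith [sq_nonneg u₁, sq_nonneg u₂]
      have h2 : u₂ = 0 := by nlinarith [sq_nonneg u₁, sq_nonneg u₂]
      simp [h1, h2]
    · rw [ht]; field_simp
  set W := max (-B) (min B t) with hW
  have key : 0 ≤ (V - W) * ((V - t) + (W - t)) := by
    rcases le_total t B with h1 | h1
    · rw [min_eq_right h1] at hW
      rcases le_total (-B) t with h2 | h2
      · rw [max_eq_right h2] at hW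
        rw [hW]; nlinarith [sq_nonneg (V - t)]
      · rw [max_eq_left h2] at hW
        rw [hW]; exact mul_nonneg (by linarith) (by linarith)
    · rw [min_eq_left h1, max_eq_right (by linarith)] at hW
      rw [hW]; exact mul_nonneg_of_nonpos_of_nonpos (by linarith) (by linarith)
  have h3 := mul_nonneg hm key
  have e : (g₁ + V * u₁) ^ 2 + (g₂ + V * u₂) ^ 2 - ((g₁ + W * u₁) ^ 2 + (g₂ + W * u₂) ^ 2)
      = (u₁ ^ 2 + u₂ ^ 2) * ((V - W) * ((V - t) + (W - t))) := by
    linear_combination 2 * (V - W) * hp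
  linarith

/-- Finiteness of a weighted `lintegral` as Bochner integrability. -/
theorem integrable_wt_of_lintegral {d : ℕ} {g : Ed d → ℝ} (hg : Measurable g) (h0 : ∀ x, 0 ≤ g x)
    (s : ℝ) (h : ∫⁻ x, ENNReal.ofReal (g x) * ENNReal.ofReal ((1 + ‖x‖) ^ s) < ⊤) :
    Integrable fun x => (1 + ‖x‖) ^ s * g x := by
  refine ⟨((continuous_wt s).measurable.mul hg).aestronglyMeasurable, ?_⟩
  rw [hasFiniteIntegral_iff_ofReal
    (Filter.Eventually.of_forall fun x => mul_nonneg (wt_pos s x).le (h0 x))]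
  refine lt_of_eq_of_lt (lintegral_congr fun x => ?_) h
  rw [ENNReal.ofReal_mul (wt_pos s x).le, mul_comm]

theorem lintegral_wt_eq {d : ℕ} {g : Ed d → ℝ} (h0 : ∀ x, 0 ≤ g x) {s : ℝ}
    (h : Integrable fun x => (1 + ‖x‖) ^ s * g x) :
    ∫⁻ x, ENNReal.ofReal (g x) * ENNReal.ofReal ((1 + ‖x‖) ^ s)
      = ENNReal.ofReal (∫ x, (1 + ‖x‖) ^ s * g x) := by
  rw [ofReal_integral_eq_lintegral_ofReal h
    (Filter.Eventually.of_forall fun x => mul_nonneg (wt_pos s x).le (h0 x))]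
  refine lintegral_congr fun x => ?_
  rw [ENNReal.ofReal_mul (wt_pos s x).le, mul_comm]

theorem lintegral_wt_mono {d : ℕ} {g h : Ed d → ℝ} (hgh : ∀ x, g x ≤ h x) {s t : ℝ} (hst : s ≤ t) :
    ∫⁻ x, ENNReal.ofReal (g x) * ENNReal.ofReal ((1 + ‖x‖) ^ s)
      ≤ ∫⁻ x, ENNReal.ofReal (h x) * ENNReal.ofReal ((1 + ‖x‖) ^ t) := by
  refine lintegral_mono fun x => mul_le_mul' (ENNReal.ofReal_le_ofReal (hgh x))
    (ENNReal.ofReal_le_ofReal (Real.rpow_le_rpow_of_exponent_le ?_ hst))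
  linarith [norm_nonneg x]

/-- weighted resolvent estimate for long range potentials,
uniform in `ε ≠ 0` and `τ ≥ τ₀` (Theorem 4.5 of the paper). -/
theorem stmt_10 (d : ℕ) (hd : 2 ≤ d) (τ₀ α a γ : ℝ)
    (hτ₀ : 0 < τ₀) (hα : 0 < α) (ha : 0 < a) (hγ : 0 < γ) :
    ∃ C : ℝ, 0 < C ∧
      ∀ (V₁ V₂ : Ed d → ℝ), ContDiff ℝ 1 V₁ →
      (∀ x : Ed d, |V₁ x| ≤ a * (1 + ‖x‖) ^ (-γ)) →
      (∀ x : Ed d, |V₂ x| ≤ a * (1 + ‖x‖) ^ (-γ - 1)) →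
      (∀ x : Ed d, radialDeriv V₁ x ≤ a * (1 + ‖x‖) ^ (-γ - 1)) →
      ∀ (ε τ : ℝ), ε ≠ 0 → τ₀ ≤ τ →
      ∀ (σ : ℝ), σ = 1 ∨ σ = -1 →
      ∀ (u f : Ed d → ℂ), ContDiff ℝ 2 u →
      (∫⁻ x, usq u x * ENNReal.ofReal ((1 + ‖x‖) ^ (-(1 + α)))) < ⊤ →
      (∫⁻ x, gradSq u x * ENNReal.ofReal ((1 + ‖x‖) ^ (-(1 + α)))) < ⊤ →
      (∫⁻ x, usq f x * ENNReal.ofReal ((1 + ‖x‖) ^ (1 + α))) < ⊤ →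
      (∀ x, -lap u x + ((V₁ x : ℂ) + (V₂ x : ℂ)) * u x
        + (σ : ℂ) * ((ε : ℂ) * Complex.I) * u x - (τ : ℂ) * u x = f x) →
      (∫⁻ x, gradSq u x * ENNReal.ofReal ((1 + ‖x‖) ^ (-(1 + α))))
        + ENNReal.ofReal τ * (∫⁻ x, usq u x * ENNReal.ofReal ((1 + ‖x‖) ^ (-(1 + α))))
      ≤ ENNReal.ofReal C *
          (∫⁻ x, usq f x * ENNReal.ofReal ((1 + ‖x‖) ^ (1 + α))) := by
  -- a smaller exponent gives a stronger estimate for `H¹` solutions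
  set β := min α (min (1 / 2) (γ / 2)) with hβdef
  have hβ : 0 < β := lt_min hα (lt_min (by norm_num) (by linarith))
  have hβα : β ≤ α := min_le_left _ _
  have hβ1 : β ≤ 1 / 2 := (min_le_right _ _).trans (min_le_left _ _)
  have hβγ : β ≤ γ / 2 := (min_le_right _ _).trans (min_le_right _ _)
  obtain ⟨C, hC, hest⟩ := real_estimate hd hτ₀ hβ hβ1 hβγ ha hγ
  refine ⟨C, hC, ?_⟩
  intro V₁ V₂ hV hV1 hV2 hVr ε τ hε hτ σ hσ u f hu hmfin hgfin hffin heq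
  have hτ0 : 0 < τ := hτ₀.trans_le hτ
  set s := σ * ε with hs
  have hs0 : s ≠ 0 := mul_ne_zero (by rcases hσ with rfl | rfl <;> norm_num) hε
  set u₁ : Ed d → ℝ := fun x => (u x).re with hu₁
  set u₂ : Ed d → ℝ := fun x => (u x).im with hu₂
  have c₁ : ContDiff ℝ 2 u₁ := Complex.reCLM.contDiff.comp hu
  have c₂ : ContDiff ℝ 2 u₂ := Complex.imCLM.contDiff.comp hu
  -- the equation without the potential `V₂`
  set g₁ : Ed d → ℝ := fun x => -lapr u₁ x + (V₁ x - τ) * u₁ x - s * u₂ x with hg₁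
  set g₂ : Ed d → ℝ := fun x => -lapr u₂ x + (V₁ x - τ) * u₂ x + s * u₁ x with hg₂
  have hfre : ∀ x, (f x).re = g₁ x + V₂ x * u₁ x := fun x => by
    rw [← heq x, hg₁]
    simp only [hu₁, hu₂, lapr_re hu]
    simp [Complex.add_re, Complex.mul_re]
    ring
  have hfim : ∀ x, (f x).im = g₂ x + V₂ x * u₂ x := fun x => by
    rw [← heq x, hg₂]
    simp only [hu₁, hu₂, lapr_im hu]
    simp [Complex.add_im, Complex.mul_im]
    ring
  -- `V₂` need not be measurable: replace it by the admissible potential minimising `|f|` pointwise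
  set W : Ed d → ℝ := fun x => max (-(a * (1 + ‖x‖) ^ (-γ - 1))) (min (a * (1 + ‖x‖) ^ (-γ - 1))
    (-(g₁ x * u₁ x + g₂ x * u₂ x) / (u₁ x ^ 2 + u₂ x ^ 2))) with hWdef
  have hW : ∀ x, |W x| ≤ a * (1 + ‖x‖) ^ (-γ - 1) ∧
      (g₁ x + W x * u₁ x) ^ 2 + (g₂ x + W x * u₂ x) ^ 2
        ≤ (g₁ x + V₂ x * u₁ x) ^ 2 + (g₂ x + V₂ x * u₂ x) ^ 2 :=
    fun x => clamp_min (g₁ x) (g₂ x) (u₁ x) (u₂ x) _ (V₂ x) (hV2 x)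
  set f₁ : Ed d → ℝ := fun x => g₁ x + W x * u₁ x with hf₁
  set f₂ : Ed d → ℝ := fun x => g₂ x + W x * u₂ x with hf₂
  have hFle : ∀ x, f₁ x ^ 2 + f₂ x ^ 2 ≤ (f x).re ^ 2 + (f x).im ^ 2 := fun x => by
    rw [hfre, hfim]; exact (hW x).2
  have mu₁ := c₁.continuous.measurable
  have mu₂ := c₂.continuous.measurable
  have mg₁ : Measurable g₁ := by
    have := (continuous_lapr c₁).measurable
    have := hV.continuous.measurable
    fun_prop
  have mg₂ : Measurable g₂ := by
    have := (continuous_lapr c₂).measurable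
    have := hV.continuous.measurable
    fun_prop
  have mW : Measurable W := by
    have := (continuous_wt (d := d) (-γ - 1)).measurable
    fun_prop
  have mf₁ : Measurable f₁ := by fun_prop
  have mf₂ : Measurable f₂ := by fun_prop
  have mF : Measurable fun x => f₁ x ^ 2 + f₂ x ^ 2 := by fun_prop
  have hF0 : ∀ x, 0 ≤ f₁ x ^ 2 + f₂ x ^ 2 := fun x => by positivity
  have hm0 : ∀ x, 0 ≤ u₁ x ^ 2 + u₂ x ^ 2 := fun x => by positivity
  have hg0 : ∀ x, 0 ≤ gsq u₁ x + gsq u₂ x := fun x => add_nonneg (gsq_nonneg _ _) (gsq_nonneg _ _)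
  have S : Sys s τ (fun x => V₁ x + W x) u₁ u₂ f₁ f₂ :=
    ⟨c₁, c₂, fun x => by simp only [hf₁, hg₁]; ring, fun x => by simp only [hf₂, hg₂]; ring⟩
  have hVb : ∀ x, |V₁ x + W x| ≤ 2 * a := fun x => by
    have h1 := wt_le_one (s := -γ) (by linarith) x
    have h2 := wt_le_one (s := -γ - 1) (by linarith) x
    have h3 := mul_le_of_le_one_right ha.le h1
    have h4 := mul_le_of_le_one_right ha.le h2
    have := abs_add_le (V₁ x) (W x)
    linarith [hV1 x, (hW x).1]
  simp only [usq_eq, gradSq_eq hu] at hmfin hgfin hffin ⊢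
  have mm : Measurable fun x => u₁ x ^ 2 + u₂ x ^ 2 := by fun_prop
  have mg : Measurable fun x => gsq u₁ x + gsq u₂ x :=
    ((continuous_gsq c₁).add (continuous_gsq c₂)).measurable
  have im := integrable_wt_of_lintegral mm hm0 _ hmfin
  have ig := integrable_wt_of_lintegral mg hg0 _ hgfin
  have hflt := (lintegral_wt_mono hFle (le_refl (1 + α))).trans_lt hffin
  have hfltβ := (lintegral_wt_mono hFle (add_le_add_right hβα 1)).trans_lt hffin
  have iF := integrable_of_wt_mul (by linarith) mF (integrable_wt_of_lintegral mF hF0 _ hflt)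
  have iFβ := integrable_wt_of_lintegral mF hF0 _ hfltβ
  obtain ⟨hm, hg⟩ := S.h1 hd hs0 hτ0 hVb hα mf₁ mf₂ im ig iF
  have hVr' : ∀ x, eul V₁ x / ‖x‖ ≤ a * (1 + ‖x‖) ^ (-γ - 1) := fun x => by
    rw [eul_eq_fderiv]; exact hVr x
  have main := hest τ s hτ V₁ W u₁ u₂ f₁ f₂ hV hV1 (fun x => (hW x).1) hVr' hVb S mf₁ mf₂ hm hg iFβ
  have hβm := integrable_wt_mul (s := -(1 + β)) (by linarith) hm
  have hβg := integrable_wt_mul (s := -(1 + β)) (by linarith) hg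
  have hle : -(1 + α) ≤ -(1 + β) := by linarith
  refine (add_le_add (lintegral_wt_mono (fun x => le_refl (gsq u₁ x + gsq u₂ x)) hle)
    (mul_le_mul_right (lintegral_wt_mono (fun x => le_refl (u₁ x ^ 2 + u₂ x ^ 2)) hle) _)).trans ?_
  refine le_trans ?_ (mul_le_mul_right (lintegral_wt_mono hFle (add_le_add_right hβα 1)) _)
  rw [lintegral_wt_eq hg0 hβg, lintegral_wt_eq hm0 hβm, lintegral_wt_eq hF0 iFβ,
    ← ENNReal.ofReal_mul hτ0.le, ← ENNReal.ofReal_mul hC.le, ← ENNReal.ofReal_add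
      (integral_nonneg fun x => mul_nonneg (wt_pos _ x).le (hg0 x))
      (mul_nonneg hτ0.le (integral_nonneg fun x => mul_nonneg (wt_pos _ x).le (hm0 x)))]
  exact ENNReal.ofReal_le_ofReal main
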